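/- arXiv:1906.09800 — 8 statements merged into one kernel-verified Lean document; each statement's English description precedes it below -/
import Mathlib

section
/- Assume (K2), i.e. φ_κ(x) = x²κ(x) is strictly increasing on [ℓ₀,∞). Then any function λ : [0,∞) → [ℓ₀,∞) satisfying (o), (s2) and (eb) is continuous on [0,∞). -/
/-!
Write `E t x = w(t)² / (2x) + ∫_{ℓ₀}^x κ`. Its derivative in `x` is `(φ_κ(x) - w(t)²/2) / x²`, so
(K2) makes `E t` strictly increasing on `[y, ∞)` as soon as `w(t)² / 2 ≤ φ_κ(y)`, i.e. as soon as
`y` is stable at time `t` (`energy_lt`). By the energy balance, `t ↦ E t (λ t)` is a constant plus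
the primitive of the locally integrable function `ẇ w / λ`, hence continuous. Since `λ` is monotone
it has one-sided limits `λ(t⁻) ≤ λ(t) ≤ λ(t⁺)`, and `E t` takes the same value at all three.
Stability passes to the limit at `λ(t⁻)`, so the strict monotonicity of `E t` on `[λ(t⁻), ∞)` forces
the three to coincide (`continuous_of_balance`).

To work on the whole line, `λ`, `w` and the primitive are precomposed with `t ↦ max t 0`, and `κ`
with `x ↦ max x ℓ₀`; the extended `λ` is still monotone and the other maps are continuous.
-/


open MeasureTheory Set

/-- At a frozen loading `a = w²/2`, the energy strictly increases past a stable state `y`. -/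
lemma energy_lt {l0 a y z : ℝ} (hl0 : 0 < l0) {K F : ℝ → ℝ}
    (hF : ∀ x, HasDerivAt F (K x) x)
    (hK2 : StrictMonoOn (fun x => x ^ 2 * K x) (Ici l0))
    (hy : l0 ≤ y) (hstab : a ≤ y ^ 2 * K y) (hyz : y < z) :
    a / y + F y < a / z + F z := by
  have hd : ∀ x ∈ Ici y, HasDerivAt (fun x => a / x + F x) (-a / x ^ 2 + K x) x := by
    intro x hx
    have hx0 : x ≠ 0 := (hl0.trans_le (hy.trans hx)).ne'
    have h := ((hasDerivAt_inv hx0).const_mul a).add (hF x)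
    simp only [div_eq_mul_inv] at h ⊢
    refine h.congr_deriv ?_
    ring
  refine strictMonoOn_of_deriv_pos (convex_Ici y)
    (fun x hx => (hd x hx).continuousAt.continuousWithinAt) ?_ self_mem_Ici hyz.le hyz
  intro x hx
  rw [interior_Ici] at hx
  have hx' : y < x := hx
  rw [(hd x hx'.le).deriv]
  have hlt : a < x ^ 2 * K x := hstab.trans_lt (hK2 hy (hy.trans hx'.le) hx')
  have hx0 : 0 < x := hl0.trans_le (hy.trans hx'.le)
  have : -a / x ^ 2 + K x = (x ^ 2 * K x - a) / x ^ 2 := by field_simp; ring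
  rw [this]
  exact div_pos (by linarith) (by positivity)

/-- A monotone `L` that is stable at all times and along which the energy `A t / L t + F (L t)`
varies continuously has no jumps. Here `A` stands for `w² / 2`. -/
lemma continuous_of_balance {l0 : ℝ} (hl0 : 0 < l0) {K F A H L : ℝ → ℝ}
    (hK : Continuous K) (hF : ∀ x, HasDerivAt F (K x) x)
    (hK2 : StrictMonoOn (fun x => x ^ 2 * K x) (Ici l0))
    (hA : Continuous A) (hH : Continuous H) (hL : Monotone L) (hLge : ∀ t, l0 ≤ L t)
    (hs : ∀ t, A t ≤ (L t) ^ 2 * K (L t))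
    (he : ∀ t, A t / L t + F (L t) = H t) : Continuous L := by
  have hFc : Continuous F := continuous_iff_continuousAt.2 fun x => (hF x).continuousAt
  -- The energy at time `t` of any limit of `L` at `t` is the actual energy `H t`.
  have key : ∀ (t m : ℝ) (l : Filter ℝ) [l.NeBot], l ≤ nhds t → Filter.Tendsto L l (nhds m) →
      l0 ≤ m ∧ A t ≤ m ^ 2 * K m ∧ A t / m + F m = H t := by
    intro t m l _ hl hm
    have hm0 : l0 ≤ m := ge_of_tendsto' hm hLge
    have hAl : Filter.Tendsto A l (nhds (A t)) := (hA.tendsto t).mono_left hl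
    refine ⟨hm0, ?_, ?_⟩
    · exact le_of_tendsto_of_tendsto' hAl ((hm.pow 2).mul ((hK.tendsto m).comp hm)) hs
    · have h1 := (hAl.div hm (hl0.trans_le hm0).ne').add ((hFc.tendsto m).comp hm)
      have h2 := (hH.tendsto t).mono_left hl
      exact tendsto_nhds_unique (h1.congr he) h2
  refine continuous_iff_continuousAt.2 fun t => ?_
  rw [hL.continuousAt_iff_leftLim_eq_rightLim]
  obtain ⟨hm0, hms, hme⟩ := key t _ _ nhdsWithin_le_nhds (hL.tendsto_leftLim t)
  obtain ⟨-, -, hpe⟩ := key t _ _ nhdsWithin_le_nhds (hL.tendsto_rightLim t)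
  have hle : Function.leftLim L t ≤ Function.rightLim L t :=
    (hL.leftLim_le le_rfl).trans (hL.le_rightLim le_rfl)
  by_contra hne
  have := energy_lt hl0 hF hK2 hm0 hms (lt_of_le_of_ne hle hne)
  linarith

/-- The power `ẇ w / λ` is integrable on `[0, t]`: `ẇ` is integrable, `w` is continuous, and
`1 / λ` is measurable by monotonicity and bounded by `1 / ℓ₀`. -/
lemma intervalIntegrable_power {l0 : ℝ} (hl0 : 0 < l0) {w wd lam : ℝ → ℝ}
    (hw_cont : ContinuousOn w (Ici 0))
    (hwd_int : ∀ t ≥ (0:ℝ), IntervalIntegrable wd volume 0 t)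
    (hlam_ge : ∀ t ≥ (0:ℝ), l0 ≤ lam t)
    (hlam_mono : MonotoneOn lam (Ici 0)) {t : ℝ} (ht : 0 ≤ t) :
    IntervalIntegrable (fun τ => wd τ * w τ / lam τ) volume 0 t := by
  have hwdw : IntervalIntegrable (fun τ => wd τ * w τ) volume 0 t :=
    (hwd_int t ht).mul_continuousOn
      (hw_cont.mono (by rw [uIcc_of_le ht]; exact Icc_subset_Ici_self))
  rw [intervalIntegrable_iff_integrableOn_Ioc_of_le ht] at hwdw ⊢
  have hsub : Ioc 0 t ⊆ Ici (0:ℝ) := fun x hx => hx.1.le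
  have hmeas : AEMeasurable lam (volume.restrict (Ioc 0 t)) :=
    aemeasurable_restrict_of_monotoneOn measurableSet_Ioc (hlam_mono.mono hsub)
  have := Integrable.mul_bdd (c := l0⁻¹) hwdw (hmeas.inv).aestronglyMeasurable (by
    filter_upwards [ae_restrict_mem measurableSet_Ioc] with x hx
    have h := hlam_ge x hx.1.le
    have : 0 < lam x := hl0.trans_le h
    rw [Pi.inv_apply, Real.norm_of_nonneg (by positivity)]
    exact inv_anti₀ hl0 h)
  simpa [IntegrableOn, div_eq_mul_inv] using this

/-- The primitive from `0` is continuous on `[0, ∞)`, stated through the retraction `max · 0`. -/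
lemma continuous_primitive_max {f : ℝ → ℝ}
    (hf : ∀ t ≥ (0:ℝ), IntervalIntegrable f volume 0 t) :
    Continuous fun t : ℝ => ∫ τ in (0:ℝ)..max t 0, f τ := by
  -- Extending `f` by zero to the left of `0` leaves these integrals unchanged and gives a
  -- function that is integrable on every interval.
  have hg0 : ∀ t, IntervalIntegrable ((Ioi (0:ℝ)).indicator f) volume 0 t := by
    intro t
    rcases le_total 0 t with ht | ht
    · have h := hf t ht
      rw [intervalIntegrable_iff_integrableOn_Ioc_of_le ht] at h ⊢
      exact h.indicator measurableSet_Ioi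
    · refine (IntervalIntegrable.zero (μ := volume) (a := 0) (b := t)).congr ?_
      intro x hx
      rw [uIoc_of_ge ht] at hx
      simp [hx.2]
  have hc : Continuous fun t : ℝ => ∫ τ in (0:ℝ)..t, (Ioi (0:ℝ)).indicator f τ :=
    intervalIntegral.continuous_primitive (fun a b => (hg0 a).symm.trans (hg0 b)) 0
  refine (hc.comp (continuous_id.max (continuous_const (y := (0:ℝ))))).congr fun t => ?_
  refine intervalIntegral.integral_congr_ae (ae_of_all _ fun x hx => ?_)
  rw [uIoc_of_le (le_max_right _ _)] at hx
  exact indicator_of_mem hx.1 f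

/-- Lemma 2.5 of the paper. Assume (K2): `φ_κ(x) = x²κ(x)` is strictly
increasing on `[ℓ₀,∞)`. Then any `lam` satisfying (o) (nondecreasing, `lam 0 = ℓ₀`),
(s2) (stability) and (eb) (energy balance) is continuous on `[0,∞)`. -/
theorem stmt2
    (l0 : ℝ) (hl0 : 0 < l0)
    (w wd : ℝ → ℝ)
    (hw_cont : ContinuousOn w (Ici 0))
    (hwd_int : ∀ t ≥ (0:ℝ), IntervalIntegrable wd volume 0 t)
    (hw_repr : ∀ t ≥ (0:ℝ), w t = w 0 + ∫ τ in (0:ℝ)..t, wd τ)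
    (κ : ℝ → ℝ)
    (hκ_cont : ContinuousOn κ (Ici l0))
    (hκ_pos : ∀ x ≥ l0, 0 < κ x)
    (hK2 : StrictMonoOn (fun x => x ^ 2 * κ x) (Ici l0))
    (lam : ℝ → ℝ)
    (hlam_ge : ∀ t ≥ (0:ℝ), l0 ≤ lam t)
    (hlam_mono : MonotoneOn lam (Ici 0))
    (hlam0 : lam 0 = l0)
    (hs2 : ∀ t ≥ (0:ℝ), (1/2) * (w t) ^ 2 / (lam t) ^ 2 ≤ κ (lam t))
    (heb : ∀ t ≥ (0:ℝ),
      (1/2) * (w t) ^ 2 / lam t + (∫ σ in l0..lam t, κ σ)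
        - (∫ τ in (0:ℝ)..t, wd τ * w τ / lam τ) = (1/2) * (w 0) ^ 2 / l0) :
    ContinuousOn lam (Ici 0) := by
  have hmaxc : ∀ c : ℝ, Continuous fun t : ℝ => max t c :=
    fun c => continuous_id.max continuous_const
  have hK : Continuous fun x => κ (max x l0) :=
    hκ_cont.comp_continuous (hmaxc l0) fun x => le_max_right x l0
  have hF : ∀ x, HasDerivAt (fun y => ∫ σ in l0..y, κ (max σ l0)) (κ (max x l0)) x := fun x =>
    intervalIntegral.integral_hasDerivAt_right (hK.intervalIntegrable _ _)
      (hK.stronglyMeasurableAtFilter _ _) hK.continuousAt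
  have hFeq : ∀ x, l0 ≤ x → ∫ σ in l0..x, κ (max σ l0) = ∫ σ in l0..x, κ σ := by
    intro x hx
    refine intervalIntegral.integral_congr fun y hy => ?_
    rw [uIcc_of_le hx] at hy
    simp only [max_eq_left hy.1]
  have hK2' : StrictMonoOn (fun x => x ^ 2 * κ (max x l0)) (Ici l0) :=
    hK2.congr fun x hx => by simp only [max_eq_left (mem_Ici.1 hx)]
  have hW : Continuous fun t => w (max t 0) :=
    hw_cont.comp_continuous (hmaxc 0) fun x => le_max_right x 0
  have hG := continuous_primitive_max fun t (ht : t ≥ 0) =>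
    intervalIntegrable_power hl0 hw_cont hwd_int hlam_ge hlam_mono ht
  have hL : Continuous fun t => lam (max t 0) := by
    refine continuous_of_balance hl0 (A := fun t => (1/2) * w (max t 0) ^ 2)
      (H := fun t => (1/2) * (w 0) ^ 2 / l0 + ∫ τ in (0:ℝ)..max t 0, wd τ * w τ / lam τ)
      hK hF hK2' (continuous_const.mul (hW.pow 2)) (continuous_const.add hG)
      (fun s t hst => hlam_mono (mem_Ici.2 (le_max_right s 0)) (mem_Ici.2 (le_max_right t 0)) (max_le_max_right 0 hst))
      (fun t => hlam_ge _ (le_max_right _ _)) ?_ ?_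
    · intro t
      have h0 : (0:ℝ) ≤ max t 0 := le_max_right _ _
      have hpos : 0 < lam (max t 0) := hl0.trans_le (hlam_ge _ h0)
      have h := hs2 _ h0
      rw [div_le_iff₀ (by positivity)] at h
      simp only [max_eq_left (hlam_ge _ h0)]
      linarith
    · intro t
      have h0 : (0:ℝ) ≤ max t 0 := le_max_right _ _
      have h := heb _ h0
      simp only [hFeq _ (hlam_ge _ h0)]
      linarith
  exact hL.continuousOn.congr fun t ht => by simp only [max_eq_left (mem_Ici.1 ht)]
end

section
/- Assume (K2), i.e. φ_κ(x) = x²κ(x) is strictly increasing on [ℓ₀,∞). Let λ : [0,∞) → [ℓ₀,∞) satisfy (o), (s2) and (eb). If there exists a time t̄ ∈ (0,∞) at which (s2) holds with strict inequality, i.e. ½·w(t̄)²/λ(t̄)² < κ(λ(t̄)), then λ is constant in a neighbourhood of t̄: there exists η > 0 such that λ(s) = λ(t̄) for every s ∈ (t̄−η, t̄+η) ∩ [0,∞). -/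
/-!
Write `φ x = x² κ x` and `P t = w(t)² / 2`. Subtracting the energy balance at times `s ≤ t` and using
`P t - P s = ∫ ẇ w` gives

`∫_{λ s}^{λ t} κ ≤ (P t + ∫_s^t |ẇ w|) (1 / λ s - 1 / λ t)`      (`energy_le`),

because `1 / λ` is antitone. On the other hand `∫_a^b κ ≥ c (1 / a - 1 / b)` whenever `φ ≥ c` on
`[a, b]` (`le_integral_of_le_sq_mul`). So if `φ > P t + ∫_s^t |ẇ w|` on `[λ s, λ t]`, then
`λ s = λ t`.

To the right of `tb`, monotonicity of `φ` and strict stability at `tb` supply this bound at once.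
To the left, fix `x₀ < λ tb` with `φ x₀ > P tb`. If `λ s ≥ x₀` the same argument works for `s` near `tb`.
If `λ s < x₀`, stability at `s` gives `φ ≥ P s` on `[λ s, x₀]`, and `P s` is close to `P tb`, so
crossing `[x₀, λ tb]` costs a fixed amount of energy, which cannot be paid for `s` close to `tb`.
-/

open MeasureTheory Set
open scoped Topology

/-- The chain rule `(w² / 2)' = ẇ w` in integrated form, for the absolutely continuous `w`. -/
lemma integral_deriv_mul_self (w wd : ℝ → ℝ)
    (hwd_int : ∀ t ≥ (0:ℝ), IntervalIntegrable wd volume 0 t)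
    (hw_repr : ∀ t ≥ (0:ℝ), w t = w 0 + ∫ τ in (0:ℝ)..t, wd τ)
    {t : ℝ} (ht : 0 ≤ t) :
    ∫ τ in (0:ℝ)..t, wd τ * w τ = (w t ^ 2 - w 0 ^ 2) / 2 := by
  set g : ℝ → ℝ := fun x => ∫ τ in (0:ℝ)..x, wd τ with hg
  have hi := hwd_int t ht
  have hac : AbsolutelyContinuousOnInterval g 0 t :=
    hi.absolutelyContinuousOnInterval_intervalIntegral (c := 0) (by simp)
  have h1 := hac.integral_deriv_mul_eq_sub hac
  have hder : ∀ᵐ x, x ∈ uIcc 0 t → HasDerivAt g (wd x) x := by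
    filter_upwards [hi.ae_hasDerivAt_integral] with x hx hxm
    exact hx hxm 0 (by simp)
  have h2 : ∫ x in (0:ℝ)..t, deriv g x * g x + g x * deriv g x
      = ∫ x in (0:ℝ)..t, (2 * (wd x * w x) - 2 * w 0 * wd x) := by
    apply intervalIntegral.integral_congr_ae
    filter_upwards [hder] with x hx hxm
    have hx0 : 0 ≤ x := by
      rw [uIoc_of_le ht] at hxm
      exact hxm.1.le
    rw [(hx (uIoc_subset_uIcc hxm)).deriv, hw_repr x hx0]
    simp only [hg]
    ring
  have hwc : ContinuousOn w (uIcc 0 t) := by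
    refine ((continuousOn_const (c := w 0)).add hac.continuousOn).congr ?_
    intro x hx
    rw [uIcc_of_le ht] at hx
    exact hw_repr x hx.1
  rw [h2, intervalIntegral.integral_sub ((hi.mul_continuousOn hwc).const_mul 2)
    (hi.const_mul _), intervalIntegral.integral_const_mul,
    intervalIntegral.integral_const_mul] at h1
  have h3 := hw_repr t ht
  have h4 : g t = w t - w 0 := by simp only [hg]; linarith
  have h5 : g 0 = 0 := by simp [hg]
  have h6 : ∫ x in (0:ℝ)..t, wd x = w t - w 0 := h4
  rw [h4, h5, h6] at h1
  linarith

lemma intervalIntegrable_mul_antitoneOn {f u : ℝ → ℝ} {s t : ℝ} (hst : s ≤ t)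
    (hf : IntervalIntegrable f volume s t) (hu : AntitoneOn u (Icc s t)) :
    IntervalIntegrable (fun τ => f τ * u τ) volume s t := by
  rw [intervalIntegrable_iff_integrableOn_Ioc_of_le hst] at hf ⊢
  refine Integrable.mul_bdd (c := max |u s| |u t|) hf ?_ ?_
  · exact (aemeasurable_restrict_of_antitoneOn measurableSet_Ioc
      (hu.mono Ioc_subset_Icc_self)).aestronglyMeasurable
  · filter_upwards [ae_restrict_mem measurableSet_Ioc] with x hx
    have hx' := Ioc_subset_Icc_self hx
    rw [max_comm]
    exact abs_le_max_abs_abs (hu hx' (right_mem_Icc.2 hst) hx'.2)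
      (hu (left_mem_Icc.2 hst) hx' hx'.1)

lemma integral_mul_antitoneOn_le {f u : ℝ → ℝ} {s t : ℝ} (hst : s ≤ t)
    (hf : IntervalIntegrable f volume s t) (hu : AntitoneOn u (Icc s t)) :
    ∫ τ in s..t, f τ * u τ ≤
      u s * (∫ τ in s..t, f τ) + (u s - u t) * ∫ τ in s..t, |f τ| := by
  rw [← intervalIntegral.integral_const_mul, ← intervalIntegral.integral_const_mul,
    ← intervalIntegral.integral_add (hf.const_mul _) (hf.abs.const_mul _)]
  refine intervalIntegral.integral_mono_on hst (intervalIntegrable_mul_antitoneOn hst hf hu)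
    ((hf.const_mul _).add (hf.abs.const_mul _)) ?_
  intro x hx
  have h1 := hu (left_mem_Icc.2 hst) hx hx.1
  have h2 := hu hx (right_mem_Icc.2 hst) hx.2
  have h3 := neg_abs_le (f x)
  nlinarith [mul_nonneg (abs_nonneg (f x)) (sub_nonneg.2 h2),
    mul_nonneg (sub_nonneg.2 h1) (by linarith : 0 ≤ f x + |f x|)]

/-- Comparison of `κ` with `c / x²`, whose primitive is `-c / x`. -/
lemma le_integral_of_le_sq_mul {κ : ℝ → ℝ} {a b c : ℝ} (ha : 0 < a) (hab : a ≤ b)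
    (hκ : ContinuousOn κ (Icc a b)) (hc : ∀ x ∈ Icc a b, c ≤ x ^ 2 * κ x) :
    c * (1 / a - 1 / b) ≤ ∫ x in a..b, κ x := by
  have hpos : ∀ x ∈ Icc a b, 0 < x := fun x hx => ha.trans_le hx.1
  have hcont : ContinuousOn (fun x : ℝ => c / x ^ 2) (Icc a b) :=
    continuousOn_const.div (continuousOn_id.pow 2) fun x hx => (pow_pos (hpos x hx) 2).ne'
  have hint : IntervalIntegrable (fun x : ℝ => c / x ^ 2) volume a b :=
    hcont.intervalIntegrable_of_Icc hab
  have h1 : ∫ x in a..b, c / x ^ 2 = c * (1 / a - 1 / b) := by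
    rw [intervalIntegral.integral_eq_sub_of_hasDerivAt (f := fun x => -c * x⁻¹) ?_ hint]
    · simp only [one_div]; ring
    · intro x hx
      rw [uIcc_of_le hab] at hx
      have h := (hasDerivAt_inv (hpos x hx).ne').const_mul (-c)
      rwa [show -c * -(x ^ 2)⁻¹ = c / x ^ 2 by rw [div_eq_mul_inv]; ring] at h
  rw [← h1]
  refine intervalIntegral.integral_mono_on hab hint (hκ.intervalIntegrable_of_Icc hab) ?_
  intro x hx
  rw [div_le_iff₀ (pow_pos (hpos x hx) 2), mul_comm]
  exact hc x hx

/-- The energy balance between times `s ≤ t`, with the work of the load bounded by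
monotonicity of `1 / λ`. -/
lemma energy_le
    (l0 : ℝ) (hl0 : 0 < l0)
    (w wd : ℝ → ℝ)
    (hw_cont : ContinuousOn w (Ici 0))
    (hwd_int : ∀ t ≥ (0:ℝ), IntervalIntegrable wd volume 0 t)
    (hw_repr : ∀ t ≥ (0:ℝ), w t = w 0 + ∫ τ in (0:ℝ)..t, wd τ)
    (κ : ℝ → ℝ)
    (hκ_cont : ContinuousOn κ (Ici l0))
    (lam : ℝ → ℝ)
    (hlam_ge : ∀ t ≥ (0:ℝ), l0 ≤ lam t)
    (hlam_mono : MonotoneOn lam (Ici 0))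
    (heb : ∀ t ≥ (0:ℝ),
      (1/2) * (w t) ^ 2 / lam t + (∫ σ in l0..lam t, κ σ)
        - (∫ τ in (0:ℝ)..t, wd τ * w τ / lam τ) = (1/2) * (w 0) ^ 2 / l0)
    {s t : ℝ} (hs : 0 ≤ s) (hst : s ≤ t) :
    ∫ x in lam s..lam t, κ x ≤
      (1/2 * w t ^ 2 + ∫ τ in s..t, |wd τ * w τ|) * (1 / lam s - 1 / lam t) := by
  have ht := hs.trans hst
  have hanti : AntitoneOn (fun τ => 1 / lam τ) (Ici 0) := fun x hx y hy hxy =>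
    one_div_le_one_div_of_le (hl0.trans_le (hlam_ge x hx)) (hlam_mono hx hy hxy)
  have hf : ∀ r ≥ (0:ℝ), IntervalIntegrable (fun τ => wd τ * w τ) volume 0 r := fun r hr =>
    (hwd_int r hr).mul_continuousOn
      (hw_cont.mono (by rw [uIcc_of_le hr]; exact Icc_subset_Ici_self))
  have hfu : ∀ r ≥ (0:ℝ),
      IntervalIntegrable (fun τ => wd τ * w τ * (1 / lam τ)) volume 0 r := fun r hr =>
    intervalIntegrable_mul_antitoneOn hr (hf r hr) (hanti.mono Icc_subset_Ici_self)
  have hκi : ∀ r ≥ (0:ℝ), IntervalIntegrable κ volume l0 (lam r) := fun r hr =>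
    (hκ_cont.mono Icc_subset_Ici_self).intervalIntegrable_of_Icc (hlam_ge r hr)
  have hmain := integral_mul_antitoneOn_le hst ((hf s hs).symm.trans (hf t ht))
    (hanti.mono fun x hx => hs.trans hx.1)
  have e1 := intervalIntegral.integral_interval_sub_left (hκi t ht) (hκi s hs)
  have e2 := intervalIntegral.integral_interval_sub_left (hfu t ht) (hfu s hs)
  have e3 := intervalIntegral.integral_interval_sub_left (hf t ht) (hf s hs)
  rw [integral_deriv_mul_self w wd hwd_int hw_repr ht,
    integral_deriv_mul_self w wd hwd_int hw_repr hs] at e3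
  have b1 := heb t ht
  have b2 := heb s hs
  rw [← e3, ← e2] at hmain
  rw [← e1]
  simp only [div_eq_mul_inv, one_mul] at hmain b1 b2 ⊢
  nlinarith [hmain, b1, b2]

/-- Lemma 2.6 of the paper. Assume (K2). If `lam` satisfies (o), (s2) and
(eb), and at some time `tb > 0` the stability condition (s2) holds with strict inequality,
then `lam` is constant in a neighbourhood of `tb` (intersected with `[0,∞)`). -/
theorem stmt3
    (l0 : ℝ) (hl0 : 0 < l0)
    (w wd : ℝ → ℝ)
    (hw_cont : ContinuousOn w (Ici 0))
    (hwd_int : ∀ t ≥ (0:ℝ), IntervalIntegrable wd volume 0 t)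
    (hw_repr : ∀ t ≥ (0:ℝ), w t = w 0 + ∫ τ in (0:ℝ)..t, wd τ)
    (κ : ℝ → ℝ)
    (hκ_cont : ContinuousOn κ (Ici l0))
    (hκ_pos : ∀ x ≥ l0, 0 < κ x)
    (hK2 : StrictMonoOn (fun x => x ^ 2 * κ x) (Ici l0))
    (lam : ℝ → ℝ)
    (hlam_ge : ∀ t ≥ (0:ℝ), l0 ≤ lam t)
    (hlam_mono : MonotoneOn lam (Ici 0))
    (hlam0 : lam 0 = l0)
    (hs2 : ∀ t ≥ (0:ℝ), (1/2) * (w t) ^ 2 / (lam t) ^ 2 ≤ κ (lam t))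
    (heb : ∀ t ≥ (0:ℝ),
      (1/2) * (w t) ^ 2 / lam t + (∫ σ in l0..lam t, κ σ)
        - (∫ τ in (0:ℝ)..t, wd τ * w τ / lam τ) = (1/2) * (w 0) ^ 2 / l0)
    (tb : ℝ) (htb : 0 < tb)
    (hstrict : (1/2) * (w tb) ^ 2 / (lam tb) ^ 2 < κ (lam tb)) :
    ∃ η > (0:ℝ), ∀ s ∈ Ioo (tb - η) (tb + η) ∩ Ici (0:ℝ), lam s = lam tb := by
  have key {s t : ℝ} := @energy_le l0 hl0 w wd hw_cont hwd_int hw_repr κ hκ_cont lam hlam_ge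
    hlam_mono heb s t
  have hpos : ∀ t ≥ (0:ℝ), 0 < lam t := fun t ht => hl0.trans_le (hlam_ge t ht)
  have hφ : ∀ {x y : ℝ}, l0 ≤ x → x ≤ y → x ^ 2 * κ x ≤ y ^ 2 * κ y := fun hx hxy =>
    hK2.monotoneOn (mem_Ici.2 hx) (mem_Ici.2 (hx.trans hxy)) hxy
  have hfi : ∀ r ≥ (0:ℝ), IntervalIntegrable (fun τ => |wd τ * w τ|) volume 0 r := fun r hr =>
    ((hwd_int r hr).mul_continuousOn
      (hw_cont.mono (by rw [uIcc_of_le hr]; exact Icc_subset_Ici_self))).abs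
  set Q : ℝ → ℝ := fun r => ∫ τ in (0:ℝ)..r, |wd τ * w τ| with hQ
  have hQsub : ∀ {s t : ℝ}, 0 ≤ s → 0 ≤ t → ∫ τ in s..t, |wd τ * w τ| = Q t - Q s :=
    fun hs ht => (intervalIntegral.integral_interval_sub_left (hfi _ ht) (hfi _ hs)).symm
  have hQc : ContinuousAt Q tb := by
    have h := intervalIntegral.continuousOn_primitive_interval' (hfi (tb + 1) (by linarith))
      left_mem_uIcc
    rw [uIcc_of_le (by linarith : (0:ℝ) ≤ tb + 1)] at h
    exact h.continuousAt (Icc_mem_nhds htb (by linarith))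
  have hwc : ContinuousAt w tb := hw_cont.continuousAt (Ici_mem_nhds htb)
  have hPc : ContinuousAt (fun t => 1/2 * w t ^ 2) tb := (hwc.pow 2).const_mul _
  have hst' : 1/2 * w tb ^ 2 < lam tb ^ 2 * κ (lam tb) := by
    rwa [div_lt_iff₀ (pow_pos (hpos tb htb.le) 2), mul_comm (κ _)] at hstrict
  -- If `φ ≥ c` on `[λ s, λ t]` with `c` above the available energy density, `λ` cannot move.
  have stuck : ∀ {s t : ℝ}, 0 ≤ s → s ≤ t →
      1/2 * w t ^ 2 + (Q t - Q s) < lam s ^ 2 * κ (lam s) → lam s = lam t := by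
    intro s t hs hst hlt
    have hle := hlam_mono (mem_Ici.2 hs) (mem_Ici.2 (hs.trans hst)) hst
    have h1 := key hs hst
    have h2 := le_integral_of_le_sq_mul (c := lam s ^ 2 * κ (lam s)) (hpos s hs) hle
      (hκ_cont.mono fun x hx => (hlam_ge s hs).trans hx.1)
      (fun x hx => hφ (hlam_ge s hs) hx.1)
    rw [hQsub hs (hs.trans hst)] at h1
    by_contra hne
    have h3 := one_div_lt_one_div_of_lt (hpos s hs) (lt_of_le_of_ne hle hne)
    nlinarith
  have hright : ∀ᶠ t in 𝓝 tb, tb ≤ t → lam tb = lam t := by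
    have hc : ContinuousAt (fun t => 1/2 * w t ^ 2 + (Q t - Q tb)) tb :=
      hPc.add (hQc.sub continuousAt_const)
    have := hc.eventually_lt (continuousAt_const (y := lam tb ^ 2 * κ (lam tb)))
      (by simpa using hst')
    filter_upwards [this] with t ht hle
    exact stuck htb.le hle ht
  have hleft : ∀ᶠ s in 𝓝 tb, 0 ≤ s → s ≤ tb → lam s = lam tb := by
    rcases (hlam_ge tb htb.le).eq_or_lt with hb | hb
    · refine Filter.Eventually.of_forall fun s hs hst => le_antisymm ?_ ?_
      · exact hlam_mono (mem_Ici.2 hs) (mem_Ici.2 htb.le) hst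
      · rw [← hb]; exact hlam_ge s hs
    obtain ⟨x0, hx0l, hx0b, hx0⟩ : ∃ x0, l0 ≤ x0 ∧ x0 < lam tb ∧
        1/2 * w tb ^ 2 < x0 ^ 2 * κ x0 := by
      have hκc : ContinuousAt κ (lam tb) := hκ_cont.continuousAt (Ici_mem_nhds hb)
      have hc : ContinuousAt (fun x => x ^ 2 * κ x) (lam tb) := (continuousAt_id.pow 2).mul hκc
      have h1 : ∀ᶠ x in 𝓝 (lam tb), 1/2 * w tb ^ 2 < x ^ 2 * κ x :=
        hc.eventually (lt_mem_nhds hst')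
      have h2 : ∀ᶠ x in 𝓝[<] (lam tb), 1/2 * w tb ^ 2 < x ^ 2 * κ x :=
        h1.filter_mono nhdsWithin_le_nhds
      have h3 : ∀ᶠ x in 𝓝[<] (lam tb), x ∈ Ioo l0 (lam tb) := Ioo_mem_nhdsLT hb
      obtain ⟨x, hx, hxm⟩ := (h2.and h3).exists
      exact ⟨x, hxm.1.le, hxm.2, hx⟩
    have hx0pos : 0 < x0 := hl0.trans_le hx0l
    set d := x0 ^ 2 * κ x0 - 1/2 * w tb ^ 2 with hd
    have hdpos : 0 < d := by linarith
    have hgap : 0 < 1 / x0 - 1 / lam tb := sub_pos.2 (one_div_lt_one_div_of_lt hx0pos hx0b)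
    have hc1 : ContinuousAt (fun s => Q tb - Q s) tb := continuousAt_const.sub hQc
    have hc2 : ContinuousAt
        (fun s => |1/2 * w tb ^ 2 - 1/2 * w s ^ 2| + (Q tb - Q s)) tb :=
      (continuousAt_const.sub hPc).abs.add hc1
    have ev1 := hc1.eventually_lt (continuousAt_const (y := d)) (by simpa using hdpos)
    have ev2 := hc2.eventually_lt
      (continuousAt_const (y := l0 * (d * (1 / x0 - 1 / lam tb))))
      (by simpa using mul_pos hl0 (mul_pos hdpos hgap))
    filter_upwards [ev1, ev2] with s h1 h2 hs hst
    rcases le_or_gt x0 (lam s) with hx | hx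
    · refine stuck hs hst ?_
      have := hφ hx0l hx
      linarith
    exfalso
    have hls := hlam_ge s hs
    have i1 := le_integral_of_le_sq_mul (c := 1/2 * w s ^ 2) (hpos s hs) hx.le
      (hκ_cont.mono fun x hx => hls.trans hx.1) (fun x hx => by
        refine le_trans ?_ (hφ hls hx.1)
        have := hs2 s hs
        rwa [div_le_iff₀ (pow_pos (hpos s hs) 2), mul_comm (κ _)] at this)
    have i2 := le_integral_of_le_sq_mul (c := x0 ^ 2 * κ x0) hx0pos hx0b.le
      (hκ_cont.mono fun x hx => hx0l.trans hx.1) (fun x hx => hφ hx0l hx.1)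
    have i3 := key hs hst
    have hadd := intervalIntegral.integral_add_adjacent_intervals (μ := volume)
      ((hκ_cont.mono fun x hx => hls.trans hx.1).intervalIntegrable_of_Icc (u := κ) hx.le)
      ((hκ_cont.mono fun x hx => hx0l.trans hx.1).intervalIntegrable_of_Icc (u := κ) hx0b.le)
    have hM : 0 ≤ Q tb - Q s := by
      rw [← hQsub hs htb.le]
      exact intervalIntegral.integral_nonneg hst fun _ _ => abs_nonneg _
    rw [hQsub hs htb.le, ← hadd] at i3
    have u1 : 1 / lam s ≤ 1 / l0 := one_div_le_one_div_of_le hl0 hls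
    have u2 : 1 / x0 < 1 / lam s := one_div_lt_one_div_of_lt (hpos s hs) hx
    have u3 : 0 < 1 / x0 := one_div_pos.2 hx0pos
    have u4 : 0 < 1 / lam tb := one_div_pos.2 (hpos tb htb.le)
    set A := |1/2 * w tb ^ 2 - 1/2 * w s ^ 2| with hA
    have hA0 : 0 ≤ A := abs_nonneg _
    have hAle : 1/2 * w tb ^ 2 - 1/2 * w s ^ 2 ≤ A := le_abs_self _
    have j1 : d * (1 / x0 - 1 / lam tb) ≤
        (1/2 * w tb ^ 2 - 1/2 * w s ^ 2) * (1 / lam s - 1 / x0)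
          + (Q tb - Q s) * (1 / lam s - 1 / lam tb) := by
      rw [hd]; linarith
    have j2 : (1/2 * w tb ^ 2 - 1/2 * w s ^ 2) * (1 / lam s - 1 / x0) ≤ A * (1 / l0) :=
      mul_le_mul hAle (by linarith) (by linarith) hA0
    have j3 : (Q tb - Q s) * (1 / lam s - 1 / lam tb) ≤ (Q tb - Q s) * (1 / l0) :=
      mul_le_mul_of_nonneg_left (by linarith) hM
    have j4 : d * (1 / x0 - 1 / lam tb) ≤ (A + (Q tb - Q s)) / l0 := by
      rw [div_eq_mul_one_div (A + (Q tb - Q s)) l0]; linarith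
    rw [le_div_iff₀ hl0] at j4
    linarith
  obtain ⟨η, hη, h⟩ := Metric.eventually_nhds_iff.1 (hright.and hleft)
  refine ⟨η, hη, fun s hs => ?_⟩
  have hsd : dist s tb < η := by
    rw [Real.dist_eq, abs_lt]
    constructor <;> linarith [hs.1.1, hs.1.2]
  rcases le_total tb s with hle | hle
  · exact ((h hsd).1 hle).symm
  · exact (h hsd).2 hs.2 hle
end

section
/- Assume (K2), i.e. φ_κ(x) = x²κ(x) is strictly increasing on [ℓ₀,∞). Let λ : [0,∞) → [ℓ₀,∞) satisfy (o), (s2) and (eb). Then for every t ≥ 0 one has φ_κ(λ(t)) = max{ ½·(w²)_*(t), φ_κ(ℓ₀) }, where (w²)_*(t) := max_{s∈[0,t]} w(s)²; equivalently, λ(t) = φ_κ^{-1}( max{ ½·(w²)_*(t), φ_κ(ℓ₀) } ). In particular such a λ is unique. -/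
/-!
Write `φ x = x² κ x` and `W = w²/2`. The bound `φ (lam t) ≥ max {W_*(t), φ l0}` is immediate from
(s2) and monotonicity. For the reverse bound, the chain rule `W v - W u = ∫ wd w` for absolutely
continuous functions lets one rewrite the increment of (eb) over `[u, v]` as
`∫_{lam u}^{lam v} κ = W u (1/lam u - 1/lam v) + ∫_u^v wd w (1/lam - 1/lam v)`,
so that, as soon as `∫_u^v |wd w| ≤ ε`,
`∫_{lam u}^{lam v} κ ≤ (W u + ε) (1/lam u - 1/lam v)` (`increment_estimate`).
On the other hand `κ x = φ x / x²` with `φ` increasing gives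
`∫_a^b κ ≥ φ a (1/a - 1/b)` (`integral_kappa_ge`).

If `φ (lam t)` exceeded `M = max {W_*(t), φ l0}`, one could pick `x₀ < x₁ < lam t` with `φ x₀ > M`.
For `ε` small the two estimates are incompatible with `lam u ≤ x₁ < lam v`: this excludes both
continuous growth of `lam` above `x₀` and jumps over `[x₀, x₁]`. Hence `lam ≤ x₁` propagates along
short steps from `lam 0 = l0` to `t` (`propagate`), a contradiction. Uniqueness follows from the
injectivity of `φ`.
-/

open MeasureTheory Set

/-! ### Propagation along short steps -/

/-- A property that is inherited across every step shorter than a uniform `δ` holds throughout. -/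
lemma propagate (P : ℝ → Prop) (t δ : ℝ) (ht : 0 ≤ t) (hδ : 0 < δ) (h0 : P 0)
    (hstep : ∀ u v, 0 ≤ u → u ≤ v → v ≤ t → v - u < δ → P u → P v) : P t := by
  have key : ∀ n : ℕ, P (min t (n * (δ / 2))) := by
    intro n
    induction n with
    | zero => simpa [ht] using h0
    | succ n ih =>
      refine hstep _ _ (by positivity) ?_ (min_le_left _ _) ?_ ih
      · apply min_le_min_left
        push_cast
        nlinarith
      · push_cast
        rcases min_cases t ((n : ℝ) * (δ / 2)) with h | h <;>
        rcases min_cases t (((n : ℝ) + 1) * (δ / 2)) with h' | h' <;> nlinarith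
  obtain ⟨n, hn⟩ := exists_nat_ge (t / (δ / 2))
  have := key n
  rwa [min_eq_left ((div_le_iff₀ (by positivity)).1 hn)] at this

/-! ### Integral identities and bounds -/

/-- Chain rule for `w²/2`, with the given a.e. derivative `wd` in place of `deriv w`. -/
lemma half_sq_eq_integral (w wd : ℝ → ℝ)
    (hwd_int : ∀ t ≥ (0:ℝ), IntervalIntegrable wd volume 0 t)
    (hw_repr : ∀ t ≥ (0:ℝ), w t = w 0 + ∫ τ in (0:ℝ)..t, wd τ) (t : ℝ) (ht : 0 ≤ t) :
    (1/2) * (w t) ^ 2 - (1/2) * (w 0) ^ 2 = ∫ τ in (0:ℝ)..t, wd τ * w τ := by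
  set f : ℝ → ℝ := fun x => ∫ τ in (0:ℝ)..x, wd τ with hf
  have hac : AbsolutelyContinuousOnInterval f 0 t :=
    (hwd_int t ht).absolutelyContinuousOnInterval_intervalIntegral (c := 0) (by simp)
  have h1 := hac.integral_deriv_mul_eq_sub hac
  have hf0 : f 0 = 0 := by simp [hf]
  have h2 : ∫ x in (0:ℝ)..t, deriv f x * f x + f x * deriv f x
      = ∫ x in (0:ℝ)..t, 2 * (wd x * w x) - (2 * w 0) * wd x := by
    apply intervalIntegral.integral_congr_ae
    filter_upwards [(hwd_int t ht).ae_hasDerivAt_integral] with x hx hxt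
    have hd := (hx (uIoc_subset_uIcc hxt) 0 (by simp)).deriv
    have hx0 : 0 ≤ x := by
      rw [uIoc_of_le ht] at hxt
      exact hxt.1.le
    have hwx : w x = w 0 + f x := hw_repr x hx0
    rw [hf] at hwx ⊢
    simp only at hwx ⊢
    rw [hd, hwx]
    ring
  have hwc : ContinuousOn w (uIcc 0 t) := by
    refine (continuousOn_const.add hac.continuousOn : ContinuousOn (fun x => w 0 + f x) _).congr ?_
    intro x hx
    rw [uIcc_of_le ht] at hx
    exact hw_repr x hx.1
  have hi := (hwd_int t ht).mul_continuousOn hwc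
  rw [intervalIntegral.integral_sub (hi.const_mul 2) ((hwd_int t ht).const_mul _),
    intervalIntegral.integral_const_mul, intervalIntegral.integral_const_mul] at h2
  have h3 : w t = w 0 + f t := hw_repr t ht
  have h4 : ∫ τ in (0:ℝ)..t, wd τ = f t := rfl
  rw [h1, hf0, h4] at h2
  rw [h3]
  linarith

/-- Integrates `κ x ≥ φ a / x²` over `[a, b]`, where `φ x = x² κ x` is increasing. -/
lemma integral_kappa_ge (l0 : ℝ) (hl0 : 0 < l0) (κ : ℝ → ℝ)
    (hκ_cont : ContinuousOn κ (Ici l0))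
    (hK2 : StrictMonoOn (fun x => x ^ 2 * κ x) (Ici l0))
    (a b : ℝ) (ha : l0 ≤ a) (hab : a ≤ b) :
    a ^ 2 * κ a * (1 / a - 1 / b) ≤ ∫ σ in a..b, κ σ := by
  have ha0 : 0 < a := hl0.trans_le ha
  have hpos : ∀ x ∈ uIcc a b, 0 < x := fun x hx => by
    rw [uIcc_of_le hab] at hx
    exact ha0.trans_le hx.1
  have hci : ContinuousOn (fun x : ℝ => a ^ 2 * κ a * (x ^ 2)⁻¹) (uIcc a b) :=
    continuousOn_const.mul
      ((continuousOn_id.pow 2).inv₀ fun x hx => pow_ne_zero 2 (hpos x hx).ne')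
  have h1 : ∫ x in a..b, a ^ 2 * κ a * (x ^ 2)⁻¹ = a ^ 2 * κ a * (1 / a - 1 / b) := by
    rw [intervalIntegral.integral_eq_sub_of_hasDerivAt
      (f := fun x => a ^ 2 * κ a * (-x⁻¹)) ?_ hci.intervalIntegrable]
    · simp only [one_div]
      ring
    · intro x hx
      have := ((hasDerivAt_inv (hpos x hx).ne').neg).const_mul (a ^ 2 * κ a)
      simpa using this
  rw [← h1]
  apply intervalIntegral.integral_mono_on hab hci.intervalIntegrable
  · refine (hκ_cont.mono fun x hx => ?_).intervalIntegrable
    rw [uIcc_of_le hab] at hx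
    exact ha.trans hx.1
  · intro x hx
    have hx0 : 0 < x := ha0.trans_le hx.1
    rw [← div_eq_mul_inv, div_le_iff₀ (by positivity)]
    have := hK2.monotoneOn ha (ha.trans hx.1) hx.1
    linarith

/-- On a time step with `∫ |wd w| ≤ ε`, the energy balance (eb) controls the integral of `κ`
over `[lam u, lam v]` by the value of `w²/2` at the left end point. -/
lemma increment_estimate (l0 : ℝ) (hl0 : 0 < l0) (w wd κ lam : ℝ → ℝ)
    (hw_cont : ContinuousOn w (Ici 0))
    (hwd_int : ∀ t ≥ (0:ℝ), IntervalIntegrable wd volume 0 t)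
    (hw_repr : ∀ t ≥ (0:ℝ), w t = w 0 + ∫ τ in (0:ℝ)..t, wd τ)
    (hκ_cont : ContinuousOn κ (Ici l0))
    (hlam_ge : ∀ t ≥ (0:ℝ), l0 ≤ lam t)
    (hlam_mono : MonotoneOn lam (Ici 0))
    (heb : ∀ t ≥ (0:ℝ),
      (1/2) * (w t) ^ 2 / lam t + (∫ σ in l0..lam t, κ σ)
        - (∫ τ in (0:ℝ)..t, wd τ * w τ / lam τ) = (1/2) * (w 0) ^ 2 / l0)
    (u v ε : ℝ) (hu : 0 ≤ u) (huv : u ≤ v) (hε : ∫ τ in u..v, |wd τ * w τ| ≤ ε) :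
    ∫ σ in lam u..lam v, κ σ ≤ ((1/2) * (w u) ^ 2 + ε) * (1 / lam u - 1 / lam v) := by
  have hv : 0 ≤ v := hu.trans huv
  have hlpos : ∀ t ≥ (0:ℝ), 0 < lam t := fun t ht => hl0.trans_le (hlam_ge t ht)
  have hκi : ∀ t ≥ (0:ℝ), IntervalIntegrable κ volume l0 (lam t) := fun t ht =>
    (hκ_cont.mono fun x hx => by
      rw [uIcc_of_le (hlam_ge t ht)] at hx
      exact hx.1).intervalIntegrable
  have hi : ∀ t ≥ (0:ℝ), IntervalIntegrable (fun τ => wd τ * w τ) volume 0 t := fun t ht =>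
    (hwd_int t ht).mul_continuousOn (hw_cont.mono fun x hx => by
      rw [uIcc_of_le ht] at hx
      exact hx.1)
  have hil : ∀ t ≥ (0:ℝ), IntervalIntegrable (fun τ => wd τ * w τ / lam τ) volume 0 t := by
    intro t ht
    have hi' := hi t ht
    rw [intervalIntegrable_iff_integrableOn_Ioc_of_le ht] at hi' ⊢
    have hsub : Ioc 0 t ⊆ Ici (0:ℝ) := fun x hx => hx.1.le
    have hm : AEMeasurable lam (volume.restrict (Ioc 0 t)) :=
      aemeasurable_restrict_of_monotoneOn measurableSet_Ioc (hlam_mono.mono hsub)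
    simp only [div_eq_mul_inv]
    refine Integrable.mul_bdd (c := l0⁻¹) hi' hm.inv.aestronglyMeasurable ?_
    refine (ae_restrict_iff' measurableSet_Ioc).2 (Filter.Eventually.of_forall fun x hx => ?_)
    have hx0 := hlpos x hx.1.le
    rw [Real.norm_of_nonneg (by positivity)]
    exact inv_anti₀ hl0 (hlam_ge x hx.1.le)
  have hiuv := (hi u hu).symm.trans (hi v hv)
  have hiluv := (hil u hu).symm.trans (hil v hv)
  have e1 := heb u hu
  have e2 := heb v hv
  have e3 : ∫ σ in lam u..lam v, κ σ = (∫ σ in l0..lam v, κ σ) - ∫ σ in l0..lam u, κ σ :=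
    (intervalIntegral.integral_interval_sub_left (hκi v hv) (hκi u hu)).symm
  have e4 : ∫ τ in u..v, wd τ * w τ / lam τ
      = (∫ τ in (0:ℝ)..v, wd τ * w τ / lam τ) - ∫ τ in (0:ℝ)..u, wd τ * w τ / lam τ :=
    (intervalIntegral.integral_interval_sub_left (hil v hv) (hil u hu)).symm
  have e5 : ∫ τ in u..v, wd τ * w τ
      = (∫ τ in (0:ℝ)..v, wd τ * w τ) - ∫ τ in (0:ℝ)..u, wd τ * w τ :=
    (intervalIntegral.integral_interval_sub_left (hi v hv) (hi u hu)).symm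
  rw [← half_sq_eq_integral w wd hwd_int hw_repr u hu,
    ← half_sq_eq_integral w wd hwd_int hw_repr v hv] at e5
  have e6 : ∫ τ in u..v, (wd τ * w τ / lam τ - 1 / lam v * (wd τ * w τ))
      = (∫ τ in u..v, wd τ * w τ / lam τ) - 1 / lam v * ∫ τ in u..v, wd τ * w τ := by
    rw [intervalIntegral.integral_sub hiluv (hiuv.const_mul _),
      intervalIntegral.integral_const_mul]
  have e7 : ∫ τ in u..v, (wd τ * w τ / lam τ - 1 / lam v * (wd τ * w τ))
      ≤ ∫ τ in u..v, |wd τ * w τ| * (1 / lam u - 1 / lam v) := by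
    apply intervalIntegral.integral_mono_on huv (hiluv.sub (hiuv.const_mul _))
      (hiuv.abs.mul_const _)
    intro x hx
    have hx0 : 0 ≤ x := hu.trans hx.1
    have h1 : 1 / lam x ≤ 1 / lam u :=
      one_div_le_one_div_of_le (hlpos u hu) (hlam_mono hu hx0 hx.1)
    have h2 : 1 / lam v ≤ 1 / lam x :=
      one_div_le_one_div_of_le (hlpos x hx0) (hlam_mono hx0 hv hx.2)
    calc wd x * w x / lam x - 1 / lam v * (wd x * w x)
        = (wd x * w x) * (1 / lam x - 1 / lam v) := by ring
      _ ≤ |wd x * w x| * (1 / lam x - 1 / lam v) :=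
          mul_le_mul_of_nonneg_right (le_abs_self _) (by linarith)
      _ ≤ |wd x * w x| * (1 / lam u - 1 / lam v) :=
          mul_le_mul_of_nonneg_left (by linarith) (abs_nonneg _)
  rw [intervalIntegral.integral_mul_const] at e7
  have h3 : 1 / lam v ≤ 1 / lam u :=
    one_div_le_one_div_of_le (hlpos u hu) (hlam_mono hu hv huv)
  have e8 := mul_le_mul_of_nonneg_right hε (sub_nonneg.2 h3)
  rw [e6, e5, e4] at e7
  rw [e3]
  have r1 : (1/2) * (w u) ^ 2 / lam u = (1/2) * (w u) ^ 2 * (1 / lam u) := by ring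
  have r2 : (1/2) * (w v) ^ 2 / lam v = (1/2) * (w v) ^ 2 * (1 / lam v) := by ring
  rw [r1] at e1
  rw [r2] at e2
  nlinarith

/-- The primitive of an integrable function is uniformly continuous, so its variation over
sufficiently short steps is small. -/
lemma exists_short_step (g : ℝ → ℝ) (t : ℝ) (ht : 0 ≤ t)
    (hg : IntervalIntegrable g volume 0 t) (ε : ℝ) (hε : 0 < ε) :
    ∃ δ > 0, ∀ u v, 0 ≤ u → u ≤ v → v ≤ t → v - u < δ → ∫ τ in u..v, |g τ| ≤ ε := by
  have hc : ContinuousOn (fun x => ∫ τ in (0:ℝ)..x, |g τ|) (uIcc 0 t) :=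
    intervalIntegral.continuousOn_primitive_interval' hg.abs (by simp)
  have huc := isCompact_uIcc.uniformContinuousOn_of_continuous hc
  obtain ⟨δ, hδ, h⟩ := Metric.uniformContinuousOn_iff.1 huc ε hε
  refine ⟨δ, hδ, fun u v hu huv hvt hd => ?_⟩
  rw [uIcc_of_le ht] at h
  have := h v ⟨hu.trans huv, hvt⟩ u ⟨hu, huv.trans hvt⟩ (by
    rw [Real.dist_eq, abs_of_nonneg (by linarith)]
    exact hd)
  have hsub : ∀ s, 0 ≤ s → s ≤ t → IntervalIntegrable (fun τ => |g τ|) volume 0 s :=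
    fun s hs hst => hg.abs.mono_set (by
      rw [uIcc_of_le hs, uIcc_of_le ht]
      exact Icc_subset_Icc_right hst)
  rw [Real.dist_eq, intervalIntegral.integral_interval_sub_left
    (hsub v (hu.trans huv) hvt) (hsub u hu (huv.trans hvt))] at this
  exact (le_abs_self _).trans this.le

/-! ### The formula for `φ (lam t)` -/

/-- The upper bound: `φ (lam t)` stays below every `M` that dominates `φ l0` and `w²/2` on `[0, t]`.
Here (s2) is used in the form `w²/2 ≤ φ (lam)`. -/
lemma phi_le_of_bound (l0 : ℝ) (hl0 : 0 < l0) (w wd κ lam : ℝ → ℝ)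
    (hw_cont : ContinuousOn w (Ici 0))
    (hwd_int : ∀ t ≥ (0:ℝ), IntervalIntegrable wd volume 0 t)
    (hw_repr : ∀ t ≥ (0:ℝ), w t = w 0 + ∫ τ in (0:ℝ)..t, wd τ)
    (hκ_cont : ContinuousOn κ (Ici l0))
    (hK2 : StrictMonoOn (fun x => x ^ 2 * κ x) (Ici l0))
    (hlam_ge : ∀ t ≥ (0:ℝ), l0 ≤ lam t)
    (hlam_mono : MonotoneOn lam (Ici 0))
    (hlam0 : lam 0 = l0)
    (hs2' : ∀ t ≥ (0:ℝ), (1/2) * (w t) ^ 2 ≤ (lam t) ^ 2 * κ (lam t))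
    (heb : ∀ t ≥ (0:ℝ),
      (1/2) * (w t) ^ 2 / lam t + (∫ σ in l0..lam t, κ σ)
        - (∫ τ in (0:ℝ)..t, wd τ * w τ / lam τ) = (1/2) * (w 0) ^ 2 / l0)
    (t M : ℝ) (ht : 0 ≤ t) (hM0 : l0 ^ 2 * κ l0 ≤ M)
    (hMw : ∀ s, 0 ≤ s → s ≤ t → (1/2) * (w s) ^ 2 ≤ M) :
    (lam t) ^ 2 * κ (lam t) ≤ M := by
  by_contra! hlt
  have hφc : ContinuousOn (fun x => x ^ 2 * κ x) (Icc l0 (lam t)) :=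
    (continuousOn_id.pow 2).mul (hκ_cont.mono Icc_subset_Ici_self)
  obtain ⟨y, hy, hyM⟩ := intermediate_value_Icc (hlam_ge t ht) hφc ⟨hM0, hlt.le⟩
  simp only at hyM
  have hyL : y < lam t := lt_of_le_of_ne hy.2 (by
    rintro rfl
    exact hlt.ne' hyM)
  obtain ⟨x1, hyx1, hx1L⟩ := exists_between hyL
  obtain ⟨x0, hyx0, hx01⟩ := exists_between hyx1
  have hx0l : l0 ≤ x0 := hy.1.trans hyx0.le
  have hη : M < x0 ^ 2 * κ x0 := by
    rw [← hyM]
    exact hK2 hy.1 hx0l hyx0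
  have hx0p : 0 < x0 := hl0.trans_le hx0l
  set η := x0 ^ 2 * κ x0 - M with hηdef
  have hη0 : 0 < η := by linarith
  set d := 1 / x0 - 1 / x1 with hd
  have hd0 : 0 < d := sub_pos.2 (one_div_lt_one_div_of_lt hx0p hx01)
  -- `ε` is chosen so that `ε < η` and `ε / l0 < (η - ε) * d`.
  set ε := η * d / (2 * (d + 1 / l0)) with hεdef
  have hden : 0 < d + 1 / l0 := by positivity
  have hε0 : 0 < ε := by positivity
  have hεeq : ε * (d + 1 / l0) = η * d / 2 := by
    rw [hεdef]
    field_simp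
  have hεη : ε * (1 / l0) < (η - ε) * d := by nlinarith [mul_pos hη0 hd0]
  have hεlt : ε < η := by
    have : 0 < ε * (1 / l0) := by positivity
    by_contra! hcon
    nlinarith
  have hi : IntervalIntegrable (fun τ => wd τ * w τ) volume 0 t :=
    (hwd_int t ht).mul_continuousOn (hw_cont.mono fun x hx => by
      rw [uIcc_of_le ht] at hx
      exact hx.1)
  obtain ⟨δ, hδ, hshort⟩ := exists_short_step _ t ht hi ε hε0
  refine hx1L.not_ge (propagate (fun s => lam s ≤ x1) t δ ht hδ ?_ ?_)
  · rw [hlam0]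
    exact hx0l.trans hx01.le
  intro u v hu huv hvt hstep hux
  change lam u ≤ x1 at hux
  by_contra! hvx
  have hest := increment_estimate l0 hl0 w wd κ lam hw_cont hwd_int hw_repr hκ_cont hlam_ge
    hlam_mono heb u v ε hu huv (hshort u v hu huv hvt hstep)
  have hul := hlam_ge u hu
  have hup : 0 < lam u := hl0.trans_le hul
  have hWM := hMw u hu (huv.trans hvt)
  rcases le_total x0 (lam u) with hcase | hcase
  · have h1 := integral_kappa_ge l0 hl0 κ hκ_cont hK2 (lam u) (lam v) hul (hux.trans hvx.le)
    have h2 : x0 ^ 2 * κ x0 ≤ lam u ^ 2 * κ (lam u) := hK2.monotoneOn hx0l hul hcase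
    have h3 : 0 < 1 / lam u - 1 / lam v :=
      sub_pos.2 (one_div_lt_one_div_of_lt hup (hux.trans_lt hvx))
    have h4 := le_of_mul_le_mul_right (h1.trans hest) h3
    linarith
  · -- `lam` steps over `[x0, x1]`; the integral of `κ` is split at `x0`.
    have hx0v : x0 ≤ lam v := hx01.le.trans hvx.le
    have h1 := integral_kappa_ge l0 hl0 κ hκ_cont hK2 (lam u) x0 hul hcase
    have h2 := integral_kappa_ge l0 hl0 κ hκ_cont hK2 x0 (lam v) hx0l hx0v
    have hκi : ∀ a b, l0 ≤ a → a ≤ b → IntervalIntegrable κ volume a b := fun a b ha hab =>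
      (hκ_cont.mono fun x hx => by
        rw [uIcc_of_le hab] at hx
        exact ha.trans hx.1).intervalIntegrable
    have h3 := intervalIntegral.integral_add_adjacent_intervals
      (hκi (lam u) x0 hul hcase) (hκi x0 (lam v) hx0l hx0v)
    have hp : 0 ≤ 1 / lam u - 1 / x0 := sub_nonneg.2 (one_div_le_one_div_of_le hup hcase)
    have hp' : 1 / lam u - 1 / x0 ≤ 1 / l0 := by
      have := one_div_le_one_div_of_le hl0 hul
      have : 0 < 1 / x0 := by positivity
      linarith
    have hq : d ≤ 1 / x0 - 1 / lam v := by
      have := one_div_le_one_div_of_le (hx0p.trans hx01) hvx.le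
      linarith
    have h4 := mul_le_mul_of_nonneg_right (hs2' u hu) hp
    have h5 : (M + η) * (1 / x0 - 1 / lam v) = x0 ^ 2 * κ x0 * (1 / x0 - 1 / lam v) := by
      rw [hηdef]
      ring
    have h6 := mul_le_mul_of_nonneg_left hp' hε0.le
    have h7 := mul_le_mul_of_nonneg_left hq (sub_pos.2 hεlt).le
    have h8 := mul_le_mul_of_nonneg_right hWM (hd0.le.trans hq)
    nlinarith

lemma phi_eq_max
    (l0 : ℝ) (hl0 : 0 < l0)
    (w wd : ℝ → ℝ)
    (hw_cont : ContinuousOn w (Ici 0))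
    (hwd_int : ∀ t ≥ (0:ℝ), IntervalIntegrable wd volume 0 t)
    (hw_repr : ∀ t ≥ (0:ℝ), w t = w 0 + ∫ τ in (0:ℝ)..t, wd τ)
    (κ : ℝ → ℝ)
    (hκ_cont : ContinuousOn κ (Ici l0))
    (hK2 : StrictMonoOn (fun x => x ^ 2 * κ x) (Ici l0))
    (lam : ℝ → ℝ)
    (hlam_ge : ∀ t ≥ (0:ℝ), l0 ≤ lam t)
    (hlam_mono : MonotoneOn lam (Ici 0))
    (hlam0 : lam 0 = l0)
    (hs2 : ∀ t ≥ (0:ℝ), (1/2) * (w t) ^ 2 / (lam t) ^ 2 ≤ κ (lam t))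
    (heb : ∀ t ≥ (0:ℝ),
      (1/2) * (w t) ^ 2 / lam t + (∫ σ in l0..lam t, κ σ)
        - (∫ τ in (0:ℝ)..t, wd τ * w τ / lam τ) = (1/2) * (w 0) ^ 2 / l0)
    (t : ℝ) (ht : 0 ≤ t) :
    (lam t) ^ 2 * κ (lam t)
      = max ((1/2) * sSup ((fun s => (w s) ^ 2) '' Icc 0 t)) (l0 ^ 2 * κ l0) := by
  have hs2' : ∀ t ≥ (0:ℝ), (1/2) * (w t) ^ 2 ≤ (lam t) ^ 2 * κ (lam t) := by
    intro s hs
    have hp : 0 < lam s := hl0.trans_le (hlam_ge s hs)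
    have := (div_le_iff₀ (by positivity)).1 (hs2 s hs)
    linarith
  have hbdd : BddAbove ((fun s => (w s) ^ 2) '' Icc 0 t) :=
    (isCompact_Icc.image_of_continuousOn
      ((hw_cont.mono Icc_subset_Ici_self).pow 2)).bddAbove
  apply le_antisymm
  · apply phi_le_of_bound l0 hl0 w wd κ lam hw_cont hwd_int hw_repr hκ_cont hK2 hlam_ge
      hlam_mono hlam0 hs2' heb t _ ht (le_max_right _ _)
    intro s hs hst
    have := le_csSup hbdd ⟨s, ⟨hs, hst⟩, rfl⟩
    refine le_trans ?_ (le_max_left _ _)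
    simp only at this
    linarith
  · have hle := fun s (hs : 0 ≤ s) (hst : s ≤ t) =>
      hK2.monotoneOn (hlam_ge s hs) (hlam_ge t ht) (hlam_mono hs ht hst)
    simp only at hle
    refine max_le ?_ ?_
    · have : sSup ((fun s => (w s) ^ 2) '' Icc 0 t) ≤ 2 * ((lam t) ^ 2 * κ (lam t)) := by
        apply csSup_le ((nonempty_Icc.2 ht).image _)
        rintro _ ⟨s, hs, rfl⟩
        have h1 := hs2' s hs.1
        have h2 := hle s hs.1 hs.2
        simp only
        linarith
      linarith
    · have := hle 0 le_rfl ht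
      rwa [hlam0] at this

/-- Proposition 2.8 of the paper. Assume (K2). If `lam` satisfies (o),
(s2) and (eb), then `φ_κ(lam t) = max { ½ (w²)_*(t), φ_κ(ℓ₀) }` for every `t ≥ 0`, where
`(w²)_*(t) = max_{s ∈ [0,t]} w(s)²`; in particular such a `lam` is unique. -/
theorem stmt4
    (l0 : ℝ) (hl0 : 0 < l0)
    (w wd : ℝ → ℝ)
    (hw_cont : ContinuousOn w (Ici 0))
    (hwd_int : ∀ t ≥ (0:ℝ), IntervalIntegrable wd volume 0 t)
    (hw_repr : ∀ t ≥ (0:ℝ), w t = w 0 + ∫ τ in (0:ℝ)..t, wd τ)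
    (κ : ℝ → ℝ)
    (hκ_cont : ContinuousOn κ (Ici l0))
    (hκ_pos : ∀ x ≥ l0, 0 < κ x)
    (hK2 : StrictMonoOn (fun x => x ^ 2 * κ x) (Ici l0))
    (lam : ℝ → ℝ)
    (hlam_ge : ∀ t ≥ (0:ℝ), l0 ≤ lam t)
    (hlam_mono : MonotoneOn lam (Ici 0))
    (hlam0 : lam 0 = l0)
    (hs2 : ∀ t ≥ (0:ℝ), (1/2) * (w t) ^ 2 / (lam t) ^ 2 ≤ κ (lam t))
    (heb : ∀ t ≥ (0:ℝ),
      (1/2) * (w t) ^ 2 / lam t + (∫ σ in l0..lam t, κ σ)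
        - (∫ τ in (0:ℝ)..t, wd τ * w τ / lam τ) = (1/2) * (w 0) ^ 2 / l0) :
    (∀ t ≥ (0:ℝ),
      (lam t) ^ 2 * κ (lam t)
        = max ((1/2) * sSup ((fun s => (w s) ^ 2) '' Icc 0 t)) (l0 ^ 2 * κ l0))
    ∧ ∀ lam2 : ℝ → ℝ,
        (∀ t ≥ (0:ℝ), l0 ≤ lam2 t) → MonotoneOn lam2 (Ici 0) → lam2 0 = l0 →
        (∀ t ≥ (0:ℝ), (1/2) * (w t) ^ 2 / (lam2 t) ^ 2 ≤ κ (lam2 t)) →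
        (∀ t ≥ (0:ℝ),
          (1/2) * (w t) ^ 2 / lam2 t + (∫ σ in l0..lam2 t, κ σ)
            - (∫ τ in (0:ℝ)..t, wd τ * w τ / lam2 τ) = (1/2) * (w 0) ^ 2 / l0) →
        ∀ t ≥ (0:ℝ), lam2 t = lam t := by
  refine ⟨fun t ht => phi_eq_max l0 hl0 w wd hw_cont hwd_int hw_repr κ hκ_cont hK2 lam hlam_ge
    hlam_mono hlam0 hs2 heb t ht, ?_⟩
  intro lam2 hge2 hmono2 h02 hs22 heb2 t ht
  refine hK2.injOn (hge2 t ht) (hlam_ge t ht) ?_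
  rw [phi_eq_max l0 hl0 w wd hw_cont hwd_int hw_repr κ hκ_cont hK2 lam hlam_ge
      hlam_mono hlam0 hs2 heb t ht,
    phi_eq_max l0 hl0 w wd hw_cont hwd_int hw_repr κ hκ_cont hK2 lam2 hge2
      hmono2 h02 hs22 heb2 t ht]
end

section
/- Assume (K2), i.e. φ_κ(x) = x²κ(x) is strictly increasing on [ℓ₀,∞). Let λ : [0,∞) → [ℓ₀,∞) satisfy (o), (s2), and suppose that the function t ↦ ½·w(t)²/λ(t) + ∫_{ℓ₀}^{λ(t)} κ(σ)dσ − ∫₀ᵗ ẇ(τ)w(τ)/λ(τ)dτ is nonincreasing on [0,∞) (a weakening of the energy balance (eb)). Then λ is continuous on [0,∞) and for every t ≥ 0 one has φ_κ(λ(t)) = max{ ½·(w²)_*(t), φ_κ(ℓ₀) }, where (w²)_*(t) := max_{s∈[0,t]} w(s)². -/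
open MeasureTheory Set

/-!
Write `φ x = x² κ x` and `F = ½ w²`. By (s2), `F s ≤ φ (lam s) ≤ φ (lam t)` for `s ≤ t`, which gives
the lower bound for `φ (lam t)`.

For the upper bound, integrate `∫ F' / lam` by parts on `[s, t]`. Since `1 / lam` is nonincreasing,
the monotonicity of the energy gives, for every `m` bounding `F` on `[s, t]`,
`∫_{lam s}^{lam t} κ ≤ m (1 / lam s - 1 / lam t)` (`integral_kappa_le`). On the other hand
`κ σ = φ σ / σ²` and (K2) give `∫_a^b κ > φ a (1 / a - 1 / b)` whenever `a < b`
(`phi_mul_lt_integral`).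

* Continuity: at a jump of `lam` at `u` from `a` to `b`, letting the interval shrink to `u` allows
  `m → F u ≤ φ a`, and the two inequalities contradict each other
  (`eq_of_tendsto_of_integral_le`).
* Equality: if `φ (lam t)` exceeded the maximum, continuity of `φ` and `lam` would provide
  `s ≤ t` with `φ (lam s)` equal to the maximum and `lam s < lam t`; taking `m = max_{[0,t]} F`
  in the first inequality again contradicts the second.
-/

/-! ### Integration by parts against a monotone function -/

/-- A function that increases over all steps shorter than a fixed `δ` increases from `s` to `t`. -/
lemma le_of_short_steps {Ψ : ℝ → ℝ} {s t δ : ℝ} (hst : s ≤ t) (hδ : 0 < δ)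
    (h : ∀ x y, s ≤ x → x ≤ y → y ≤ t → y - x < δ → Ψ x ≤ Ψ y) : Ψ s ≤ Ψ t := by
  have key : ∀ n : ℕ, ∀ x, s ≤ x → x ≤ t → x - s ≤ n * (δ / 2) → Ψ s ≤ Ψ x := by
    intro n
    induction n with
    | zero =>
      intro x h1 h2 h3
      have : x = s := by
        simp only [Nat.cast_zero, zero_mul] at h3
        linarith
      rw [this]
    | succ n ih =>
      intro x h1 h2 h3
      push_cast at h3
      have h4 : max s (x - δ / 2) ≤ x := max_le h1 (by linarith)
      refine (ih (max s (x - δ / 2)) (le_max_left _ _) (h4.trans h2) ?_).trans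
        (h _ _ (le_max_left _ _) h4 h2 ?_)
      · rcases max_cases s (x - δ / 2) with h5 | h5 <;> rw [h5.1]
        · rw [sub_self]
          positivity
        · linarith
      · linarith [le_max_right s (x - δ / 2)]
  obtain ⟨n, hn⟩ := exists_nat_ge ((t - s) / (δ / 2))
  exact key n t hst le_rfl ((div_le_iff₀ (by positivity)).1 hn)

lemma intervalIntegrable_mul_antitoneOn_s5 {h g : ℝ → ℝ} {x y : ℝ} (hxy : x ≤ y)
    (hh : IntervalIntegrable h volume x y) (hg : AntitoneOn g (Icc x y)) :
    IntervalIntegrable (fun τ => h τ * g τ) volume x y := by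
  rw [intervalIntegrable_iff_integrableOn_Icc_of_le hxy] at hh ⊢
  refine Integrable.mul_bdd (c := max |g x| |g y|) hh
    (aemeasurable_restrict_of_antitoneOn measurableSet_Icc hg).aestronglyMeasurable ?_
  refine (ae_restrict_mem measurableSet_Icc).mono fun τ hτ => ?_
  have h1 := hg (left_mem_Icc.2 hxy) hτ hτ.1
  have h2 := hg hτ (right_mem_Icc.2 hxy) hτ.2
  rw [Real.norm_eq_abs, abs_le]
  constructor
  · linarith [neg_abs_le (g y), le_max_right |g x| |g y|]
  · linarith [le_abs_self (g x), le_max_left |g x| |g y|]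

/-- One-sided integration by parts against a monotone function. For `H ≥ 0` with density `h` and
`g` nonincreasing, `∫ g dH = [H g] - ∫ H dg ≥ [H g]`; this holds up to `ε` times the decrease of
`g` on every interval where `∫ |h| < ε`, so no Stieltjes measure is needed. -/
lemma sub_le_integral_mul_antitoneOn {h H g : ℝ → ℝ} {s t : ℝ} (hst : s ≤ t)
    (hh : IntervalIntegrable h volume s t)
    (hH : ∀ x ∈ Icc s t, ∀ y ∈ Icc s t, x ≤ y → H y - H x = ∫ τ in x..y, h τ)
    (hH0 : ∀ x ∈ Icc s t, 0 ≤ H x) (hg : AntitoneOn g (Icc s t)) :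
    H t * g t - H s * g s ≤ ∫ τ in s..t, h τ * g τ := by
  have hgst : 0 ≤ g s - g t :=
    sub_nonneg.2 (hg (left_mem_Icc.2 hst) (right_mem_Icc.2 hst) hst)
  have main : ∀ ε > 0, H t * g t - H s * g s ≤ (∫ τ in s..t, h τ * g τ) + ε * (g s - g t) := by
    intro ε hε
    have hA : ContinuousOn (fun x => ∫ τ in s..x, |h τ|) (uIcc s t) :=
      intervalIntegral.continuousOn_primitive_interval (by
        rw [uIcc_of_le hst, ← intervalIntegrable_iff_integrableOn_Icc_of_le hst]
        exact hh.abs)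
    rw [uIcc_of_le hst] at hA
    have hU := isCompact_Icc.uniformContinuousOn_of_continuous hA
    rw [Metric.uniformContinuousOn_iff] at hU
    obtain ⟨δ, hδ, hU⟩ := hU ε hε
    have sub : ∀ {f : ℝ → ℝ} {x y : ℝ}, IntervalIntegrable f volume s t → s ≤ x → x ≤ y → y ≤ t →
        IntervalIntegrable f volume x y := by
      intro f x y hf h1 h2 h3
      refine hf.mono_set ?_
      rw [uIcc_of_le h2, uIcc_of_le hst]
      exact Icc_subset_Icc h1 h3
    have hhg := intervalIntegrable_mul_antitoneOn_s5 hst hh hg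
    have step := le_of_short_steps
      (Ψ := fun x => (∫ τ in s..x, h τ * g τ) - H x * g x - ε * g x) hst hδ ?_
    · simp only [intervalIntegral.integral_same] at step
      linarith
    intro x y h1 h2 h3 h4
    have hx : x ∈ Icc s t := ⟨h1, h2.trans h3⟩
    have hy : y ∈ Icc s t := ⟨h1.trans h2, h3⟩
    have e1 : (∫ τ in s..x, h τ * g τ) + ∫ τ in x..y, h τ * g τ = ∫ τ in s..y, h τ * g τ :=
      intervalIntegral.integral_add_adjacent_intervals (sub hhg le_rfl h1 (h2.trans h3))
        (sub hhg h1 h2 h3)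
    have e2 : (∫ τ in s..x, |h τ|) + ∫ τ in x..y, |h τ| = ∫ τ in s..y, |h τ| :=
      intervalIntegral.integral_add_adjacent_intervals (sub hh.abs le_rfl h1 (h2.trans h3))
        (sub hh.abs h1 h2 h3)
    have e3 : ∫ τ in x..y, |h τ| < ε := by
      have := hU y hy x hx (by rw [Real.dist_eq, abs_of_nonneg (by linarith)]; exact h4)
      rw [Real.dist_eq] at this
      linarith [le_abs_self ((∫ τ in s..y, |h τ|) - ∫ τ in s..x, |h τ|)]
    have hgxy : 0 ≤ g x - g y := sub_nonneg.2 (hg hx hy h2)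
    have e4 : (∫ τ in x..y, (h τ * g y - |h τ| * (g x - g y))) ≤ ∫ τ in x..y, h τ * g τ := by
      refine intervalIntegral.integral_mono_on h2
        (((sub hh h1 h2 h3).mul_const _).sub ((sub hh.abs h1 h2 h3).mul_const _))
        (sub hhg h1 h2 h3) fun τ hτ => ?_
      have hτ' : τ ∈ Icc s t := ⟨h1.trans hτ.1, hτ.2.trans h3⟩
      have i1 := hg hx hτ' hτ.1
      have i2 := hg hτ' hy hτ.2
      have i3 : |h τ| * (g τ - g y) ≤ |h τ| * (g x - g y) :=
        mul_le_mul_of_nonneg_left (by linarith) (abs_nonneg _)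
      have i4 : -|h τ| * (g τ - g y) ≤ h τ * (g τ - g y) :=
        mul_le_mul_of_nonneg_right (neg_abs_le _) (by linarith)
      linarith
    rw [intervalIntegral.integral_sub ((sub hh h1 h2 h3).mul_const _)
      ((sub hh.abs h1 h2 h3).mul_const _), intervalIntegral.integral_mul_const,
      intervalIntegral.integral_mul_const, ← hH x hx y hy h2] at e4
    have e5 : (∫ τ in x..y, |h τ|) * (g x - g y) ≤ ε * (g x - g y) :=
      mul_le_mul_of_nonneg_right e3.le hgxy
    have e6 : 0 ≤ H x * (g x - g y) := mul_nonneg (hH0 x hx) hgxy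
    show (∫ τ in s..x, h τ * g τ) - H x * g x - ε * g x
      ≤ (∫ τ in s..y, h τ * g τ) - H y * g y - ε * g y
    rw [← e1]
    linarith
  refine le_of_forall_pos_le_add fun η hη => ?_
  refine (main (η / (g s - g t + 1)) (by positivity)).trans ?_
  gcongr
  rw [div_mul_eq_mul_div, div_le_iff₀ (by positivity)]
  nlinarith

/-! ### Calculus of `w²` and `κ` -/

/-- Chain rule for the square of an absolutely continuous function. -/
lemma half_sq_sub_eq_integral {w wd : ℝ → ℝ}
    (hwd_int : ∀ t ≥ (0:ℝ), IntervalIntegrable wd volume 0 t)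
    (hw_repr : ∀ t ≥ (0:ℝ), w t = w 0 + ∫ τ in (0:ℝ)..t, wd τ)
    {x y : ℝ} (hx : 0 ≤ x) (hxy : x ≤ y) :
    (1/2) * w y ^ 2 - (1/2) * w x ^ 2 = ∫ τ in x..y, wd τ * w τ := by
  have hint : IntervalIntegrable wd volume x y :=
    (hwd_int x hx).symm.trans (hwd_int y (hx.trans hxy))
  have hxm : x ∈ uIcc x y := left_mem_uIcc
  set f : ℝ → ℝ := fun z => w x + ∫ τ in x..z, wd τ with hf
  have hfw : ∀ z ∈ Icc x y, f z = w z := by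
    intro z hz
    have h0z : 0 ≤ z := hx.trans hz.1
    have := intervalIntegral.integral_add_adjacent_intervals (hwd_int x hx)
      ((hwd_int x hx).symm.trans (hwd_int z h0z))
    rw [hf, hw_repr z h0z, ← this]
    simp only
    rw [hw_repr x hx]
    ring
  have hc : AbsolutelyContinuousOnInterval (fun _ : ℝ => w x) x y :=
    (contDiff_const.contDiffOn : ContDiffOn ℝ 1 (fun _ : ℝ => w x) _).absolutelyContinuousOnInterval
  have hac : AbsolutelyContinuousOnInterval f x y :=
    hc.add (hint.absolutelyContinuousOnInterval_intervalIntegral hxm)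
  have h1 := hac.integral_deriv_mul_eq_sub hac
  have h2 : ∫ τ in x..y, deriv f τ * f τ + f τ * deriv f τ = ∫ τ in x..y, 2 * (wd τ * w τ) := by
    refine intervalIntegral.integral_congr_ae ?_
    filter_upwards [hint.ae_hasDerivAt_integral] with τ hτ hτ'
    have hτ'' : τ ∈ uIcc x y := uIoc_subset_uIcc hτ'
    have hd : deriv f τ = wd τ := ((hτ hτ'' x hxm).const_add (w x)).deriv
    rw [uIcc_of_le hxy] at hτ''
    rw [hd, hfw τ hτ'']
    ring
  rw [h2, intervalIntegral.integral_const_mul, hfw y (right_mem_Icc.2 hxy),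
    hfw x (left_mem_Icc.2 hxy)] at h1
  linarith

lemma integral_const_div_sq {a b c : ℝ} (ha : 0 < a) (hab : a ≤ b) :
    ∫ σ in a..b, c / σ ^ 2 = c * (a⁻¹ - b⁻¹) := by
  have hne : ∀ σ ∈ uIcc a b, σ ≠ 0 := fun σ hσ => by
    rw [uIcc_of_le hab] at hσ
    exact (ha.trans_le hσ.1).ne'
  have := intervalIntegral.integral_eq_sub_of_hasDerivAt (a := a) (b := b)
    (f := fun σ => -c * σ⁻¹) (f' := fun σ => c / σ ^ 2)
    (fun σ hσ => by
      rw [show c / σ ^ 2 = -c * -(σ ^ 2)⁻¹ by ring]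
      exact (hasDerivAt_inv (hne σ hσ)).const_mul (-c))
    (ContinuousOn.intervalIntegrable (by
      refine continuousOn_const.div (continuousOn_id.pow 2) fun σ hσ => ?_
      exact pow_ne_zero 2 (hne σ hσ)))
  rw [this]
  ring

/-- On `(a, b]` the integrand `κ σ = φ_κ(σ) / σ²` strictly exceeds `φ_κ(a) / σ²`. -/
lemma phi_mul_lt_integral {κ : ℝ → ℝ} {l0 a b : ℝ} (hl0 : 0 < l0)
    (hκ : ContinuousOn κ (Ici l0)) (hK2 : StrictMonoOn (fun x => x ^ 2 * κ x) (Ici l0))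
    (ha : l0 ≤ a) (hab : a < b) :
    a ^ 2 * κ a * (a⁻¹ - b⁻¹) < ∫ σ in a..b, κ σ := by
  have ha0 : 0 < a := hl0.trans_le ha
  have hlt : ∀ σ, a < σ → a ^ 2 * κ a / σ ^ 2 < κ σ := by
    intro σ hσ
    have h0 : 0 < σ := ha0.trans hσ
    rw [div_lt_iff₀ (by positivity), mul_comm (κ σ)]
    exact hK2 ha (ha.trans hσ.le) hσ
  rw [← integral_const_div_sq ha0 hab.le]
  refine intervalIntegral.integral_lt_integral_of_continuousOn_of_le_of_exists_lt hab ?_ ?_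
    (fun σ hσ => (hlt σ hσ.1).le) ⟨b, right_mem_Icc.2 hab.le, hlt b hab⟩
  · refine continuousOn_const.div (continuousOn_id.pow 2) fun σ hσ => ?_
    exact pow_ne_zero 2 (ha0.trans_le hσ.1).ne'
  · exact hκ.mono fun σ hσ => ha.trans hσ.1

/-! ### The dissipation inequality -/

/-- The dissipation inequality: if `½ w² ≤ m` on `[s, t]`, then
`∫_{λ(s)}^{λ(t)} κ ≤ m (1/λ(s) - 1/λ(t))`. It comes from integrating the power term by parts
against `1/λ`. -/
lemma integral_kappa_le {l0 : ℝ} (hl0 : 0 < l0) {w wd κ lam : ℝ → ℝ}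
    (hw_cont : ContinuousOn w (Ici 0))
    (hwd_int : ∀ t ≥ (0:ℝ), IntervalIntegrable wd volume 0 t)
    (hw_repr : ∀ t ≥ (0:ℝ), w t = w 0 + ∫ τ in (0:ℝ)..t, wd τ)
    (hκ_cont : ContinuousOn κ (Ici l0))
    (hlam_ge : ∀ t ≥ (0:ℝ), l0 ≤ lam t)
    (hlam_mono : MonotoneOn lam (Ici 0))
    (hnonincr : AntitoneOn (fun t =>
      (1/2) * (w t) ^ 2 / lam t + (∫ σ in l0..lam t, κ σ)
        - (∫ τ in (0:ℝ)..t, wd τ * w τ / lam τ)) (Ici 0))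
    {s t m : ℝ} (hs : 0 ≤ s) (hst : s ≤ t) (hm : ∀ r ∈ Icc s t, (1/2) * w r ^ 2 ≤ m) :
    ∫ σ in lam s..lam t, κ σ ≤ m * ((lam s)⁻¹ - (lam t)⁻¹) := by
  have ht : 0 ≤ t := hs.trans hst
  have hanti : AntitoneOn (fun x => (lam x)⁻¹) (Ici 0) := fun x hx y hy hxy =>
    inv_anti₀ (hl0.trans_le (hlam_ge x hx)) (hlam_mono hx hy hxy)
  have hint : ∀ z ≥ (0:ℝ), IntervalIntegrable (fun τ => wd τ * w τ) volume 0 z := by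
    intro z hz
    refine (hwd_int z hz).mul_continuousOn (hw_cont.mono ?_)
    rw [uIcc_of_le hz]
    exact Icc_subset_Ici_self
  have hint' : ∀ z ≥ (0:ℝ), IntervalIntegrable (fun τ => wd τ * w τ / lam τ) volume 0 z :=
    fun z hz => intervalIntegrable_mul_antitoneOn_s5 hz (hint z hz)
      (hanti.mono Icc_subset_Ici_self)
  have hintst : IntervalIntegrable (fun τ => wd τ * w τ) volume s t :=
    (hint s hs).symm.trans (hint t ht)
  have hκi : ∀ {x : ℝ}, l0 ≤ x → IntervalIntegrable κ volume l0 x := fun hx =>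
    (hκ_cont.mono Icc_subset_Ici_self).intervalIntegrable_of_Icc hx
  have key := sub_le_integral_mul_antitoneOn (h := fun τ => -(wd τ * w τ))
    (H := fun x => m - (1/2) * w x ^ 2) (g := fun x => (lam x)⁻¹) hst hintst.neg
    (fun x hx y hy hxy => by
      rw [intervalIntegral.integral_neg,
        ← half_sq_sub_eq_integral hwd_int hw_repr (hs.trans hx.1) hxy]
      ring)
    (fun x hx => sub_nonneg.2 (hm x hx))
    (hanti.mono fun x hx => hs.trans hx.1)
  have e1 : ∫ τ in s..t, -(wd τ * w τ) * (lam τ)⁻¹ = -∫ τ in s..t, wd τ * w τ / lam τ := by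
    rw [← intervalIntegral.integral_neg]
    refine intervalIntegral.integral_congr fun τ _ => ?_
    simp only [div_eq_mul_inv]
    ring
  have e2 := intervalIntegral.integral_add_adjacent_intervals (hint' s hs)
    ((hint' s hs).symm.trans (hint' t ht))
  have e3 := intervalIntegral.integral_add_adjacent_intervals (hκi (hlam_ge s hs))
    ((hκi (hlam_ge s hs)).symm.trans (hκi (hlam_ge t ht)))
  have e4 := hnonincr hs ht hst
  simp only [div_eq_mul_inv (b := lam s), div_eq_mul_inv (b := lam t)] at e4
  rw [e1] at key
  linarith

/-! ### Continuity -/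

open Filter Topology in
/-- A limiting form of the dissipation inequality excludes jumps: if the pairs `(p, q)` tend to
`(a, b)` and satisfy the inequality with `m` arbitrarily close to `F ≤ φ_κ(a)`, then `a = b`. -/
lemma eq_of_tendsto_of_integral_le {κ : ℝ → ℝ} {l0 a b F : ℝ} (hl0 : 0 < l0)
    (hκ : ContinuousOn κ (Ici l0)) (hK2 : StrictMonoOn (fun x => x ^ 2 * κ x) (Ici l0))
    (ha : l0 ≤ a) (hab : a ≤ b) (hF : F ≤ a ^ 2 * κ a)
    {l : Filter ℝ} [l.NeBot] {p q : ℝ → ℝ} (hp : Tendsto p l (𝓝 a)) (hq : Tendsto q l (𝓝 b))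
    (hpq : ∀ ε > 0, ∀ᶠ x in l, l0 ≤ p x ∧ l0 ≤ q x ∧
      ∫ σ in p x..q x, κ σ ≤ (F + ε) * ((p x)⁻¹ - (q x)⁻¹)) : a = b := by
  by_contra hne
  have hlt : a < b := lt_of_le_of_ne hab hne
  have hb : l0 ≤ b := ha.trans hab
  -- the primitive of the continuous extension of `κ` by a constant to the left of `l0`
  set k : ℝ → ℝ := fun σ => κ (max l0 σ) with hk
  have hkc : Continuous k :=
    hκ.comp_continuous (continuous_const.max continuous_id) fun σ => le_max_left l0 σ
  have hK : Continuous fun x => ∫ σ in l0..x, k σ :=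
    intervalIntegral.continuous_primitive (fun _ _ => hkc.intervalIntegrable _ _) l0
  have hkκ : ∀ x y, l0 ≤ x → l0 ≤ y →
      ∫ σ in x..y, κ σ = (∫ σ in l0..y, k σ) - ∫ σ in l0..x, k σ := by
    intro x y hx hy
    rw [intervalIntegral.integral_interval_sub_left (hkc.intervalIntegrable _ _)
      (hkc.intervalIntegrable _ _)]
    refine intervalIntegral.integral_congr fun σ hσ => ?_
    have : l0 ≤ σ := (le_min hx hy).trans hσ.1
    simp only [hk, max_eq_right this]
  have hlim : ∀ ε > 0, ∫ σ in a..b, κ σ ≤ (F + ε) * (a⁻¹ - b⁻¹) := by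
    intro ε hε
    rw [hkκ a b ha hb]
    refine le_of_tendsto_of_tendsto
      (((hK.tendsto b).comp hq).sub ((hK.tendsto a).comp hp))
      (tendsto_const_nhds.mul ((hp.inv₀ (hl0.trans_le ha).ne').sub
        (hq.inv₀ (hl0.trans_le hb).ne'))) ?_
    filter_upwards [hpq ε hε] with x hx
    rw [hkκ _ _ hx.1 hx.2.1] at hx
    exact hx.2.2
  have hinv : 0 < a⁻¹ - b⁻¹ := sub_pos.2 (inv_strictAnti₀ (hl0.trans_le ha) hlt)
  have h1 := phi_mul_lt_integral hl0 hκ hK2 ha hlt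
  have h2 : ∫ σ in a..b, κ σ ≤ F * (a⁻¹ - b⁻¹) := by
    refine le_of_forall_pos_le_add fun η hη => ?_
    refine (hlim (η / (a⁻¹ - b⁻¹)) (by positivity)).trans (le_of_eq ?_)
    rw [add_mul, div_mul_cancel₀ _ hinv.ne']
  have h3 := mul_le_mul_of_nonneg_right hF hinv.le
  linarith

open Filter Topology in
/-- At each point both one-sided limits of the monotone function `lam` exist, and the dissipation
inequality forces them to agree with the value. -/
lemma continuousOn_of_dissipation {l0 : ℝ} (hl0 : 0 < l0) {w κ lam : ℝ → ℝ}
    (hw_cont : ContinuousOn w (Ici 0)) (hκ_cont : ContinuousOn κ (Ici l0))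
    (hK2 : StrictMonoOn (fun x => x ^ 2 * κ x) (Ici l0))
    (hlam_ge : ∀ t ≥ (0:ℝ), l0 ≤ lam t) (hlam_mono : MonotoneOn lam (Ici 0))
    (hF : ∀ t ≥ (0:ℝ), (1/2) * w t ^ 2 ≤ lam t ^ 2 * κ (lam t))
    (hdiss : ∀ {s t m : ℝ}, 0 ≤ s → s ≤ t → (∀ r ∈ Icc s t, (1/2) * w r ^ 2 ≤ m) →
      ∫ σ in lam s..lam t, κ σ ≤ m * ((lam s)⁻¹ - (lam t)⁻¹)) :
    ContinuousOn lam (Ici 0) := by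
  have hphi : ContinuousOn (fun x => x ^ 2 * κ x) (Ici l0) := (continuousOn_id.pow 2).mul hκ_cont
  have hFc : ContinuousOn (fun r => (1/2) * w r ^ 2) (Ici 0) :=
    continuousOn_const.mul (hw_cont.pow 2)
  have hnear : ∀ u ≥ (0:ℝ), ∀ ε > 0, ∃ δ > 0, ∀ r, 0 ≤ r → |r - u| < δ →
      (1/2) * w r ^ 2 ≤ (1/2) * w u ^ 2 + ε := by
    intro u hu ε hε
    obtain ⟨δ, hδ, h⟩ := Metric.continuousWithinAt_iff.1 (hFc u hu) ε hε
    refine ⟨δ, hδ, fun r hr hru => ?_⟩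
    have := h (x := r) hr (by rwa [Real.dist_eq])
    rw [Real.dist_eq] at this
    linarith [(abs_lt.1 this).2]
  intro u hu
  have hu0 : (0:ℝ) ≤ u := hu
  have hright : ContinuousWithinAt lam (Ici u) u := by
    rw [← continuousWithinAt_Ioi_iff_Ici]
    have hge : ∀ x ∈ Ioi u, lam u ≤ lam x := fun x hx =>
      hlam_mono hu (hu0.trans (le_of_lt hx)) (le_of_lt hx)
    have hlim := MonotoneOn.tendsto_nhdsGT (f := lam) (x := u)
      (hlam_mono.mono fun x hx => hu0.trans (le_of_lt hx))
      ⟨lam u, by rintro _ ⟨x, hx, rfl⟩; exact hge x hx⟩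
    have hle : lam u ≤ sInf (lam '' Ioi u) :=
      ge_of_tendsto hlim (eventually_mem_nhdsWithin.mono hge)
    have heq := eq_of_tendsto_of_integral_le hl0 hκ_cont hK2 (hlam_ge u hu0) hle (hF u hu0)
      (l := 𝓝[>] u) (p := fun _ => lam u) tendsto_const_nhds hlim (by
        intro ε hε
        obtain ⟨δ, hδ, h⟩ := hnear u hu0 ε hε
        filter_upwards [Ioo_mem_nhdsGT (show u < u + δ by linarith)] with x hx
        refine ⟨hlam_ge u hu0, hlam_ge x (hu0.trans hx.1.le),
          hdiss hu0 hx.1.le fun r hr => h r (hu0.trans hr.1) ?_⟩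
        rw [abs_of_nonneg (by linarith [hr.1])]
        linarith [hr.2, hx.2])
    rw [← heq] at hlim
    exact hlim
  rcases hu0.eq_or_lt with h0 | h0
  · rwa [← h0] at hright ⊢
  have hleft : ContinuousWithinAt lam (Iic u) u := by
    rw [← continuousWithinAt_Iio_iff_Iic]
    have hle' : ∀ x ∈ Ioo 0 u, lam x ≤ lam u := fun x hx => hlam_mono hx.1.le hu hx.2.le
    have hlim := MonotoneOn.tendsto_nhdsWithin_Ioo_left (f := lam) (x := u) (y := 0)
      (nonempty_Ioo.2 h0) (hlam_mono.mono fun x hx => hx.1.le)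
      ⟨lam u, by rintro _ ⟨x, hx, rfl⟩; exact hle' x hx⟩
    have hev : ∀ᶠ x in 𝓝[<] u, x ∈ Ioo 0 u := Ioo_mem_nhdsLT h0
    have hle : sSup (lam '' Ioo 0 u) ≤ lam u := le_of_tendsto hlim (hev.mono hle')
    have hge : l0 ≤ sSup (lam '' Ioo 0 u) :=
      ge_of_tendsto hlim (hev.mono fun x hx => hlam_ge x hx.1.le)
    -- the stability condition (s2) passes to the left limit
    have hFa : (1/2) * w u ^ 2 ≤ sSup (lam '' Ioo 0 u) ^ 2 * κ (sSup (lam '' Ioo 0 u)) := by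
      have hw' : Tendsto (fun r => (1/2) * w r ^ 2) (𝓝[<] u) (𝓝 ((1/2) * w u ^ 2)) :=
        ((hFc u hu).continuousAt (Ici_mem_nhds h0)).tendsto.mono_left nhdsWithin_le_nhds
      have hφ' : Tendsto (fun x => lam x ^ 2 * κ (lam x)) (𝓝[<] u) _ :=
        (hphi _ hge).tendsto.comp (tendsto_nhdsWithin_iff.2
          ⟨hlim, hev.mono fun x hx => hlam_ge x hx.1.le⟩)
      exact le_of_tendsto_of_tendsto hw' hφ' (hev.mono fun x hx => hF x hx.1.le)
    have heq := eq_of_tendsto_of_integral_le hl0 hκ_cont hK2 hge hle hFa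
      (l := 𝓝[<] u) (q := fun _ => lam u) hlim tendsto_const_nhds (by
        intro ε hε
        obtain ⟨δ, hδ, h⟩ := hnear u hu0 ε hε
        filter_upwards [hev, Ioo_mem_nhdsLT (show u - δ < u by linarith)] with x hx hx'
        refine ⟨hlam_ge x hx.1.le, hlam_ge u hu0,
          hdiss hx.1.le hx.2.le fun r hr => h r (hx.1.le.trans hr.1) ?_⟩
        rw [abs_of_nonpos (by linarith [hr.2])]
        linarith [hr.1, hx'.1])
    rw [heq] at hlim
    exact hlim
  exact (continuousAt_iff_continuous_left_right.2 ⟨hleft, hright⟩).continuousWithinAt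

/-! ### The explicit formula -/

/-- Remarks 2.7 and 2.9 of the paper. Assume (K2). If `lam` satisfies
(o), (s2), and the total energy `t ↦ ½ w(t)²/lam(t) + ∫_{ℓ₀}^{lam t} κ − ∫₀ᵗ ẇ w/lam` is
nonincreasing on `[0,∞)` (a weakening of (eb)), then `lam` is continuous on `[0,∞)` and
`φ_κ(lam t) = max { ½ (w²)_*(t), φ_κ(ℓ₀) }` for every `t ≥ 0`. -/
theorem stmt5
    (l0 : ℝ) (hl0 : 0 < l0)
    (w wd : ℝ → ℝ)
    (hw_cont : ContinuousOn w (Ici 0))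
    (hwd_int : ∀ t ≥ (0:ℝ), IntervalIntegrable wd volume 0 t)
    (hw_repr : ∀ t ≥ (0:ℝ), w t = w 0 + ∫ τ in (0:ℝ)..t, wd τ)
    (κ : ℝ → ℝ)
    (hκ_cont : ContinuousOn κ (Ici l0))
    (hκ_pos : ∀ x ≥ l0, 0 < κ x)
    (hK2 : StrictMonoOn (fun x => x ^ 2 * κ x) (Ici l0))
    (lam : ℝ → ℝ)
    (hlam_ge : ∀ t ≥ (0:ℝ), l0 ≤ lam t)
    (hlam_mono : MonotoneOn lam (Ici 0))
    (hlam0 : lam 0 = l0)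
    (hs2 : ∀ t ≥ (0:ℝ), (1/2) * (w t) ^ 2 / (lam t) ^ 2 ≤ κ (lam t))
    (hnonincr : AntitoneOn (fun t =>
      (1/2) * (w t) ^ 2 / lam t + (∫ σ in l0..lam t, κ σ)
        - (∫ τ in (0:ℝ)..t, wd τ * w τ / lam τ)) (Ici 0)) :
    ContinuousOn lam (Ici 0)
    ∧ ∀ t ≥ (0:ℝ),
        (lam t) ^ 2 * κ (lam t)
          = max ((1/2) * sSup ((fun s => (w s) ^ 2) '' Icc 0 t)) (l0 ^ 2 * κ l0) := by
  have hphi : ContinuousOn (fun x => x ^ 2 * κ x) (Ici l0) := (continuousOn_id.pow 2).mul hκ_cont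
  have hF : ∀ t ≥ (0:ℝ), (1/2) * w t ^ 2 ≤ lam t ^ 2 * κ (lam t) := by
    intro t ht
    have h0 : 0 < lam t := hl0.trans_le (hlam_ge t ht)
    have := hs2 t ht
    rwa [div_le_iff₀ (by positivity), mul_comm (κ _)] at this
  have hdiss : ∀ {s t m : ℝ}, 0 ≤ s → s ≤ t → (∀ r ∈ Icc s t, (1/2) * w r ^ 2 ≤ m) →
      ∫ σ in lam s..lam t, κ σ ≤ m * ((lam s)⁻¹ - (lam t)⁻¹) := fun h1 h2 h3 =>
    integral_kappa_le hl0 hw_cont hwd_int hw_repr hκ_cont hlam_ge hlam_mono hnonincr h1 h2 h3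
  have hcont : ContinuousOn lam (Ici 0) :=
    continuousOn_of_dissipation hl0 hw_cont hκ_cont hK2 hlam_ge hlam_mono hF hdiss
  refine ⟨hcont, fun t ht => ?_⟩
  have hsub : Icc 0 t ⊆ Ici (0:ℝ) := Icc_subset_Ici_self
  have hbdd : BddAbove ((fun s => w s ^ 2) '' Icc 0 t) :=
    (isCompact_Icc.image_of_continuousOn ((hw_cont.mono hsub).pow 2)).bddAbove
  have hlt0 : l0 ≤ lam t := hlam_ge t ht
  set M := (1/2) * sSup ((fun s => (w s) ^ 2) '' Icc 0 t) with hM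
  have hMge : ∀ r ∈ Icc 0 t, (1/2) * w r ^ 2 ≤ M := fun r hr =>
    mul_le_mul_of_nonneg_left (le_csSup hbdd ⟨r, hr, rfl⟩) (by norm_num)
  have hMle : M ≤ lam t ^ 2 * κ (lam t) := by
    have : sSup ((fun s => (w s) ^ 2) '' Icc 0 t) ≤ 2 * (lam t ^ 2 * κ (lam t)) := by
      refine csSup_le ((nonempty_Icc.2 ht).image _) ?_
      rintro _ ⟨r, hr, rfl⟩
      have h1 := hF r hr.1
      have h2 : lam r ^ 2 * κ (lam r) ≤ lam t ^ 2 * κ (lam t) :=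
        hK2.monotoneOn (hlam_ge r hr.1) hlt0 (hlam_mono hr.1 ht hr.2)
      simp only
      linarith
    linarith
  refine le_antisymm ?_ (max_le hMle (hK2.monotoneOn self_mem_Ici hlt0 hlt0))
  by_contra! hlt
  obtain ⟨x, hx, hxe⟩ : max M (l0 ^ 2 * κ l0) ∈ (fun x => x ^ 2 * κ x) '' Icc l0 (lam t) :=
    intermediate_value_Icc hlt0 (hphi.mono Icc_subset_Ici_self) ⟨le_max_right _ _, hlt.le⟩
  obtain ⟨s, hs, hsx⟩ : x ∈ lam '' Icc 0 t :=
    intermediate_value_Icc ht (hcont.mono hsub) (by rw [hlam0]; exact hx)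
  simp only at hxe
  have hxlt : x < lam t := by
    refine lt_of_le_of_ne hx.2 fun h => ?_
    rw [h] at hxe
    exact hlt.ne' hxe
  have h1 := hdiss hs.1 hs.2 fun r hr => hMge r ⟨hs.1.trans hr.1, hr.2⟩
  rw [hsx] at h1
  have h2 := phi_mul_lt_integral hl0 hκ_cont hK2 hx.1 hxlt
  rw [hxe] at h2
  have h3 : 0 ≤ x⁻¹ - (lam t)⁻¹ :=
    sub_nonneg.2 (inv_anti₀ (hl0.trans_le hx.1) hxlt.le)
  have h4 := mul_le_mul_of_nonneg_right (le_max_left M (l0 ^ 2 * κ l0)) h3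
  linarith
end

section
/- Assume κ is locally Lipschitz, (K3) (φ_κ is strictly increasing on [ℓ₀,∞) and its a.e. derivative satisfies φ_κ'(x) > 0 for a.e. x), and (KW) (for every T > 0, lim_{x→∞} φ_κ(x) > ½·max_{[0,T]} w², and φ_κ(ℓ₀) ≥ ½·w(0)²). Define λ̄(t) := φ_κ^{-1}( max{ ½·(w²)_*(t), φ_κ(ℓ₀) } ), i.e. λ̄(t) is the unique x ≥ ℓ₀ with φ_κ(x) = max{ ½·(w²)_*(t), φ_κ(ℓ₀) }. Then λ̄ is well defined, λ̄(0) = ℓ₀, λ̄ is nondecreasing and absolutely continuous on every compact interval, and the quasistatic Griffith criterion holds: for a.e. t ∈ (0,∞), λ̄'(t) ≥ 0, ½·w(t)²/λ̄(t)² ≤ κ(λ̄(t)), and (½·w(t)²/λ̄(t)² − κ(λ̄(t)))·λ̄'(t) = 0. In particular the pair (v̄, λ̄) with v̄(t,x) = w(t)(1 − x/λ̄(t)) for x ∈ [0,λ̄(t)] and v̄(t,x) = 0 for x ≥ λ̄(t) is a quasistatic evolution. -/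
/-!
Write `φ x = x² κ x` and `M t = max (½ max_{[0,t]} w²) (φ ℓ₀)`. The map `λ̄ = φ⁻¹ ∘ M` is well
defined by the intermediate value theorem and strict monotonicity of `φ`.

Absolute continuity is the heart of the matter. The running maximum `M` is absolutely continuous
because its increments are dominated by the integral of `|(w²)'|` (`ac_runningMax`). Since
`φ' > 0` a.e., Lebesgue measure is absolutely continuous with respect to `φ' dx`, which makes
`φ⁻¹` absolutely continuous (`sum_dist_lt_of_sum_dist_image_lt`). As `λ̄` is monotone, it maps
disjoint intervals to disjoint intervals, so the composition is absolutely continuous as well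
(`ac_of_comp`), and the fundamental theorem of calculus applies to it.

For the Griffith criterion, `½ w² ≤ M = λ̄² κ(λ̄)` is clear. If this is strict at `t`, then by
continuity `½ w²` stays below `M t` slightly to the right of `t`, so `M`, hence `λ̄`, is constant
there and the derivative of `λ̄` at `t` vanishes.
-/

open MeasureTheory Set

open AbsolutelyContinuousOnInterval in
/-- A function whose increments are dominated by those of an absolutely continuous function is
absolutely continuous. -/
lemma ac_of_dist_le {f g : ℝ → ℝ} {a b : ℝ} (hg : AbsolutelyContinuousOnInterval g a b)
    (h : ∀ x ∈ uIcc a b, ∀ y ∈ uIcc a b, dist (f x) (f y) ≤ dist (g x) (g y)) :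
    AbsolutelyContinuousOnInterval f a b := by
  rw [absolutelyContinuousOnInterval_iff] at hg ⊢
  intro ε hε
  obtain ⟨δ, hδ, H⟩ := hg ε hε
  refine ⟨δ, hδ, fun E hE hEδ => lt_of_le_of_lt (Finset.sum_le_sum fun i hi => ?_) (H E hE hEδ)⟩
  exact h _ (hE.1 i hi).1 _ (hE.1 i hi).2

open AbsolutelyContinuousOnInterval in
/-- The inverse of an increasing absolutely continuous function `φ` with `φ' > 0` a.e. is
absolutely continuous, phrased on the source side: a family of disjoint intervals whose `φ`-images
have small total length has itself small total length. The reason is that Lebesgue measure is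
absolutely continuous with respect to the measure with density `φ'`, and the latter gives an
interval the length of its `φ`-image. -/
lemma sum_dist_lt_of_sum_dist_image_lt {φ : ℝ → ℝ} {a b : ℝ} (hab : a ≤ b)
    (hφ : AbsolutelyContinuousOnInterval φ a b)
    (hpos : ∀ᵐ x ∂volume, x ∈ Ioc a b → 0 < deriv φ x) {ε : ℝ} (hε : 0 < ε) :
    ∃ δ > (0 : ℝ), ∀ E ∈ disjWithin a b,
      ∑ i ∈ Finset.range E.1, dist (φ (E.2 i).1) (φ (E.2 i).2) < δ →
      ∑ i ∈ Finset.range E.1, dist (E.2 i).1 (E.2 i).2 < ε := by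
  set μ : Measure ℝ := volume.restrict (Ioc a b) with hμ
  set ν : Measure ℝ := μ.withDensity (fun x => ENNReal.ofReal (deriv φ x)) with hν
  have hae : ∀ᵐ x ∂μ, 0 < deriv φ x := (ae_restrict_iff' measurableSet_Ioc).2 hpos
  have hmeas : Measurable (fun x => ENNReal.ofReal (deriv φ x)) :=
    (measurable_deriv φ).ennreal_ofReal
  have hac : μ ≪ ν := by
    refine withDensity_absolutelyContinuous' hmeas.aemeasurable ?_
    filter_upwards [hae] with x hx
    simpa using hx
  have hint : IntegrableOn (deriv φ) (Ioc a b) :=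
    (intervalIntegrable_iff_integrableOn_Ioc_of_le hab).1 hφ.intervalIntegrable_deriv
  have : IsFiniteMeasure ν := isFiniteMeasure_withDensity_ofReal hint.2
  have hfin : ∫⁻ x, μ.rnDeriv ν x ∂ν ≠ ⊤ := (Measure.lintegral_rnDeriv_lt_top μ ν).ne
  obtain ⟨δ, hδ0, hδ⟩ := exists_pos_setLIntegral_lt_of_measure_lt hfin
    (ε := ENNReal.ofReal ε) (by simpa using hε)
  have hνI : ∀ x ∈ uIcc a b, ∀ y ∈ uIcc a b,
      ν (uIoc x y) = ENNReal.ofReal (dist (φ x) (φ y)) := by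
    intro x hx y hy
    wlog hxy : x ≤ y generalizing x y
    · rw [uIoc_comm, dist_comm]
      exact this y hy x hx (le_of_not_ge hxy)
    rw [uIcc_of_le hab] at hx hy
    have hsub : Ioc x y ⊆ Ioc a b := Ioc_subset_Ioc hx.1 hy.2
    have hnn : 0 ≤ᵐ[volume.restrict (Ioc x y)] deriv φ :=
      (ae_mono (Measure.restrict_mono hsub le_rfl)) (hae.mono fun _ h => h.le)
    have hft : ∫ u in Ioc x y, deriv φ u = φ y - φ x := by
      rw [← intervalIntegral.integral_of_le hxy]
      refine (hφ.mono ?_).integral_deriv_eq_sub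
      rw [uIcc_of_le hab, uIcc_of_le hxy]
      exact Icc_subset_Icc hx.1 hy.2
    have h0 : 0 ≤ φ y - φ x := hft ▸ integral_nonneg_of_ae hnn
    rw [uIoc_of_le hxy, hν, withDensity_apply _ measurableSet_Ioc, hμ,
      Measure.restrict_restrict measurableSet_Ioc, inter_eq_left.2 hsub,
      ← ofReal_integral_eq_lintegral_ofReal (hint.mono_set hsub) hnn, hft, dist_comm,
      Real.dist_eq, abs_of_nonneg h0]
  obtain ⟨η, hη0, hηδ⟩ : ∃ η : ℝ, 0 < η ∧ ENNReal.ofReal η ≤ δ := by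
    by_cases h : δ = ⊤
    · exact ⟨1, one_pos, h ▸ le_top⟩
    · exact ⟨δ.toReal, ENNReal.toReal_pos hδ0.ne' h, ENNReal.ofReal_toReal_le⟩
  refine ⟨η, hη0, fun E hE hEη => ?_⟩
  have hmU : ∀ i ∈ Finset.range E.1, MeasurableSet (uIoc (E.2 i).1 (E.2 i).2) :=
    fun i _ => measurableSet_uIoc
  have key := hδ (⋃ i ∈ Finset.range E.1, uIoc (E.2 i).1 (E.2 i).2) (by
    rw [measure_biUnion_finset hE.2 hmU]
    rw [Finset.sum_congr rfl fun i hi => hνI _ (hE.1 i hi).1 _ (hE.1 i hi).2,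
      ← ENNReal.ofReal_sum_of_nonneg fun i _ => dist_nonneg]
    exact lt_of_lt_of_le ((ENNReal.ofReal_lt_ofReal_iff hη0).2 hEη) hηδ)
  rw [Measure.setLIntegral_rnDeriv hac, hμ, Measure.restrict_eq_self _ (by
      rw [← uIoc_of_le hab]
      exact biUnion_uIoc_subset_of_mem_disjWithin hE), measure_biUnion_finset hE.2 hmU] at key
  simp only [Real.volume_uIoc] at key
  rw [← ENNReal.ofReal_sum_of_nonneg fun i _ => abs_nonneg _,
    ENNReal.ofReal_lt_ofReal_iff hε] at key
  refine lt_of_eq_of_lt (Finset.sum_congr rfl fun i _ => ?_) key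
  rw [dist_comm, Real.dist_eq]

open AbsolutelyContinuousOnInterval in
/-- If `φ ∘ l` is absolutely continuous, `l` is monotone and `φ` is absolutely continuous with
`φ' > 0` a.e., then `l = φ⁻¹ ∘ (φ ∘ l)` is absolutely continuous: monotonicity makes the images
of disjoint intervals under `l` disjoint. -/
lemma ac_of_comp {φ l : ℝ → ℝ} {a b c d : ℝ} (hab : a ≤ b) (hcd : c ≤ d)
    (hφ : AbsolutelyContinuousOnInterval φ a b)
    (hpos : ∀ᵐ x ∂volume, x ∈ Ioc a b → 0 < deriv φ x)
    (hl : MonotoneOn l (Icc c d)) (hmaps : MapsTo l (Icc c d) (Icc a b))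
    (hcomp : AbsolutelyContinuousOnInterval (fun t => φ (l t)) c d) :
    AbsolutelyContinuousOnInterval l c d := by
  rw [absolutelyContinuousOnInterval_iff] at hcomp ⊢
  intro ε hε
  obtain ⟨η, hη, H⟩ := sum_dist_lt_of_sum_dist_image_lt hab hφ hpos hε
  obtain ⟨δ, hδ, H'⟩ := hcomp η hη
  refine ⟨δ, hδ, fun E hE hEδ => H (E.1, fun i => (l (E.2 i).1, l (E.2 i).2)) ?_ (H' E hE hEδ)⟩
  rcases hE with ⟨h1, h2⟩
  rw [uIcc_of_le hcd] at h1
  refine ⟨fun i hi => ?_, fun i hi j hj hij => ?_⟩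
  · rw [uIcc_of_le hab]
    exact ⟨hmaps (h1 i hi).1, hmaps (h1 i hi).2⟩
  · have hd := h2 hi hj hij
    have hi' := h1 i hi
    have hj' := h1 j hj
    simp only [Function.onFun, uIoc, Ioc_disjoint_Ioc] at hd ⊢
    have hmin : ∀ x ∈ Icc c d, ∀ y ∈ Icc c d, min (l x) (l y) = l (min x y) := by
      intro x hx y hy
      rcases le_total x y with h | h
      · rw [min_eq_left h, min_eq_left (hl hx hy h)]
      · rw [min_eq_right h, min_eq_right (hl hy hx h)]
    have hmax : ∀ x ∈ Icc c d, ∀ y ∈ Icc c d, max (l x) (l y) = l (max x y) := by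
      intro x hx y hy
      rcases le_total x y with h | h
      · rw [max_eq_right h, max_eq_right (hl hx hy h)]
      · rw [max_eq_left h, max_eq_left (hl hy hx h)]
    have mmin : ∀ x ∈ Icc c d, ∀ y ∈ Icc c d, min x y ∈ Icc c d := fun x hx y hy =>
      ⟨le_min hx.1 hy.1, (min_le_left _ _).trans hx.2⟩
    have mmax : ∀ x ∈ Icc c d, ∀ y ∈ Icc c d, max x y ∈ Icc c d := fun x hx y hy =>
      ⟨hx.1.trans (le_max_left _ _), max_le hx.2 hy.2⟩
    have ai := mmin _ hi'.1 _ hi'.2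
    have bi := mmax _ hi'.1 _ hi'.2
    have aj := mmin _ hj'.1 _ hj'.2
    have bj := mmax _ hj'.1 _ hj'.2
    rw [hmax _ hi'.1 _ hi'.2, hmax _ hj'.1 _ hj'.2, hmin _ hi'.1 _ hi'.2, hmin _ hj'.1 _ hj'.2,
      hmin _ bi _ bj, hmax _ ai _ aj]
    exact hl (mmin _ bi _ bj) (mmax _ ai _ aj) hd

/-- The running maximum `max c (½ max_{[0,t]} f)` of an absolutely continuous function is
absolutely continuous: its increment over `[s,t]` is at most `∫_s^t |f'|`. -/
lemma ac_runningMax {f : ℝ → ℝ} {T c : ℝ} (hT : 0 ≤ T)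
    (hf : AbsolutelyContinuousOnInterval f 0 T) :
    AbsolutelyContinuousOnInterval
      (fun t => max ((1/2) * sSup (f '' Icc 0 t)) c) 0 T := by
  have hi := hf.intervalIntegrable_deriv
  have hG := hi.abs.absolutelyContinuousOnInterval_intervalIntegral (c := 0) (by simp)
  refine ac_of_dist_le hG fun x hx y hy => ?_
  wlog hxy : x ≤ y generalizing x y
  · rw [dist_comm, dist_comm (∫ _ in _.._, _)]
    exact this y hy x hx (le_of_not_ge hxy)
  have hc := hf.continuousOn
  rw [uIcc_of_le hT] at hx hy hc
  have hsub : ∀ u ∈ Icc 0 T, IntervalIntegrable (deriv f) volume 0 u := fun u hu =>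
    hi.mono_set (by rw [uIcc_of_le hT, uIcc_of_le hu.1]; exact Icc_subset_Icc le_rfl hu.2)
  have hbdd : ∀ u ∈ Icc 0 T, BddAbove (f '' Icc 0 u) := fun u hu =>
    (isCompact_Icc.image_of_continuousOn (hc.mono (Icc_subset_Icc le_rfl hu.2))).bddAbove
  set D := (∫ v in (0:ℝ)..y, |deriv f v|) - ∫ v in (0:ℝ)..x, |deriv f v| with hD
  have hDeq : D = ∫ v in x..y, |deriv f v| :=
    intervalIntegral.integral_interval_sub_left (hsub y hy).abs (hsub x hx).abs
  have hD0 : 0 ≤ D := hDeq ▸ intervalIntegral.integral_nonneg hxy fun _ _ => abs_nonneg _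
  have hmono : sSup (f '' Icc 0 x) ≤ sSup (f '' Icc 0 y) :=
    csSup_le_csSup (hbdd y hy) ((nonempty_Icc.2 hx.1).image f)
      (image_mono (Icc_subset_Icc le_rfl hxy))
  have hle : sSup (f '' Icc 0 y) ≤ sSup (f '' Icc 0 x) + D := by
    refine csSup_le ((nonempty_Icc.2 hy.1).image f) ?_
    rintro _ ⟨u, hu, rfl⟩
    rcases le_total u x with hux | hxu
    · have := le_csSup (hbdd x hx) (mem_image_of_mem f ⟨hu.1, hux⟩)
      linarith
    · have h1 := le_csSup (hbdd x hx) (mem_image_of_mem f ⟨hx.1, le_rfl⟩)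
      have huT : u ∈ Icc 0 T := ⟨hu.1, hu.2.trans hy.2⟩
      have h2 : ∫ v in x..u, deriv f v = f u - f x := by
        refine (hf.mono ?_).integral_deriv_eq_sub
        rw [uIcc_of_le hT, uIcc_of_le hxu]
        exact Icc_subset_Icc hx.1 huT.2
      have h3 : f u - f x ≤ ∫ v in x..u, |deriv f v| := by
        rw [← h2]
        exact (le_abs_self _).trans (intervalIntegral.abs_integral_le_integral_abs hxu)
      have h4 : (∫ v in x..u, |deriv f v|) ≤ D := by
        rw [hDeq]
        refine intervalIntegral.integral_mono_interval le_rfl hxu hu.2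
          (Filter.Eventually.of_forall fun _ => abs_nonneg _) ?_
        exact ((hsub x hx).symm.trans (hsub y hy)).abs
      linarith
  rw [dist_comm, dist_comm (∫ _ in _.._, _), Real.dist_eq, Real.dist_eq, abs_of_nonneg hD0,
    abs_of_nonneg (sub_nonneg.2 (max_le_max (by linarith) le_rfl)), sub_le_iff_le_add]
  refine max_le ?_ ?_
  · have := le_max_left ((1/2) * sSup (f '' Icc 0 x)) c
    linarith
  · have := le_max_right ((1/2) * sSup (f '' Icc 0 x)) c
    linarith

/-- existence part of Theorem 2.10 of the paper. Assume `κ` is locally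
Lipschitz, (K3) (`φ_κ` strictly increasing with a.e. positive derivative) and (KW). Then
the function `λ̄(t) = φ_κ⁻¹( max{ ½ (w²)_*(t), φ_κ(ℓ₀) } )` is well defined (i.e. there
exists `lam` with `φ_κ(lam t) = max{ ½ (w²)_*(t), φ_κ(ℓ₀) }` and `lam t ≥ ℓ₀`), it starts
at `ℓ₀`, is nondecreasing, absolutely continuous on compact intervals (with integrable
a.e. derivative `lam'` satisfying the fundamental theorem of calculus), and satisfies the
quasistatic Griffith criterion a.e. on `(0,∞)`; hence it is a quasistatic evolution. -/
theorem stmt6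
    (l0 : ℝ) (hl0 : 0 < l0)
    (w wd : ℝ → ℝ)
    (hw_cont : ContinuousOn w (Ici 0))
    (hwd_int : ∀ t ≥ (0:ℝ), IntervalIntegrable wd volume 0 t)
    (hw_repr : ∀ t ≥ (0:ℝ), w t = w 0 + ∫ τ in (0:ℝ)..t, wd τ)
    (κ : ℝ → ℝ)
    (hκ_cont : ContinuousOn κ (Ici l0))
    (hκ_pos : ∀ x ≥ l0, 0 < κ x)
    (hκ_lip : ∀ X > l0, ∃ K : NNReal, LipschitzOnWith K κ (Icc l0 X))
    (hK3a : StrictMonoOn (fun x => x ^ 2 * κ x) (Ici l0))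
    (hK3b : ∀ᵐ x ∂volume, x ∈ Ioi l0 → 0 < deriv (fun y => y ^ 2 * κ y) x)
    (hKW1 : ∀ T > (0:ℝ), ∃ x ≥ l0,
      (1/2) * sSup ((fun s => (w s) ^ 2) '' Icc 0 T) < x ^ 2 * κ x)
    (hKW2 : (1/2) * (w 0) ^ 2 ≤ l0 ^ 2 * κ l0) :
    ∃ lam lam' : ℝ → ℝ,
      (∀ t ≥ (0:ℝ), l0 ≤ lam t ∧
        (lam t) ^ 2 * κ (lam t)
          = max ((1/2) * sSup ((fun s => (w s) ^ 2) '' Icc 0 t)) (l0 ^ 2 * κ l0))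
      ∧ lam 0 = l0
      ∧ MonotoneOn lam (Ici 0)
      ∧ (∀ T > (0:ℝ), IntervalIntegrable lam' volume 0 T)
      ∧ (∀ t ≥ (0:ℝ), lam t = l0 + ∫ s in (0:ℝ)..t, lam' s)
      ∧ (∀ᵐ t ∂volume, t ∈ Ioi (0:ℝ) → HasDerivAt lam (lam' t) t)
      ∧ (∀ᵐ t ∂volume, t ∈ Ioi (0:ℝ) →
          0 ≤ lam' t
          ∧ (1/2) * (w t) ^ 2 / (lam t) ^ 2 ≤ κ (lam t)
          ∧ ((1/2) * (w t) ^ 2 / (lam t) ^ 2 - κ (lam t)) * lam' t = 0) := by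
  set φ : ℝ → ℝ := fun x => x ^ 2 * κ x with hφ
  set f : ℝ → ℝ := fun s => (w s) ^ 2 with hf
  set M : ℝ → ℝ := fun t => max ((1/2) * sSup (f '' Icc 0 t)) (φ l0) with hM
  have hφcont : ContinuousOn φ (Ici l0) := (continuous_pow 2).continuousOn.mul hκ_cont
  have hfcont : ContinuousOn f (Ici 0) := hw_cont.pow 2
  have hbdd : ∀ t, BddAbove (f '' Icc 0 t) := fun t =>
    (isCompact_Icc.image_of_continuousOn (hfcont.mono Icc_subset_Ici_self)).bddAbove
  have hSmono : ∀ s t, 0 ≤ s → s ≤ t → sSup (f '' Icc 0 s) ≤ sSup (f '' Icc 0 t) :=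
    fun s t hs hst => csSup_le_csSup (hbdd t) ((nonempty_Icc.2 hs).image f)
      (image_mono (Icc_subset_Icc le_rfl hst))
  have hMmono : ∀ s t, 0 ≤ s → s ≤ t → M s ≤ M t := fun s t hs hst =>
    max_le_max (by linarith [hSmono s t hs hst]) le_rfl
  have hex : ∀ t, ∃ x, l0 ≤ x ∧ (0 ≤ t → φ x = M t) := by
    intro t
    by_cases ht : 0 ≤ t
    · obtain ⟨x, hx, hxlt⟩ := hKW1 (t + 1) (by linarith)
      have h1 : M t ≤ φ x := by
        refine max_le ?_ (hK3a.monotoneOn self_mem_Ici hx hx)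
        have := hSmono t (t + 1) ht (by linarith)
        change (1/2) * sSup (f '' Icc 0 (t + 1)) < φ x at hxlt
        linarith
      obtain ⟨y, hy, hyM⟩ := intermediate_value_Icc hx (hφcont.mono Icc_subset_Ici_self)
        (show M t ∈ Icc (φ l0) (φ x) from ⟨le_max_right _ _, h1⟩)
      exact ⟨y, hy.1, fun _ => hyM⟩
    · exact ⟨l0, le_rfl, fun h => absurd h ht⟩
  choose lam hlam_ge hlam_eq using hex
  have hmono : MonotoneOn lam (Ici 0) := by
    intro s hs t ht hst
    refine (hK3a.le_iff_le (hlam_ge s) (hlam_ge t)).1 ?_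
    change φ (lam s) ≤ φ (lam t)
    rw [hlam_eq s hs, hlam_eq t ht]
    exact hMmono s t hs hst
  have hlam0 : lam 0 = l0 := by
    refine hK3a.injOn (hlam_ge 0) self_mem_Ici ?_
    rw [hlam_eq 0 le_rfl]
    simpa [hM, hf] using hKW2
  have hfAC : ∀ T, 0 ≤ T → AbsolutelyContinuousOnInterval f 0 T := by
    intro T hT
    have h1 := (hwd_int T hT).absolutelyContinuousOnInterval_intervalIntegral (c := 0) (by simp)
    have h2 : AbsolutelyContinuousOnInterval w 0 T := by
      refine ac_of_dist_le h1 fun x hx y hy => ?_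
      rw [uIcc_of_le hT] at hx hy
      rw [hw_repr x hx.1, hw_repr y hy.1, dist_add_left]
    have h3 := h2.mul h2
    have : f = w * w := by
      ext s
      simp [hf, sq]
    rwa [this]
  have hAC : ∀ T, 0 ≤ T → AbsolutelyContinuousOnInterval lam 0 T := by
    intro T hT
    -- The endpoint is pushed beyond `lam T` because local Lipschitz continuity is only
    -- given on intervals `[l0, X]` with `X > l0`.
    have hX : l0 < lam T + 1 := by linarith [hlam_ge T]
    obtain ⟨K, hK⟩ := hκ_lip (lam T + 1) hX
    rw [← uIcc_of_le hX.le] at hK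
    have hφAC : AbsolutelyContinuousOnInterval φ l0 (lam T + 1) :=
      (ContDiffOn.absolutelyContinuousOnInterval
        ((contDiff_id.pow 2).contDiffOn : ContDiffOn ℝ 1 (fun x : ℝ => x ^ 2) _)).mul
        hK.absolutelyContinuousOnInterval
    refine ac_of_comp hX.le hT hφAC ?_ (hmono.mono Icc_subset_Ici_self) ?_ ?_
    · filter_upwards [hK3b] with x hx hx'
      exact hx hx'.1
    · intro t ht
      refine ⟨hlam_ge t, ?_⟩
      have := hmono ht.1 hT ht.2
      linarith
    · refine ac_of_dist_le (ac_runningMax (c := φ l0) hT (hfAC T hT)) fun x hx y hy => ?_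
      rw [uIcc_of_le hT] at hx hy
      rw [hlam_eq x hx.1, hlam_eq y hy.1]
  have hdiff : ∀ᵐ t ∂volume, t ∈ Ioi (0:ℝ) → HasDerivAt lam (deriv lam t) t := by
    have h : ∀ᵐ t ∂volume, ∀ n : ℕ, t ∈ uIcc 0 (n : ℝ) → DifferentiableAt ℝ lam t :=
      ae_all_iff.2 fun n => (hAC n n.cast_nonneg).ae_differentiableAt
    filter_upwards [h] with t ht ht0
    obtain ⟨n, hn⟩ := exists_nat_ge t
    refine (ht n ?_).hasDerivAt
    rw [uIcc_of_le n.cast_nonneg]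
    exact ⟨le_of_lt ht0, hn⟩
  have hwM : ∀ t, 0 ≤ t → (1/2) * (w t) ^ 2 ≤ φ (lam t) := by
    intro t ht
    rw [hlam_eq t ht]
    have h1 : f t ≤ sSup (f '' Icc 0 t) := le_csSup (hbdd t) (mem_image_of_mem f ⟨ht, le_rfl⟩)
    refine le_trans ?_ (le_max_left _ _)
    change (1/2) * f t ≤ _
    linarith
  refine ⟨lam, deriv lam, fun t ht => ⟨hlam_ge t, hlam_eq t ht⟩, hlam0, hmono,
    fun T hT => (hAC T hT.le).intervalIntegrable_deriv, fun t ht => ?_, hdiff, ?_⟩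
  · rw [(hAC t ht).integral_deriv_eq_sub, hlam0]
    ring
  filter_upwards [hdiff] with t ht ht0
  have hd := ht ht0
  have ht0' : (0:ℝ) < t := ht0
  have hpos : 0 < lam t := hl0.trans_le (hlam_ge t)
  have hpos2 : 0 < lam t ^ 2 := by positivity
  refine ⟨?_, ?_, ?_⟩
  · have h1 : HasDerivWithinAt lam (deriv lam t) (Ioi 0) t := hd.hasDerivWithinAt
    rw [← h1.derivWithin (isOpen_Ioi.uniqueDiffWithinAt ht0)]
    exact (hmono.mono Ioi_subset_Ici_self).derivWithin_nonneg
  · rw [div_le_iff₀ hpos2, mul_comm (κ _)]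
    exact hwM t ht0'.le
  · rcases (hwM t ht0'.le).eq_or_lt with heq | hlt
    · have : (1/2) * (w t) ^ 2 / (lam t) ^ 2 - κ (lam t) = 0 := by
        rw [heq, sub_eq_zero, hφ]
        field_simp
      rw [this, zero_mul]
    · -- Here `½ w² < M t` persists on some `[t, t + ε)`, so `lam` is constant there.
      have hcont : ContinuousAt (fun s => (1/2) * f s) t :=
        ((hfcont t ht0'.le).continuousAt (Ici_mem_nhds ht0')).const_mul _
      have hev : ∀ᶠ s in nhds t, (1/2) * f s < φ (lam t) := hcont.eventually_lt_const hlt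
      obtain ⟨ε, hε, hball⟩ := Metric.eventually_nhds_iff.1 hev
      have hconst : ∀ s ∈ Ico t (t + ε), lam s = lam t := by
        intro s hs
        have hs0 : 0 ≤ s := ht0'.le.trans hs.1
        refine hK3a.injOn (hlam_ge s) (hlam_ge t) ?_
        refine le_antisymm ?_ (hK3a.monotoneOn (hlam_ge t) (hlam_ge s)
          (hmono ht0'.le hs0 hs.1))
        have hl : φ l0 ≤ φ (lam t) := hK3a.monotoneOn self_mem_Ici (hlam_ge t) (hlam_ge t)
        rw [hlam_eq s hs0]
        refine max_le ?_ hl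
        have : sSup (f '' Icc 0 s) ≤ 2 * φ (lam t) := by
          refine csSup_le ((nonempty_Icc.2 hs0).image f) ?_
          rintro _ ⟨u, hu, rfl⟩
          rcases le_total u t with hut | htu
          · have h1 : f u ≤ sSup (f '' Icc 0 t) :=
              le_csSup (hbdd t) (mem_image_of_mem f ⟨hu.1, hut⟩)
            have h2 : (1/2) * sSup (f '' Icc 0 t) ≤ φ (lam t) := by
              rw [hlam_eq t ht0'.le]
              exact le_max_left _ _
            linarith
          · have : (1/2) * f u < φ (lam t) := by
              apply hball
              rw [Real.dist_eq, abs_of_nonneg (by linarith)]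
              linarith [hu.2, hs.2]
            linarith
        linarith
      have h0 : HasDerivWithinAt lam 0 (Ici t) t := by
        refine (hasDerivWithinAt_const t (Ici t) (lam t)).congr_of_eventuallyEq ?_ rfl
        filter_upwards [Ico_mem_nhdsGE (show t < t + ε by linarith)] with s hs
        exact hconst s hs
      rw [(uniqueDiffWithinAt_Ici t).eq_deriv _ hd.hasDerivWithinAt h0, mul_zero]
end

section
/- Assume (K3): φ_κ is strictly increasing on [ℓ₀,∞) and its a.e. derivative satisfies φ_κ'(x) > 0 for a.e. x ∈ (ℓ₀,∞). Let λ : [0,∞) → [ℓ₀,∞) be absolutely continuous on every compact interval with λ(0) = ℓ₀, and suppose that a.e. on (0,∞): λ'(t) ≥ 0, ½·w(t)²/λ(t)² ≤ κ(λ(t)), and (½·w(t)²/λ(t)² − κ(λ(t)))·λ'(t) = 0 (quasistatic Griffith criterion). Then for every t ≥ 0, φ_κ(λ(t)) = max{ ½·(w²)_*(t), φ_κ(ℓ₀) }, where (w²)_*(t) := max_{s∈[0,t]} w(s)². In particular the quasistatic evolution is unique. -/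
/-!
Write `φ x = x² κ x`. Multiplied by `lam²`, the Griffith criterion says that a.e. `lam' ≥ 0`,
`w² / 2 ≤ φ (lam)`, and `lam' = 0` wherever `w² / 2 < φ (lam)`.

The inequality holds at every time by continuity, and `φ ∘ lam` is monotone, so `φ (lam t)` is at
least `M t`, the maximum of `φ l₀` and of the running supremum of `w² / 2`. Conversely, suppose
`M t < φ (lam t)`, and let `s₁` be the last time in `[0, t]` with `φ (lam s₁) ≤ M t`. On `(s₁, t]`
the inequality `w² / 2 < φ (lam)` is strict, so `lam' = 0` a.e. there and `lam t = lam s₁`, a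
contradiction. Uniqueness follows from the formula because `φ` is injective.
-/

open MeasureTheory Set

/-- The primitive of a function integrable on every `[0, T]` is continuous on `[0, ∞)`. -/
lemma continuousOn_of_repr {l0 : ℝ} {lam lam' : ℝ → ℝ}
    (hlam_int : ∀ T > (0:ℝ), IntervalIntegrable lam' volume 0 T)
    (hlam_repr : ∀ t ≥ (0:ℝ), lam t = l0 + ∫ s in (0:ℝ)..t, lam' s) :
    ContinuousOn lam (Ici 0) := by
  intro t ht
  have ht0 : (0:ℝ) ≤ t := ht
  have hT : (0:ℝ) < t + 1 := by linarith
  have hc : ContinuousOn (fun x => ∫ s in (0:ℝ)..x, lam' s) (Icc 0 (t + 1)) :=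
    intervalIntegral.continuousOn_primitive_interval' (hlam_int _ hT) left_mem_uIcc
      |>.mono (by rw [uIcc_of_le hT.le])
  have hc2 : ContinuousOn lam (Icc 0 (t + 1)) :=
    (hc.const_add l0).congr fun x hx => hlam_repr x hx.1
  refine (hc2 t ⟨ht0, by linarith⟩).mono_of_mem_nhdsWithin ?_
  filter_upwards [self_mem_nhdsWithin, mem_nhdsWithin_of_mem_nhds (Iic_mem_nhds (lt_add_one t))]
    with x hx hx2 using ⟨hx, hx2⟩

lemma le_of_ae_le_Ici {f g : ℝ → ℝ} (hf : ContinuousOn f (Ici 0)) (hg : ContinuousOn g (Ici 0))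
    (h : ∀ᵐ t ∂(volume : Measure ℝ), t ∈ Ioi (0:ℝ) → f t ≤ g t) :
    ∀ t ≥ (0:ℝ), f t ≤ g t := by
  intro t ht
  by_contra! hlt
  have hev : ∀ᶠ x in nhdsWithin t (Ioi t), g x < f x :=
    Filter.Eventually.filter_mono
      (nhdsWithin_mono t fun x (hx : t < x) => mem_Ici.2 (ht.le.trans hx.le))
      ((hg t ht).eventually_lt (hf t ht) hlt)
  obtain ⟨u, hu, hsub⟩ := mem_nhdsGT_iff_exists_Ioo_subset.1 hev
  obtain ⟨x, hx, hxP⟩ := (Measure.dense_of_ae h).exists_mem_open isOpen_Ioo (nonempty_Ioo.2 hu)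
  have h1 : g x < f x := hsub hxP
  exact absurd (hx (lt_of_le_of_lt ht hxP.1)) (not_le.2 h1)

/-- Any quasistatic evolution is given explicitly by the running maximum of `w² / 2`, cut off from
below at `l0² κ l0`; this determines it once `x² κ x` is injective. -/
lemma griffith_formula
    (l0 : ℝ) (hl0 : 0 < l0) (w : ℝ → ℝ) (hw_cont : ContinuousOn w (Ici 0))
    (κ : ℝ → ℝ) (hκ_cont : ContinuousOn κ (Ici l0))
    (hmono : MonotoneOn (fun x => x ^ 2 * κ x) (Ici l0))
    (lam lam' : ℝ → ℝ)
    (hlam_ge : ∀ t ≥ (0:ℝ), l0 ≤ lam t)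
    (hlam_int : ∀ T > (0:ℝ), IntervalIntegrable lam' volume 0 T)
    (hlam_repr : ∀ t ≥ (0:ℝ), lam t = l0 + ∫ s in (0:ℝ)..t, lam' s)
    (hgriffith : ∀ᵐ t ∂volume, t ∈ Ioi (0:ℝ) →
      0 ≤ lam' t
      ∧ (1/2) * (w t) ^ 2 / (lam t) ^ 2 ≤ κ (lam t)
      ∧ ((1/2) * (w t) ^ 2 / (lam t) ^ 2 - κ (lam t)) * lam' t = 0)
    (t : ℝ) (ht : 0 ≤ t) :
    (lam t) ^ 2 * κ (lam t)
      = max ((1/2) * sSup ((fun s => (w s) ^ 2) '' Icc 0 t)) (l0 ^ 2 * κ l0) := by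
  have hlam_cont := continuousOn_of_repr hlam_int hlam_repr
  have hφ_cont : ContinuousOn (fun s => (lam s) ^ 2 * κ (lam s)) (Ici 0) :=
    (hlam_cont.pow 2).mul (hκ_cont.comp hlam_cont fun s hs => hlam_ge s hs)
  have hw2_cont : ContinuousOn (fun s => (w s) ^ 2) (Ici 0) := hw_cont.pow 2
  have hlam_pos : ∀ s ≥ (0:ℝ), 0 < lam s := fun s hs => hl0.trans_le (hlam_ge s hs)
  have hint : ∀ s ≥ (0:ℝ), IntervalIntegrable lam' volume 0 s := by
    intro s hs
    rcases hs.eq_or_lt with rfl | hs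
    · exact IntervalIntegrable.refl
    · exact hlam_int s hs
  have hincr : ∀ a ≥ (0:ℝ), ∀ b ≥ (0:ℝ), lam b - lam a = ∫ s in a..b, lam' s := by
    intro a ha b hb
    rw [hlam_repr a ha, hlam_repr b hb,
      ← intervalIntegral.integral_interval_sub_left (hint b hb) (hint a ha)]
    ring
  have hlam_mono : ∀ a ≥ (0:ℝ), ∀ b ≥ a, lam a ≤ lam b := by
    intro a ha b hab
    rw [← sub_nonneg, hincr a ha b (ha.le.trans hab)]
    rw [intervalIntegral.integral_of_le hab]
    refine setIntegral_nonneg_of_ae_restrict ?_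
    filter_upwards [ae_restrict_of_ae hgriffith, ae_restrict_mem measurableSet_Ioc] with x hx hxm
    exact (hx (lt_of_le_of_lt ha hxm.1)).1
  have hle : ∀ s ≥ (0:ℝ), (1/2) * (w s) ^ 2 ≤ (lam s) ^ 2 * κ (lam s) := by
    refine le_of_ae_le_Ici (hw2_cont.const_mul (1/2)) hφ_cont ?_
    filter_upwards [hgriffith] with x hx hx0
    have h := (hx hx0).2.1
    rw [div_le_iff₀ (pow_pos (hlam_pos x (le_of_lt hx0)) 2)] at h
    linarith
  have hlam0 : lam 0 = l0 := by simpa using hlam_repr 0 le_rfl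
  have hbdd : BddAbove ((fun s => (w s) ^ 2) '' Icc 0 t) :=
    (isCompact_Icc.image_of_continuousOn (hw2_cont.mono Icc_subset_Ici_self)).bddAbove
  set M := max ((1/2) * sSup ((fun s => (w s) ^ 2) '' Icc 0 t)) (l0 ^ 2 * κ l0) with hM
  have hwM : ∀ s ∈ Icc 0 t, (1/2) * (w s) ^ 2 ≤ M := fun s hs =>
    le_max_of_le_left (by
      have := le_csSup hbdd (mem_image_of_mem (fun s => (w s) ^ 2) hs)
      linarith)
  refine le_antisymm ?_ (max_le ?_ ?_)
  · by_contra! hlt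
    -- the last time `s₁` in `[0, t]` at which `φ (lam s₁) ≤ M`
    have hclosed : IsClosed (Icc 0 t ∩ (fun s => (lam s) ^ 2 * κ (lam s)) ⁻¹' Iic M) :=
      (hφ_cont.mono Icc_subset_Ici_self).preimage_isClosed_of_isClosed isClosed_Icc isClosed_Iic
    have hcomp := isCompact_Icc.of_isClosed_subset hclosed inter_subset_left
    obtain ⟨s₁, ⟨hs₁, hs₁M⟩, hmax⟩ := hcomp.exists_isGreatest
      ⟨0, ⟨le_rfl, ht⟩, by simp only [mem_preimage, hlam0, mem_Iic]; exact le_max_right _ _⟩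
    have hzero : ∫ s in s₁..t, lam' s = 0 := by
      refine intervalIntegral.integral_zero_ae ?_
      filter_upwards [hgriffith] with x hx hxm
      rw [uIoc_of_le hs₁.2] at hxm
      have hx0 : 0 < x := lt_of_le_of_lt hs₁.1 hxm.1
      have hxI : x ∈ Icc 0 t := ⟨hx0.le, hxm.2⟩
      have hgt : M < (lam x) ^ 2 * κ (lam x) := by
        by_contra! hc
        exact absurd (hmax ⟨hxI, hc⟩) (not_le.2 hxm.1)
      refine (mul_eq_zero.1 (hx hx0).2.2).resolve_left (ne_of_lt ?_)
      rw [sub_neg, div_lt_iff₀ (pow_pos (hlam_pos x hx0.le) 2)]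
      linarith [hwM x hxI]
    have heq : lam t = lam s₁ := sub_eq_zero.1 ((hincr s₁ hs₁.1 t ht).trans hzero)
    rw [heq] at hlt
    exact absurd hs₁M (not_le.2 hlt)
  · have : sSup ((fun s => (w s) ^ 2) '' Icc 0 t) ≤ 2 * ((lam t) ^ 2 * κ (lam t)) := by
      refine csSup_le ((nonempty_Icc.2 ht).image _) ?_
      rintro _ ⟨s, hs, rfl⟩
      have h1 := hle s hs.1
      have h2 := hmono (hlam_ge s hs.1) (hlam_ge t ht) (hlam_mono s hs.1 t hs.2)
      simp only at h2 ⊢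
      linarith
    linarith
  · exact hmono self_mem_Ici (hlam_ge t ht) (hlam_ge t ht)

/-- uniqueness part of Theorem 2.10 of the paper. Assume (K3). Any `lam`,
absolutely continuous on compact intervals with `lam 0 = ℓ₀` (encoded by an a.e. derivative
`lam'`, locally integrable, with `lam t = ℓ₀ + ∫₀ᵗ lam'`), satisfying the quasistatic
Griffith criterion a.e. on `(0,∞)`, fulfils
`φ_κ(lam t) = max{ ½ (w²)_*(t), φ_κ(ℓ₀) }` for every `t ≥ 0`; in particular the
quasistatic evolution is unique. -/
theorem stmt7
    (l0 : ℝ) (hl0 : 0 < l0)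
    (w wd : ℝ → ℝ)
    (hw_cont : ContinuousOn w (Ici 0))
    (hwd_int : ∀ t ≥ (0:ℝ), IntervalIntegrable wd volume 0 t)
    (hw_repr : ∀ t ≥ (0:ℝ), w t = w 0 + ∫ τ in (0:ℝ)..t, wd τ)
    (κ : ℝ → ℝ)
    (hκ_cont : ContinuousOn κ (Ici l0))
    (hκ_pos : ∀ x ≥ l0, 0 < κ x)
    (hK3a : StrictMonoOn (fun x => x ^ 2 * κ x) (Ici l0))
    (hK3b : ∀ᵐ x ∂volume, x ∈ Ioi l0 → 0 < deriv (fun y => y ^ 2 * κ y) x)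
    (lam lam' : ℝ → ℝ)
    (hlam_ge : ∀ t ≥ (0:ℝ), l0 ≤ lam t)
    (hlam_int : ∀ T > (0:ℝ), IntervalIntegrable lam' volume 0 T)
    (hlam_repr : ∀ t ≥ (0:ℝ), lam t = l0 + ∫ s in (0:ℝ)..t, lam' s)
    (hgriffith : ∀ᵐ t ∂volume, t ∈ Ioi (0:ℝ) →
      0 ≤ lam' t
      ∧ (1/2) * (w t) ^ 2 / (lam t) ^ 2 ≤ κ (lam t)
      ∧ ((1/2) * (w t) ^ 2 / (lam t) ^ 2 - κ (lam t)) * lam' t = 0) :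
    (∀ t ≥ (0:ℝ),
      (lam t) ^ 2 * κ (lam t)
        = max ((1/2) * sSup ((fun s => (w s) ^ 2) '' Icc 0 t)) (l0 ^ 2 * κ l0))
    ∧ ∀ lam2 lam2' : ℝ → ℝ,
        (∀ t ≥ (0:ℝ), l0 ≤ lam2 t) →
        (∀ T > (0:ℝ), IntervalIntegrable lam2' volume 0 T) →
        (∀ t ≥ (0:ℝ), lam2 t = l0 + ∫ s in (0:ℝ)..t, lam2' s) →
        (∀ᵐ t ∂volume, t ∈ Ioi (0:ℝ) →
          0 ≤ lam2' t
          ∧ (1/2) * (w t) ^ 2 / (lam2 t) ^ 2 ≤ κ (lam2 t)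
          ∧ ((1/2) * (w t) ^ 2 / (lam2 t) ^ 2 - κ (lam2 t)) * lam2' t = 0) →
        ∀ t ≥ (0:ℝ), lam2 t = lam t := by
  have hform := griffith_formula l0 hl0 w hw_cont κ hκ_cont hK3a.monotoneOn
  refine ⟨hform lam lam' hlam_ge hlam_int hlam_repr hgriffith, ?_⟩
  intro lam2 lam2' hge hint hrepr hgr t ht
  exact hK3a.injOn (hge t ht) (hlam_ge t ht)
    ((hform lam2 lam2' hge hint hrepr hgr t ht).trans
      (hform lam lam' hlam_ge hlam_int hlam_repr hgriffith t ht).symm)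
end

section
/- For every t ≥ 0 the following integration-by-parts identity holds: ½∫₀ᵗ( ε²u_t(τ,0)² + u_x(τ,0)² )dτ = −½∫₀ᵗ∫₀^{ℓ₀} ḣ(σ)( ε²u_t(τ,σ)² + u_x(τ,σ)² )dσdτ − ν∫₀ᵗ∫₀^{ℓ₀} h(σ)·ε·u_t(τ,σ)u_x(τ,σ)dσdτ − ε( ∫₀^{ℓ₀} h(σ)·ε·u_t(t,σ)u_x(t,σ)dσ − ∫₀^{ℓ₀} h(σ)·ε·u_t(0,σ)u_x(0,σ)dσ ), where h : [0,∞) → ℝ is any smooth function with h(0)=1, 0 ≤ h ≤ 1, and h(x)=0 for x ≥ ℓ₀. -/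
/-!
The identity is the divergence theorem on the rectangle `[0, t] × [0, l0]`, which lies in `closure Ω`
because `l0 ≤ ℓ`. For the vector field with time component `ε² h u_t u_x` and space component
`-(h / 2) (ε² u_t² + u_x²)`, the symmetry `u_tx = u_xt` and the wave equation give the divergence
`-(1/2) h' (ε² u_t² + u_x²) - ν ε h u_t u_x` in the interior (`div_identity`). On the sides of the
rectangle, `h 0 = 1` leaves the left-hand side of the identity, `h l0 = 0` removes the contribution
of `x = l0`, and the sides `τ = 0` and `τ = t` give the last two integrals. Since the whole
argument takes place in a fixed rectangle, the moving boundary never enters.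
-/

open MeasureTheory Set

/-- Partial derivative in time. -/
noncomputable def pt (u : ℝ → ℝ → ℝ) (t x : ℝ) : ℝ := deriv (fun s => u s x) t

/-- Partial derivative in space. -/
noncomputable def px (u : ℝ → ℝ → ℝ) (t x : ℝ) : ℝ := deriv (fun y => u t y) x

/-- Second partial derivative in time. -/
noncomputable def ptt (u : ℝ → ℝ → ℝ) (t x : ℝ) : ℝ := deriv (fun s => pt u s x) t

/-- Second partial derivative in space. -/
noncomputable def pxx (u : ℝ → ℝ → ℝ) (t x : ℝ) : ℝ := deriv (fun y => px u t y) x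

/-- Iterated integrals over a rectangle are linear on continuous functions. -/
lemma integral2_linear {a₁ b₁ a₂ b₂ : ℝ} (h₁ : a₁ ≤ b₁) (h₂ : a₂ ≤ b₂) {F G : ℝ × ℝ → ℝ} (c d : ℝ)
    (hF : ContinuousOn F (Icc a₁ b₁ ×ˢ Icc a₂ b₂))
    (hG : ContinuousOn G (Icc a₁ b₁ ×ˢ Icc a₂ b₂)) :
    (∫ x in a₁..b₁, ∫ y in a₂..b₂, (c * F (x, y) + d * G (x, y)))
      = c * (∫ x in a₁..b₁, ∫ y in a₂..b₂, F (x, y))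
        + d * (∫ x in a₁..b₁, ∫ y in a₂..b₂, G (x, y)) := by
  have hsub : Ioc a₁ b₁ ×ˢ Ioc a₂ b₂ ⊆ Icc a₁ b₁ ×ˢ Icc a₂ b₂ :=
    prod_mono Ioc_subset_Icc_self Ioc_subset_Icc_self
  have hI : ∀ {H : ℝ × ℝ → ℝ}, ContinuousOn H (Icc a₁ b₁ ×ˢ Icc a₂ b₂) →
      IntegrableOn H (Ioc a₁ b₁ ×ˢ Ioc a₂ b₂) volume := fun hH =>
    (hH.integrableOn_compact (isCompact_Icc.prod isCompact_Icc)).mono_set hsub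
  have key : ∀ {H : ℝ × ℝ → ℝ}, ContinuousOn H (Icc a₁ b₁ ×ˢ Icc a₂ b₂) →
      (∫ x in a₁..b₁, ∫ y in a₂..b₂, H (x, y)) = ∫ z in Ioc a₁ b₁ ×ˢ Ioc a₂ b₂, H z := by
    intro H hH
    simp only [intervalIntegral.integral_of_le h₁, intervalIntegral.integral_of_le h₂]
    exact (setIntegral_prod H (hI hH)).symm
  have hsum : ContinuousOn (fun z => c * F z + d * G z) (Icc a₁ b₁ ×ˢ Icc a₂ b₂) := by fun_prop
  rw [key hF, key hG, key (H := fun z => c * F z + d * G z) hsum,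
    integral_add ((hI hF).const_mul c) ((hI hG).const_mul d), integral_const_mul,
    integral_const_mul]

section Regularity

variable {u : ℝ → ℝ → ℝ} {U : Set (ℝ × ℝ)}

lemma pt_eq_fderiv {p : ℝ × ℝ} (hd : DifferentiableAt ℝ (fun p : ℝ × ℝ => u p.1 p.2) p) :
    pt u p.1 p.2 = fderiv ℝ (fun p : ℝ × ℝ => u p.1 p.2) p (1, 0) := by
  have h1 : HasDerivAt (fun s : ℝ => (s, p.2)) ((1 : ℝ), (0 : ℝ)) p.1 :=
    (hasDerivAt_id p.1).prodMk (hasDerivAt_const _ _)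
  exact (HasFDerivAt.comp_hasDerivAt (f := fun s : ℝ => (s, p.2)) p.1 hd.hasFDerivAt h1).deriv

lemma px_eq_fderiv {p : ℝ × ℝ} (hd : DifferentiableAt ℝ (fun p : ℝ × ℝ => u p.1 p.2) p) :
    px u p.1 p.2 = fderiv ℝ (fun p : ℝ × ℝ => u p.1 p.2) p (0, 1) := by
  have h1 : HasDerivAt (fun s : ℝ => (p.1, s)) ((0 : ℝ), (1 : ℝ)) p.2 :=
    (hasDerivAt_const _ _).prodMk (hasDerivAt_id p.2)
  exact (HasFDerivAt.comp_hasDerivAt (f := fun s : ℝ => (p.1, s)) p.2 hd.hasFDerivAt h1).deriv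

variable (hU : IsOpen U) (hu : ContDiffOn ℝ 2 (fun p : ℝ × ℝ => u p.1 p.2) U)
include hU hu

lemma differentiableAt_u {p : ℝ × ℝ} (hp : p ∈ U) :
    DifferentiableAt ℝ (fun p : ℝ × ℝ => u p.1 p.2) p :=
  (hu.contDiffAt (hU.mem_nhds hp)).differentiableAt (by norm_num)

lemma contDiffOn_pt : ContDiffOn ℝ 1 (fun p : ℝ × ℝ => pt u p.1 p.2) U :=
  ((hu.fderiv_of_isOpen hU (m := 1) (by norm_num)).clm_apply
    (contDiffOn_const (c := ((1 : ℝ), (0 : ℝ))))).congr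
    fun _ hp => pt_eq_fderiv (differentiableAt_u hU hu hp)

lemma contDiffOn_px : ContDiffOn ℝ 1 (fun p : ℝ × ℝ => px u p.1 p.2) U :=
  ((hu.fderiv_of_isOpen hU (m := 1) (by norm_num)).clm_apply
    (contDiffOn_const (c := ((0 : ℝ), (1 : ℝ))))).congr
    fun _ hp => px_eq_fderiv (differentiableAt_u hU hu hp)

/-- Equality of mixed partials, `u_tx = u_xt`. -/
lemma mixed_partials {p : ℝ × ℝ} (hp : p ∈ U) :
    fderiv ℝ (fun p : ℝ × ℝ => pt u p.1 p.2) p (0, 1)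
      = fderiv ℝ (fun p : ℝ × ℝ => px u p.1 p.2) p (1, 0) := by
  have hn := hU.mem_nhds hp
  have hc := hu.contDiffAt hn
  have hs : IsSymmSndFDerivAt ℝ (fun p : ℝ × ℝ => u p.1 p.2) p :=
    hc.isSymmSndFDerivAt (by simp)
  have hD : DifferentiableAt ℝ (fderiv ℝ (fun p : ℝ × ℝ => u p.1 p.2)) p :=
    ((hu.fderiv_of_isOpen hU (m := 1) (by norm_num)).contDiffAt hn).differentiableAt (by norm_num)
  have ht : (fun p : ℝ × ℝ => pt u p.1 p.2) =ᶠ[nhds p]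
      fun q => fderiv ℝ (fun p : ℝ × ℝ => u p.1 p.2) q (1, 0) := by
    filter_upwards [hn] with q hq using pt_eq_fderiv (differentiableAt_u hU hu hq)
  have hx : (fun p : ℝ × ℝ => px u p.1 p.2) =ᶠ[nhds p]
      fun q => fderiv ℝ (fun p : ℝ × ℝ => u p.1 p.2) q (0, 1) := by
    filter_upwards [hn] with q hq using px_eq_fderiv (differentiableAt_u hU hu hq)
  rw [ht.fderiv_eq, hx.fderiv_eq,
    (hD.hasFDerivAt.clm_apply (hasFDerivAt_const ((1 : ℝ), (0 : ℝ)) p)).fderiv,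
    (hD.hasFDerivAt.clm_apply (hasFDerivAt_const ((0 : ℝ), (1 : ℝ)) p)).fderiv]
  simpa using hs.eq (0, 1) (1, 0)

/-- The multiplier computation: wherever the damped wave equation holds, the field
`(ε² h u_t u_x, -(h / 2) (ε² u_t² + u_x²))` has a divergence without second derivatives of `u`. -/
lemma div_identity {h : ℝ → ℝ} (hh : Differentiable ℝ h) {ε ν : ℝ} {p : ℝ × ℝ} (hp : p ∈ U)
    (hpde : ε ^ 2 * ptt u p.1 p.2 - pxx u p.1 p.2 + ν * ε * pt u p.1 p.2 = 0) :
    fderiv ℝ (fun p : ℝ × ℝ => ε ^ 2 * (h p.2 * (pt u p.1 p.2 * px u p.1 p.2))) p (1, 0)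
      + fderiv ℝ (fun p : ℝ × ℝ =>
          -(1/2) * (h p.2 * (ε ^ 2 * (pt u p.1 p.2) ^ 2 + (px u p.1 p.2) ^ 2))) p (0, 1)
      = -(1/2) * (deriv h p.2 * (ε ^ 2 * (pt u p.1 p.2) ^ 2 + (px u p.1 p.2) ^ 2))
        + -ν * (h p.2 * (ε * pt u p.1 p.2 * px u p.1 p.2)) := by
  have hn := hU.mem_nhds hp
  have hA := (((contDiffOn_pt hU hu).contDiffAt hn).differentiableAt (by norm_num)).hasFDerivAt
  have hB := (((contDiffOn_px hU hu).contDiffAt hn).differentiableAt (by norm_num)).hasFDerivAt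
  have hH : HasFDerivAt (fun p : ℝ × ℝ => h p.2)
      (deriv h p.2 • ContinuousLinearMap.snd ℝ ℝ ℝ) p :=
    (hh p.2).hasDerivAt.comp_hasFDerivAt p hasFDerivAt_snd
  have h1 : HasDerivAt (fun s : ℝ => (s, p.2)) ((1 : ℝ), (0 : ℝ)) p.1 :=
    (hasDerivAt_id p.1).prodMk (hasDerivAt_const _ _)
  have h2 : HasDerivAt (fun s : ℝ => (p.1, s)) ((0 : ℝ), (1 : ℝ)) p.2 :=
    (hasDerivAt_const _ _).prodMk (hasDerivAt_id p.2)
  have htt : ptt u p.1 p.2 = fderiv ℝ (fun p : ℝ × ℝ => pt u p.1 p.2) p (1, 0) :=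
    (HasFDerivAt.comp_hasDerivAt (f := fun s : ℝ => (s, p.2)) p.1 hA h1).deriv
  have hxx : pxx u p.1 p.2 = fderiv ℝ (fun p : ℝ × ℝ => px u p.1 p.2) p (0, 1) :=
    (HasFDerivAt.comp_hasDerivAt (f := fun s : ℝ => (p.1, s)) p.2 hB h2).deriv
  have hmix := mixed_partials hU hu hp
  have hP := ((hH.mul (hA.mul hB)).const_mul (ε ^ 2)).fderiv
  have hQ := ((hH.mul (((hA.pow 2).const_mul (ε ^ 2)).add (hB.pow 2))).const_mul (-(1/2))).fderiv
  erw [hP, hQ]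
  rw [htt, hxx] at hpde
  simp
  rw [hmix]
  linear_combination (h p.2 * px u p.1 p.2) * hpde

end Regularity

/-- Lemma 3.1 of the paper. For a classical solution `u` of the damped
wave equation `ε²u_tt − u_xx + νεu_t = 0` on `Ω = {(t,x) : t > 0, 0 < x < ℓ(t)}`, with
`u(t, ℓ(t)) = 0`, and any smooth cut-off `h` with `h 0 = 1`, `0 ≤ h ≤ 1`, `h = 0` on
`[ℓ₀,∞)`, the integration-by-parts identity recovering the boundary terms holds. -/
theorem stmt8
    (l0 ε ν : ℝ) (hl0 : 0 < l0) (hε : 0 < ε) (hν : 0 ≤ ν)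
    (ℓ : ℝ → ℝ)
    (hlip : ∃ K : NNReal, LipschitzOnWith K ℓ (Ici 0))
    (hmono : MonotoneOn ℓ (Ici 0))
    (hℓ0 : ℓ 0 = l0) (hge : ∀ t ≥ (0:ℝ), l0 ≤ ℓ t)
    (hspeed : ∀ᵐ t ∂volume, t ∈ Ioi (0:ℝ) → ∀ d, HasDerivAt ℓ d t → d < 1/ε)
    (u : ℝ → ℝ → ℝ)
    (hreg : ∃ U : Set (ℝ × ℝ), IsOpen U ∧
      closure {p : ℝ × ℝ | 0 < p.1 ∧ 0 < p.2 ∧ p.2 < ℓ p.1} ⊆ U ∧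
      ContDiffOn ℝ 2 (fun p : ℝ × ℝ => u p.1 p.2) U)
    (hpde : ∀ t x : ℝ, 0 < t → 0 < x → x < ℓ t →
      ε ^ 2 * ptt u t x - pxx u t x + ν * ε * pt u t x = 0)
    (hbc : ∀ t ≥ (0:ℝ), u t (ℓ t) = 0) :
    ∀ t ≥ (0:ℝ), ∀ h : ℝ → ℝ, ContDiff ℝ (⊤ : ℕ∞) h → h 0 = 1 →
      (∀ x ≥ (0:ℝ), 0 ≤ h x ∧ h x ≤ 1) → (∀ x ≥ l0, h x = 0) →
      (1/2) * (∫ τ in (0:ℝ)..t, (ε ^ 2 * (pt u τ 0) ^ 2 + (px u τ 0) ^ 2))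
        = -(1/2) * (∫ τ in (0:ℝ)..t, ∫ σ in (0:ℝ)..l0,
              deriv h σ * (ε ^ 2 * (pt u τ σ) ^ 2 + (px u τ σ) ^ 2))
          - ν * (∫ τ in (0:ℝ)..t, ∫ σ in (0:ℝ)..l0,
              h σ * (ε * pt u τ σ * px u τ σ))
          - ε * ((∫ σ in (0:ℝ)..l0, h σ * (ε * pt u t σ * px u t σ))
                 - (∫ σ in (0:ℝ)..l0, h σ * (ε * pt u 0 σ * px u 0 σ))) := by
  obtain ⟨U, hU, hΩ, hu⟩ := hreg
  intro t ht h hh h0 _ hl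
  have hR : Icc 0 t ×ˢ Icc 0 l0 ⊆ U := by
    have hs : Ioi (0:ℝ) ×ˢ Ioo 0 l0 ⊆ {p : ℝ × ℝ | 0 < p.1 ∧ 0 < p.2 ∧ p.2 < ℓ p.1} :=
      fun p hp => ⟨hp.1, hp.2.1, hp.2.2.trans_le (hge _ (le_of_lt hp.1))⟩
    refine subset_trans ?_ ((closure_mono hs).trans hΩ)
    rw [closure_prod_eq, closure_Ioi, closure_Ioo hl0.ne]
    exact prod_mono Icc_subset_Ici_self subset_rfl
  have hh1 : ContDiff ℝ 1 h := hh.of_le (by exact_mod_cast le_top)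
  have hd : Differentiable ℝ h := hh1.differentiable (by norm_num)
  have hA := contDiffOn_pt hU hu
  have hB := contDiffOn_px hU hu
  have hH : ContDiffOn ℝ 1 (fun p : ℝ × ℝ => h p.2) U := (hh1.comp contDiff_snd).contDiffOn
  have hH' : Continuous (fun p : ℝ × ℝ => deriv h p.2) :=
    (hh1.continuous_deriv le_rfl).comp continuous_snd
  have hP : ContDiffOn ℝ 1
      (fun p : ℝ × ℝ => ε ^ 2 * (h p.2 * (pt u p.1 p.2 * px u p.1 p.2))) U :=
    contDiffOn_const.mul (hH.mul (hA.mul hB))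
  have hQ : ContDiffOn ℝ 1 (fun p : ℝ × ℝ =>
      -(1/2) * (h p.2 * (ε ^ 2 * (pt u p.1 p.2) ^ 2 + (px u p.1 p.2) ^ 2))) U :=
    contDiffOn_const.mul (hH.mul ((contDiffOn_const.mul (hA.pow 2)).add (hB.pow 2)))
  have hR' : uIcc 0 t ×ˢ uIcc 0 l0 ⊆ U := by rwa [uIcc_of_le ht, uIcc_of_le hl0.le]
  have hIoo : ∀ p ∈ (Ioo (min 0 t) (max 0 t) ×ˢ Ioo (min 0 l0) (max 0 l0)) \ (∅ : Set (ℝ × ℝ)),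
      p ∈ U := by
    rintro p ⟨⟨hp1, hp2⟩, -⟩
    exact hR' ⟨Ioo_subset_Icc_self hp1, Ioo_subset_Icc_self hp2⟩
  have hdiv := integral2_divergence_prod_of_hasFDerivAt_off_countable _ _ _ _ 0 0 t l0 ∅
    countable_empty (hP.continuousOn.mono hR') (hQ.continuousOn.mono hR')
    (fun p hp => ((hP.contDiffAt (hU.mem_nhds (hIoo p hp))).differentiableAt
      (by norm_num)).hasFDerivAt)
    (fun p hp => ((hQ.contDiffAt (hU.mem_nhds (hIoo p hp))).differentiableAt
      (by norm_num)).hasFDerivAt)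
    (ContinuousOn.integrableOn_compact (isCompact_uIcc.prod isCompact_uIcc)
      ((((hP.continuousOn_fderiv_of_isOpen hU le_rfl).clm_apply continuousOn_const).add
        ((hQ.continuousOn_fderiv_of_isOpen hU le_rfl).clm_apply continuousOn_const)).mono hR'))
  have hA' := hA.continuousOn.mono hR
  have hB' := hB.continuousOn.mono hR
  have hE : ContinuousOn (fun p : ℝ × ℝ =>
      deriv h p.2 * (ε ^ 2 * (pt u p.1 p.2) ^ 2 + (px u p.1 p.2) ^ 2))
      (Icc 0 t ×ˢ Icc 0 l0) :=
    hH'.continuousOn.mul ((continuousOn_const.mul (hA'.pow 2)).add (hB'.pow 2))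
  have hM : ContinuousOn (fun p : ℝ × ℝ => h p.2 * (ε * pt u p.1 p.2 * px u p.1 p.2))
      (Icc 0 t ×ˢ Icc 0 l0) :=
    (hH.continuousOn.mono hR).mul ((continuousOn_const.mul hA').mul hB')
  -- The equation is only available in the open rectangle, which has full measure.
  rw [intervalIntegral.integral_congr_Ioo_of_le ht fun τ hτ =>
      intervalIntegral.integral_congr_Ioo_of_le hl0.le fun σ hσ => div_identity hU hu hd (p := (τ, σ))
      (hR ⟨Ioo_subset_Icc_self hτ, Ioo_subset_Icc_self hσ⟩)
      (hpde τ σ hτ.1 hσ.1 (hσ.2.trans_le (hge τ hτ.1.le))),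
    integral2_linear ht hl0.le _ _ hE hM] at hdiv
  have hflux : ∀ s, (∫ σ in (0:ℝ)..l0, ε ^ 2 * (h σ * (pt u s σ * px u s σ)))
      = ε * ∫ σ in (0:ℝ)..l0, h σ * (ε * pt u s σ * px u s σ) := by
    intro s
    rw [← intervalIntegral.integral_const_mul]
    congr 1
    ext σ
    ring
  simp only [hflux, h0, hl l0 le_rfl, zero_mul, mul_zero, one_mul,
    intervalIntegral.integral_zero, intervalIntegral.integral_const_mul] at hdiv
  linarith
end

section
/- For every T > 0 and M > 0 there exists a constant C > 0 with the following property: for every ε ∈ (0,1/2), every Lipschitz nondecreasing ℓ : [0,∞) → [ℓ₀,∞) with ℓ(0)=ℓ₀ and ℓ' < 1/ε a.e., every positive measurable κ on [ℓ₀,∞), and every classical solution u of the damped wave equation on Ω with u(t,0)=w(t), u(t,ℓ(t))=0, which satisfies the energy-dissipation balance E(t) + A(t) + ∫_{ℓ₀}^{ℓ(t)} κ(σ)dσ + W(t) = E(0) for all t ≥ 0, and whose data satisfy E(0) ≤ M and ∫₀ᵀ ẇ(τ)²dτ ≤ M (where ẇ(τ) = u_t(τ,0)), one has E(t) + A(t)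 + ∫_{ℓ₀}^{ℓ(t)} κ(σ)dσ ≤ C for every t ∈ [0,T]. The constant C depends only on T, M, ν and ℓ₀, not on ε. -/
/-!
The energy-dissipation balance leaves only the work `W` to be controlled. By Young's inequality
`-W(t) ≤ ½ ∫₀ᵗ ẇ² + ½ ∫₀ᵗ u_x(τ, 0)² dτ`, so the point is a bound for the boundary trace of `u_x`.

Multiply the equation by `(1 - x / ℓ₀) u_x` and integrate over `[0, t] × [0, ℓ₀]`, a region that
stays away from the moving front (`multiplier_estimate`). With
`e(t) = ½ ∫₀^{ℓ₀} (ε² u_t² + u_x²)`, the divergence theorem gives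
`½ ∫₀ᵗ u_x(τ, 0)² dτ ≤ ε (e(t) + e(0)) + (1 / ℓ₀ + ν) ∫₀ᵗ e`.
Since `ε < 1/2` and `e ≤ E`, the term `ε e(t)` is absorbed in the left-hand side of the balance, so
`e(t) ≤ E(t) + A(t) + ∫ κ ≤ 4 M + 2 (1 / ℓ₀ + ν) ∫₀ᵗ e`, and Grönwall's inequality
(`gronwall_integral`) bounds `∫₀ᵗ e` independently of `ε`. Using the strip energy `e` rather than
`E` means that no differentiation over the moving domain is needed.
-/

open MeasureTheory Set

/-- Kinetic plus potential energy `E(t)`. -/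
noncomputable def En (ε : ℝ) (ℓ : ℝ → ℝ) (u : ℝ → ℝ → ℝ) (t : ℝ) : ℝ :=
  (1/2) * ∫ σ in (0:ℝ)..ℓ t, (ε ^ 2 * (pt u t σ) ^ 2 + (px u t σ) ^ 2)

/-- Energy dissipated by friction `A(t)`. -/
noncomputable def Afr (ε ν : ℝ) (ℓ : ℝ → ℝ) (u : ℝ → ℝ → ℝ) (t : ℝ) : ℝ :=
  ν * ∫ τ in (0:ℝ)..t, ∫ σ in (0:ℝ)..ℓ τ, ε * (pt u τ σ) ^ 2

/-- Work of the external loading `W(t)` (with `ẇ(τ) = u_t(τ,0)`). -/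
noncomputable def Wk (u : ℝ → ℝ → ℝ) (t : ℝ) : ℝ :=
  ∫ τ in (0:ℝ)..t, pt u τ 0 * px u τ 0

/-! ### Parametric integrals and the integral Grönwall inequality -/

/-- Integrating one variable of a function continuous on a rectangle gives a continuous function of
the other; the function is first extended to the plane by clamping both variables. -/
lemma continuousOn_integral_rect {F : ℝ × ℝ → ℝ} {t l : ℝ} (ht : 0 ≤ t) (hl : 0 ≤ l)
    (hF : ContinuousOn F (Icc 0 t ×ˢ Icc 0 l)) :
    ContinuousOn (fun s => ∫ y in (0:ℝ)..l, F (s, y)) (Icc 0 t) := by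
  have hc : Continuous (fun p : ℝ × ℝ => F (max 0 (min t p.1), max 0 (min l p.2))) := by
    apply hF.comp_continuous (f := fun p : ℝ × ℝ => (max 0 (min t p.1), max 0 (min l p.2)))
    · fun_prop
    · intro p
      simp [ht, hl]
  have h2 : Continuous (fun s => ∫ y in (0:ℝ)..l, F (max 0 (min t s), max 0 (min l y))) :=
    intervalIntegral.continuous_parametric_intervalIntegral_of_continuous' hc 0 l
  refine h2.continuousOn.congr fun s hs => ?_
  refine intervalIntegral.integral_congr fun y hy => ?_
  rw [uIcc_of_le hl] at hy
  simp [hs.1, hs.2, hy.1, hy.2]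

/-- Grönwall's inequality in integral form. -/
lemma gronwall_integral {e : ℝ → ℝ} {T a c : ℝ} (hT : 0 ≤ T)
    (he : ContinuousOn e (Icc 0 T)) (h0 : ∀ t ∈ Icc 0 T, 0 ≤ e t)
    (hb : ∀ t ∈ Icc 0 T, e t ≤ c * (∫ s in (0:ℝ)..t, e s) + a) :
    ∀ t ∈ Icc 0 T, ∫ s in (0:ℝ)..t, e s ≤ gronwallBound 0 c a t := by
  have hc : Continuous (fun s => e (max 0 (min T s))) := by
    apply he.comp_continuous (f := fun s : ℝ => max 0 (min T s))
    · fun_prop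
    · intro p
      simp [hT]
  have hcl : ∀ t ∈ Icc 0 T, ∫ s in (0:ℝ)..t, e s = ∫ s in (0:ℝ)..t, e (max 0 (min T s)) := by
    intro t ht
    refine intervalIntegral.integral_congr fun y hy => ?_
    rw [uIcc_of_le ht.1] at hy
    simp [hy.1, hy.2.trans ht.2]
  have hd : ∀ t, HasDerivAt (fun t => ∫ s in (0:ℝ)..t, e (max 0 (min T s)))
      (e (max 0 (min T t))) t := fun t => (hc.integral_hasStrictDerivAt 0 t).hasDerivAt
  intro t ht
  have hI : ∀ t ∈ Icc 0 T, 0 ≤ ∫ s in (0:ℝ)..t, e s := fun t ht =>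
    intervalIntegral.integral_nonneg ht.1 fun y hy => h0 y ⟨hy.1, hy.2.trans ht.2⟩
  have := norm_le_gronwallBound_of_norm_deriv_right_le (a := 0) (b := T) (δ := 0) (K := c) (ε := a)
    (f := fun t => ∫ s in (0:ℝ)..t, e (max 0 (min T s))) (f' := fun t => e (max 0 (min T t)))
    (fun x _ => (hd x).continuousAt.continuousWithinAt)
    (fun x _ => (hd x).hasDerivWithinAt) (by simp) (by
      intro x hx
      have hx' : x ∈ Icc 0 T := ⟨hx.1, hx.2.le⟩
      have hm : max 0 (min T x) = x := by simp [hx.1, hx.2.le]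
      rw [← hcl x hx', hm, Real.norm_of_nonneg (h0 x hx'), Real.norm_of_nonneg (hI x hx')]
      exact hb x hx') t ht
  rw [← hcl t ht, Real.norm_of_nonneg (hI t ht), sub_zero] at this
  exact this

/-! ### The boundary trace of the space derivative -/

/-- The multiplier estimate. `P` and `Q` play the roles of `u_t` and `u_x`. The equation is
multiplied by `(1 - x / l) Q` and integrated over `[0, t] × [0, l]`: the weight vanishes at `x = l`
and equals one at `x = 0`, so the only lateral boundary term is the flux through `x = 0`. -/
lemma multiplier_estimate {P Q : ℝ × ℝ → ℝ} {P' Q' : ℝ × ℝ → ℝ × ℝ →L[ℝ] ℝ} {t l ε ν : ℝ}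
    (ht : 0 ≤ t) (hl : 0 < l) (hε : 0 < ε) (hν : 0 ≤ ν)
    (hP : ContinuousOn P (Icc 0 t ×ˢ Icc 0 l)) (hQ : ContinuousOn Q (Icc 0 t ×ˢ Icc 0 l))
    (hP' : ∀ p ∈ Ioo 0 t ×ˢ Ioo 0 l, HasFDerivAt P (P' p) p)
    (hQ' : ∀ p ∈ Ioo 0 t ×ˢ Ioo 0 l, HasFDerivAt Q (Q' p) p)
    (hsymm : ∀ p ∈ Ioo 0 t ×ˢ Ioo 0 l, P' p (0, 1) = Q' p (1, 0))
    (hpde : ∀ p ∈ Ioo 0 t ×ˢ Ioo 0 l, ε ^ 2 * P' p (1, 0) - Q' p (0, 1) + ν * ε * P p = 0) :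
    (1/2) * ∫ s in (0:ℝ)..t, Q (s, 0) ^ 2 ≤
      ε * ((1/2) * ∫ y in (0:ℝ)..l, (ε ^ 2 * P (t, y) ^ 2 + Q (t, y) ^ 2)) +
      ε * ((1/2) * ∫ y in (0:ℝ)..l, (ε ^ 2 * P (0, y) ^ 2 + Q (0, y) ^ 2)) +
      (1 / l + ν) * ∫ s in (0:ℝ)..t,
        (1/2) * ∫ y in (0:ℝ)..l, (ε ^ 2 * P (s, y) ^ 2 + Q (s, y) ^ 2) := by
  classical
  set R : Set (ℝ × ℝ) := Icc 0 t ×ˢ Icc 0 l with hR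
  set I : Set (ℝ × ℝ) := Ioo 0 t ×ˢ Ioo 0 l with hI
  set D : ℝ × ℝ → ℝ := fun p =>
    (1 / (2 * l)) * (Q p ^ 2 + ε ^ 2 * P p ^ 2) - ν * ε * (1 - p.2 / l) * (P p * Q p) with hD
  set f : ℝ × ℝ → ℝ := fun p => (ε ^ 2 * (1 - p.2 / l)) * (P p * Q p) with hf
  set g : ℝ × ℝ → ℝ := fun p => (-(1/2) * (1 - p.2 / l)) * (Q p * Q p + ε ^ 2 * (P p * P p))
    with hg
  have hcl : ∀ p : ℝ × ℝ, HasFDerivAt (fun p : ℝ × ℝ => 1 - p.2 / l)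
      (-(l⁻¹ • ContinuousLinearMap.snd ℝ ℝ ℝ)) p := by
    intro p
    have h := ((hasFDerivAt_snd (𝕜 := ℝ) (p := p)).const_mul l⁻¹).const_sub 1
    refine h.congr_of_eventuallyEq (Filter.Eventually.of_forall fun q => ?_)
    simp [div_eq_inv_mul]
  have hfd : ∀ p ∈ I, ∃ A B : ℝ × ℝ →L[ℝ] ℝ, HasFDerivAt f A p ∧ HasFDerivAt g B p ∧
      A (1, 0) + B (0, 1) = D p := by
    intro p hp
    refine ⟨_, _, ((hcl p).const_mul (ε ^ 2)).mul ((hP' p hp).mul (hQ' p hp)),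
      ((hcl p).const_mul (-(1/2))).mul (((hQ' p hp).mul (hQ' p hp)).add
        (((hP' p hp).mul (hP' p hp)).const_mul (ε ^ 2))), ?_⟩
    have h1 := hsymm p hp
    have h2 := hpde p hp
    have h3 : Q' p (0, 1) = ε ^ 2 * P' p (1, 0) + ν * ε * P p := by linarith
    simp [hD, h1, h3]
    field_simp
    ring
  choose! A B hA hB hAB using hfd
  -- Off the open rectangle the derivative fields are irrelevant; they are chosen there so that
  -- the divergence equals `D` everywhere.
  have key := integral2_divergence_prod_of_hasFDerivAt_off_countable f g
    (fun p => if p ∈ I then A p else D p • ContinuousLinearMap.fst ℝ ℝ ℝ)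
    (fun p => if p ∈ I then B p else 0) 0 0 t l ∅ countable_empty
  have hdiv : ∀ p, (if p ∈ I then A p else D p • ContinuousLinearMap.fst ℝ ℝ ℝ) (1, 0) +
      (if p ∈ I then B p else 0) (0, 1) = D p := by
    intro p
    by_cases hp : p ∈ I
    · simpa [hp] using hAB p hp
    · simp [hp]
  have hDc : ContinuousOn D R := by
    have : ContinuousOn (fun p : ℝ × ℝ => 1 - p.2 / l) R := by fun_prop
    fun_prop
  have hfc : ContinuousOn f R := by fun_prop
  have hgc : ContinuousOn g R := by fun_prop
  simp only [hdiv, uIcc_of_le ht, uIcc_of_le hl.le, min_eq_left ht, min_eq_left hl.le,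
    max_eq_right ht, max_eq_right hl.le, sdiff_empty] at key
  have key := key hfc hgc
    (fun p hp => by
      have hp : p ∈ I := hp
      simpa [hp] using hA p hp)
    (fun p hp => by
      have hp : p ∈ I := hp
      simpa [hp] using hB p hp)
    (hDc.integrableOn_compact (isCompact_Icc.prod isCompact_Icc))
  -- The energy density.
  set d : ℝ × ℝ → ℝ := fun p => ε ^ 2 * P p ^ 2 + Q p ^ 2 with hd
  have hdc : ContinuousOn d R := by fun_prop
  have hrow : ∀ {F : ℝ × ℝ → ℝ}, ContinuousOn F R → ∀ s ∈ Icc 0 t,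
      IntervalIntegrable (fun y => F (s, y)) volume 0 l := by
    intro F hF s hs
    apply ContinuousOn.intervalIntegrable
    rw [uIcc_of_le hl.le]
    exact hF.comp (by fun_prop) fun y hy => ⟨hs, hy⟩
  have hcol : ∀ {F : ℝ × ℝ → ℝ}, ContinuousOn F R →
      IntervalIntegrable (fun s => F (s, 0)) volume 0 t := by
    intro F hF
    apply ContinuousOn.intervalIntegrable
    rw [uIcc_of_le ht]
    exact hF.comp (by fun_prop) fun y hy => ⟨hy, le_rfl, hl.le⟩
  have hweight : ∀ y ∈ Icc 0 l, 0 ≤ 1 - y / l ∧ 1 - y / l ≤ 1 := by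
    intro y hy
    have h1 : y / l ≤ 1 := (div_le_one hl).2 hy.2
    have h2 : 0 ≤ y / l := div_nonneg hy.1 hl.le
    constructor <;> linarith
  -- Young's inequality for the mixed product, with the weight absorbed.
  have hprod : ∀ s, ∀ y ∈ Icc 0 l,
      |ε * (1 - y / l) * (P (s, y) * Q (s, y))| ≤ (1/2) * d (s, y) := by
    intro s y hy
    obtain ⟨w0, w1⟩ := hweight y hy
    have hy' : |ε * P (s, y) * Q (s, y)| ≤ (1/2) * d (s, y) := by
      rw [abs_le]
      simp only [hd]
      constructor <;> nlinarith [sq_nonneg (ε * P (s, y) + Q (s, y)),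
        sq_nonneg (ε * P (s, y) - Q (s, y))]
    calc |ε * (1 - y / l) * (P (s, y) * Q (s, y))|
        = (1 - y / l) * |ε * P (s, y) * Q (s, y)| := by
          rw [← abs_of_nonneg w0, ← abs_mul, abs_of_nonneg w0]; congr 1; ring
      _ ≤ 1 * |ε * P (s, y) * Q (s, y)| := by gcongr
      _ ≤ _ := by rw [one_mul]; exact hy'
  have hflux : ∀ s ∈ Icc 0 t, |∫ y in (0:ℝ)..l, f (s, y)| ≤
      ε * ((1/2) * ∫ y in (0:ℝ)..l, d (s, y)) := by
    intro s hs
    rw [← intervalIntegral.integral_const_mul, ← intervalIntegral.integral_const_mul,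
      ← Real.norm_eq_abs]
    refine intervalIntegral.norm_integral_le_of_norm_le hl.le ?_
      (((hrow hdc s hs).const_mul _).const_mul _)
    refine Filter.Eventually.of_forall fun y hy => ?_
    have h := hprod s y (Ioc_subset_Icc_self hy)
    rw [Real.norm_eq_abs]
    calc |f (s, y)| = ε * |ε * (1 - y / l) * (P (s, y) * Q (s, y))| := by
          conv_rhs => rw [← abs_of_pos hε, ← abs_mul, abs_of_pos hε]
          simp only [hf]; congr 1; ring
      _ ≤ _ := by gcongr
  have hbulk : (∫ s in (0:ℝ)..t, ∫ y in (0:ℝ)..l, D (s, y)) ≤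
      (1 / l + ν) * ∫ s in (0:ℝ)..t, (1/2) * ∫ y in (0:ℝ)..l, d (s, y) := by
    rw [← intervalIntegral.integral_const_mul]
    have hint : ∀ {F : ℝ × ℝ → ℝ}, ContinuousOn F R →
        IntervalIntegrable (fun s => ∫ y in (0:ℝ)..l, F (s, y)) volume 0 t := by
      intro F hF
      apply ContinuousOn.intervalIntegrable
      rw [uIcc_of_le ht]
      exact continuousOn_integral_rect ht hl.le hF
    refine intervalIntegral.integral_mono_on ht (hint hDc)
      (((hint hdc).const_mul _).const_mul _) fun s hs => ?_
    rw [← intervalIntegral.integral_const_mul, ← intervalIntegral.integral_const_mul]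
    refine intervalIntegral.integral_mono_on hl.le (hrow hDc s hs)
      (((hrow hdc s hs).const_mul _).const_mul _) fun y hy => ?_
    have h := mul_le_mul_of_nonneg_left (neg_le_of_abs_le (hprod s y hy)) hν
    have e1 : D (s, y) = (1 / l) * ((1/2) * d (s, y)) -
        ν * (ε * (1 - y / l) * (P (s, y) * Q (s, y))) := by
      simp only [hD, hd]; field_simp; ring
    rw [e1]
    linarith
  have hg1 : (∫ s in (0:ℝ)..t, g (s, l)) = 0 := by
    simp [hg, div_self hl.ne']
  have hg0 : (1/2) * (∫ s in (0:ℝ)..t, Q (s, 0) ^ 2) ≤ -∫ s in (0:ℝ)..t, g (s, 0) := by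
    rw [← intervalIntegral.integral_const_mul, ← intervalIntegral.integral_neg]
    refine intervalIntegral.integral_mono_on ht ((hcol (F := fun p => Q p ^ 2)
      (by fun_prop)).const_mul _) (hcol hgc).neg fun s _ => ?_
    simp only [hg]
    have : 0 ≤ ε ^ 2 * (P (s, 0) * P (s, 0)) := mul_nonneg (sq_nonneg _) (mul_self_nonneg _)
    rw [zero_div]
    nlinarith
  have hft := neg_le_of_abs_le (hflux t ⟨ht, le_rfl⟩)
  have hf0 := le_of_abs_le (hflux 0 ⟨le_rfl, ht⟩)
  rw [hg1] at key
  simp only [hd] at hft hf0 hbulk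
  linarith

/-! ### Regularity up to the boundary -/

/-- The closed region `t ≥ 0`, `0 ≤ x ≤ ℓ t` lies in the closure of the open space-time domain:
a point of it is the limit of the points obtained by advancing `t` and moving `x` towards
the midpoint of `[0, ℓ t]`. -/
lemma mem_closure_domain {l0 : ℝ} {ℓ : ℝ → ℝ} (hl0 : 0 < l0) (hmono : MonotoneOn ℓ (Ici 0))
    (hℓ : ∀ t ≥ (0:ℝ), l0 ≤ ℓ t) {t x : ℝ} (ht : 0 ≤ t) (hx : x ∈ Icc 0 (ℓ t)) :
    (t, x) ∈ closure {p : ℝ × ℝ | 0 < p.1 ∧ 0 < p.2 ∧ p.2 < ℓ p.1} := by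
  have hc : Filter.Tendsto (fun r : ℝ => (t + r, (1 - r) * x + r * (ℓ t / 2)))
      (nhdsWithin 0 (Ioo 0 1)) (nhds (t, x)) := by
    have : Continuous (fun r : ℝ => (t + r, (1 - r) * x + r * (ℓ t / 2))) := by fun_prop
    have h := (this.tendsto 0).mono_left (nhdsWithin_le_nhds (s := Ioo (0:ℝ) 1))
    simpa using h
  have : (nhdsWithin (0:ℝ) (Ioo 0 1)).NeBot := by
    rw [← mem_closure_iff_nhdsWithin_neBot, closure_Ioo (by norm_num)]
    simp
  refine mem_closure_of_tendsto hc ?_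
  filter_upwards [self_mem_nhdsWithin] with r hr
  obtain ⟨r0, r1⟩ := hr
  have hpos : 0 < ℓ t := hl0.trans_le (hℓ t ht)
  have hle : ℓ t ≤ ℓ (t + r) := hmono ht (by simp; linarith) (by linarith)
  refine ⟨show 0 < t + r by linarith, ?_, ?_⟩
  · have := mul_nonneg (sub_nonneg.2 r1.le) hx.1
    have := mul_pos r0 hpos
    change 0 < (1 - r) * x + r * (ℓ t / 2)
    linarith
  · have := mul_le_mul_of_nonneg_left hx.2 (sub_nonneg.2 r1.le)
    have := mul_pos r0 hpos
    change (1 - r) * x + r * (ℓ t / 2) < ℓ (t + r)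
    linarith

/-- For `u` of class `C²` on an open set, the first partial derivatives are of class `C¹`, the second
ones are components of their Fréchet derivatives, and the mixed ones agree. -/
lemma partials_of_contDiffOn {u : ℝ → ℝ → ℝ} {U : Set (ℝ × ℝ)} (hU : IsOpen U)
    (hu : ContDiffOn ℝ 2 (fun p : ℝ × ℝ => u p.1 p.2) U) :
    ContDiffOn ℝ 1 (fun p : ℝ × ℝ => pt u p.1 p.2) U ∧
    ContDiffOn ℝ 1 (fun p : ℝ × ℝ => px u p.1 p.2) U ∧
    ∀ p ∈ U, fderiv ℝ (fun p : ℝ × ℝ => pt u p.1 p.2) p (1, 0) = ptt u p.1 p.2 ∧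
      fderiv ℝ (fun p : ℝ × ℝ => px u p.1 p.2) p (0, 1) = pxx u p.1 p.2 ∧
      fderiv ℝ (fun p : ℝ × ℝ => pt u p.1 p.2) p (0, 1) =
        fderiv ℝ (fun p : ℝ × ℝ => px u p.1 p.2) p (1, 0) := by
  -- Derivative along a coordinate line as a component of the Fréchet derivative.
  have dt : ∀ {w : ℝ → ℝ → ℝ} {p : ℝ × ℝ}, DifferentiableAt ℝ (fun p : ℝ × ℝ => w p.1 p.2) p →
      deriv (fun s => w s p.2) p.1 = fderiv ℝ (fun p : ℝ × ℝ => w p.1 p.2) p (1, 0) := by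
    intro w p hw
    have h1 : HasDerivAt (fun s : ℝ => (s, p.2)) ((1:ℝ), (0:ℝ)) p.1 :=
      (hasDerivAt_id p.1).prodMk (hasDerivAt_const p.1 p.2)
    exact (hw.hasFDerivAt.comp_hasDerivAt (f := fun s : ℝ => (s, p.2)) p.1 h1).deriv
  have dx : ∀ {w : ℝ → ℝ → ℝ} {p : ℝ × ℝ}, DifferentiableAt ℝ (fun p : ℝ × ℝ => w p.1 p.2) p →
      deriv (fun y => w p.1 y) p.2 = fderiv ℝ (fun p : ℝ × ℝ => w p.1 p.2) p (0, 1) := by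
    intro w p hw
    have h1 : HasDerivAt (fun s : ℝ => (p.1, s)) ((0:ℝ), (1:ℝ)) p.2 :=
      (hasDerivAt_const p.2 p.1).prodMk (hasDerivAt_id p.2)
    exact (hw.hasFDerivAt.comp_hasDerivAt (f := fun s : ℝ => (p.1, s)) p.2 h1).deriv
  set v : ℝ × ℝ → ℝ := fun p => u p.1 p.2 with hv
  have hvd : ∀ p ∈ U, DifferentiableAt ℝ v p := fun p hp =>
    (hu.contDiffAt (hU.mem_nhds hp)).differentiableAt (by norm_num)
  have hfd : ContDiffOn ℝ 1 (fderiv ℝ v) U := hu.fderiv_of_isOpen hU (by norm_num)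
  have hpt : ∀ p ∈ U, pt u p.1 p.2 = fderiv ℝ v p (1, 0) := fun p hp => dt (hvd p hp)
  have hpx : ∀ p ∈ U, px u p.1 p.2 = fderiv ℝ v p (0, 1) := fun p hp => dx (hvd p hp)
  have c1 : ContDiffOn ℝ 1 (fun p : ℝ × ℝ => pt u p.1 p.2) U :=
    (hfd.clm_apply contDiffOn_const).congr hpt
  have c2 : ContDiffOn ℝ 1 (fun p : ℝ × ℝ => px u p.1 p.2) U :=
    (hfd.clm_apply contDiffOn_const).congr hpx
  refine ⟨c1, c2, fun p hp => ⟨?_, ?_, ?_⟩⟩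
  · exact (dt ((c1.contDiffAt (hU.mem_nhds hp)).differentiableAt (by norm_num))).symm
  · exact (dx ((c2.contDiffAt (hU.mem_nhds hp)).differentiableAt (by norm_num))).symm
  · have hdd : DifferentiableAt ℝ (fderiv ℝ v) p :=
      (hfd.contDiffAt (hU.mem_nhds hp)).differentiableAt (by norm_num)
    have hs : IsSymmSndFDerivAt ℝ v p :=
      (hu.contDiffAt (hU.mem_nhds hp)).isSymmSndFDerivAt (by simp)
    have hcomp : ∀ a b : ℝ × ℝ,
        fderiv ℝ (fun q => fderiv ℝ v q a) p b = fderiv ℝ (fderiv ℝ v) p b a := by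
      intro a b
      rw [fderiv_clm_apply hdd (differentiableAt_const a)]
      simp
    have e1 : (fun p : ℝ × ℝ => pt u p.1 p.2) =ᶠ[nhds p] fun q => fderiv ℝ v q (1, 0) := by
      filter_upwards [hU.mem_nhds hp] with q hq using hpt q hq
    have e2 : (fun p : ℝ × ℝ => px u p.1 p.2) =ᶠ[nhds p] fun q => fderiv ℝ v q (0, 1) := by
      filter_upwards [hU.mem_nhds hp] with q hq using hpx q hq
    rw [e1.fderiv_eq, e2.fderiv_eq, hcomp, hcomp]
    exact hs _ _

/-! ### The uniform energy bound -/

/-- Proposition 3.2 of the paper. Uniform energy bound: for every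
`T, M > 0` there is `C > 0`, depending only on `T, M, ν, ℓ₀` and not on `ε`, such that for
every `ε ∈ (0,1/2)` and every solution of the damped wave equation satisfying the
energy-dissipation balance with `E(0) ≤ M` and `∫₀ᵀ ẇ² ≤ M`, one has
`E(t) + A(t) + ∫_{ℓ₀}^{ℓ(t)} κ ≤ C` on `[0,T]`. -/
theorem stmt9
    (l0 ν : ℝ) (hl0 : 0 < l0) (hν : 0 ≤ ν) :
    ∀ T > (0:ℝ), ∀ M > (0:ℝ), ∃ C > (0:ℝ),
      ∀ ε : ℝ, 0 < ε → ε < 1/2 →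
      ∀ ℓ : ℝ → ℝ,
        (∃ K : NNReal, LipschitzOnWith K ℓ (Ici 0)) →
        MonotoneOn ℓ (Ici 0) → ℓ 0 = l0 → (∀ t ≥ (0:ℝ), l0 ≤ ℓ t) →
        (∀ᵐ t ∂volume, t ∈ Ioi (0:ℝ) → ∀ d, HasDerivAt ℓ d t → d < 1/ε) →
      ∀ κ : ℝ → ℝ, Measurable κ → (∀ x ≥ l0, 0 < κ x) →
      ∀ u : ℝ → ℝ → ℝ,
        (∃ U : Set (ℝ × ℝ), IsOpen U ∧
          closure {p : ℝ × ℝ | 0 < p.1 ∧ 0 < p.2 ∧ p.2 < ℓ p.1} ⊆ U ∧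
          ContDiffOn ℝ 2 (fun p : ℝ × ℝ => u p.1 p.2) U) →
        (∀ t x : ℝ, 0 < t → 0 < x → x < ℓ t →
          ε ^ 2 * ptt u t x - pxx u t x + ν * ε * pt u t x = 0) →
        (∀ t ≥ (0:ℝ), u t (ℓ t) = 0) →
        (∀ t ≥ (0:ℝ), En ε ℓ u t + Afr ε ν ℓ u t + (∫ σ in l0..ℓ t, κ σ) + Wk u t
          = En ε ℓ u 0) →
        En ε ℓ u 0 ≤ M →
        (∫ τ in (0:ℝ)..T, (pt u τ 0) ^ 2) ≤ M →
        ∀ t ∈ Icc (0:ℝ) T,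
          En ε ℓ u t + Afr ε ν ℓ u t + (∫ σ in l0..ℓ t, κ σ) ≤ C := by
  intro T hT M hM
  set c : ℝ := 1 / l0 + ν with hc
  have hcpos : 0 < c := by positivity
  have hGmono := gronwallBound_mono (δ := 0) (K := 2 * c) (ε := 4 * M) le_rfl (by positivity)
    (by positivity)
  have hG0 : 0 ≤ gronwallBound 0 (2 * c) (4 * M) T := by
    have := hGmono hT.le
    rwa [gronwallBound_x0] at this
  refine ⟨2 * c * gronwallBound 0 (2 * c) (4 * M) T + 4 * M, by positivity, ?_⟩
  rintro ε hε hε2 ℓ - hmono h0 hℓ - κ - hκ u ⟨U, hU, hUcl, hu⟩ hpde - hbal hE0 hw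
  obtain ⟨hP, hQ, hder⟩ := partials_of_contDiffOn hU hu
  have hsub : ∀ {t x : ℝ}, 0 ≤ t → x ∈ Icc 0 (ℓ t) → (t, x) ∈ U := fun ht hx =>
    hUcl (mem_closure_domain hl0 hmono hℓ ht hx)
  have hrect : Icc 0 T ×ˢ Icc 0 l0 ⊆ U := fun p hp =>
    hsub hp.1.1 ⟨hp.2.1, hp.2.2.trans (hℓ _ hp.1.1)⟩
  have hPc := hP.continuousOn
  have hQc := hQ.continuousOn
  -- The energy stored in the fixed strip `[0, l0]`, which the front never enters.
  set e : ℝ → ℝ := fun t => (1/2) * ∫ y in (0:ℝ)..l0, (ε ^ 2 * pt u t y ^ 2 + px u t y ^ 2)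
    with he
  have hdc : ContinuousOn (fun p : ℝ × ℝ => ε ^ 2 * pt u p.1 p.2 ^ 2 + px u p.1 p.2 ^ 2) U := by
    fun_prop
  have hec : ContinuousOn e (Icc 0 T) :=
    (continuousOn_integral_rect hT.le hl0.le (hdc.mono hrect)).const_mul (1/2)
  have he0 : ∀ t, 0 ≤ e t := fun t =>
    mul_nonneg (by norm_num) (intervalIntegral.integral_nonneg hl0.le fun y _ => by positivity)
  have heE : ∀ t ≥ (0:ℝ), e t ≤ En ε ℓ u t := by
    intro t ht
    refine mul_le_mul_of_nonneg_left ?_ (by norm_num)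
    refine intervalIntegral.integral_mono_interval le_rfl hl0.le (hℓ t ht)
      (Filter.Eventually.of_forall fun y => by simp only [Pi.zero_apply]; positivity) ?_
    apply ContinuousOn.intervalIntegrable
    rw [uIcc_of_le (hl0.le.trans (hℓ t ht))]
    exact hdc.comp (f := fun y => (t, y)) (by fun_prop) fun y hy => hsub ht hy
  have hA : ∀ t ≥ (0:ℝ), 0 ≤ Afr ε ν ℓ u t := fun t ht =>
    mul_nonneg hν (intervalIntegral.integral_nonneg ht fun s hs =>
      intervalIntegral.integral_nonneg (hl0.le.trans (hℓ s hs.1)) fun y _ => by positivity)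
  have hK : ∀ t ≥ (0:ℝ), 0 ≤ ∫ σ in l0..ℓ t, κ σ := fun t ht =>
    intervalIntegral.integral_nonneg (hℓ t ht) fun y hy => (hκ y hy.1).le
  have hmain : ∀ t ∈ Icc 0 T, En ε ℓ u t + Afr ε ν ℓ u t + (∫ σ in l0..ℓ t, κ σ) ≤
      2 * c * (∫ s in (0:ℝ)..t, e s) + 4 * M := by
    intro t ht
    have hline : ∀ {F : ℝ × ℝ → ℝ}, ContinuousOn F U → ∀ s ∈ Icc 0 T,
        IntervalIntegrable (fun τ => F (τ, 0)) volume 0 s := by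
      intro F hF s hs
      apply ContinuousOn.intervalIntegrable
      rw [uIcc_of_le hs.1]
      exact hF.comp (f := fun τ => (τ, (0:ℝ))) (by fun_prop) fun τ hτ =>
        hsub hτ.1 ⟨le_rfl, hl0.le.trans (hℓ τ hτ.1)⟩
    have hmul := multiplier_estimate (P := fun p => pt u p.1 p.2) (Q := fun p => px u p.1 p.2)
      (P' := fderiv ℝ fun p : ℝ × ℝ => pt u p.1 p.2)
      (Q' := fderiv ℝ fun p : ℝ × ℝ => px u p.1 p.2) (t := t) (l := l0) ht.1 hl0 hε hν
      (hPc.mono fun p hp => hrect ⟨⟨hp.1.1, hp.1.2.trans ht.2⟩, hp.2⟩)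
      (hQc.mono fun p hp => hrect ⟨⟨hp.1.1, hp.1.2.trans ht.2⟩, hp.2⟩)
    have hin : ∀ p ∈ Ioo 0 t ×ˢ Ioo 0 l0, p ∈ U := fun p hp =>
      hrect ⟨⟨hp.1.1.le, hp.1.2.le.trans ht.2⟩, ⟨hp.2.1.le, hp.2.2.le⟩⟩
    have hmul := hmul
      (fun p hp => ((hP.contDiffAt (hU.mem_nhds (hin p hp))).differentiableAt
        (by norm_num)).hasFDerivAt)
      (fun p hp => ((hQ.contDiffAt (hU.mem_nhds (hin p hp))).differentiableAt
        (by norm_num)).hasFDerivAt)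
      (fun p hp => (hder p (hin p hp)).2.2)
      (fun p hp => by
        rw [(hder p (hin p hp)).1, (hder p (hin p hp)).2.1]
        exact hpde p.1 p.2 hp.1.1 hp.2.1 (hp.2.2.trans_le (hℓ _ hp.1.1.le)))
    -- Young's inequality for the work of the loading.
    have hW : -Wk u t ≤ (1/2) * (∫ τ in (0:ℝ)..t, pt u τ 0 ^ 2) +
        (1/2) * ∫ τ in (0:ℝ)..t, px u τ 0 ^ 2 := by
      have i1 := hline (F := fun p => pt u p.1 p.2 ^ 2) (by fun_prop) t ht
      have i2 := hline (F := fun p => px u p.1 p.2 ^ 2) (by fun_prop) t ht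
      have i3 := hline (F := fun p => pt u p.1 p.2 * px u p.1 p.2) (by fun_prop) t ht
      rw [Wk, ← intervalIntegral.integral_neg, ← intervalIntegral.integral_const_mul,
        ← intervalIntegral.integral_const_mul,
        ← intervalIntegral.integral_add (i1.const_mul _) (i2.const_mul _)]
      refine intervalIntegral.integral_mono_on ht.1 i3.neg
        ((i1.const_mul _).add (i2.const_mul _)) fun τ _ => ?_
      simp only
      nlinarith [sq_nonneg (pt u τ 0 + px u τ 0)]
    have hwt : (∫ τ in (0:ℝ)..t, pt u τ 0 ^ 2) ≤ M := by
      refine le_trans (intervalIntegral.integral_mono_interval le_rfl ht.1 ht.2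
        (Filter.Eventually.of_forall fun y => by simp only [Pi.zero_apply]; positivity)
        (hline (F := fun p => pt u p.1 p.2 ^ 2) (by fun_prop) T ⟨hT.le, le_rfl⟩)) hw
    have hb := hbal t ht.1
    have het : ε * e t ≤ (1/2) * e t := mul_le_mul_of_nonneg_right hε2.le (he0 t)
    have he00 : ε * e 0 ≤ (1/2) * e 0 := mul_le_mul_of_nonneg_right hε2.le (he0 0)
    have hEt := heE t ht.1
    have hE00 := heE 0 le_rfl
    have hAt := hA t ht.1
    have hKt := hK t ht.1
    change _ ≤ ε * e t + ε * e 0 + c * ∫ s in (0:ℝ)..t, e s at hmul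
    linarith
  intro t ht
  have hgr := gronwall_integral (a := 4 * M) (c := 2 * c) hT.le hec (fun t _ => he0 t)
    (fun t ht => by
      have h1 := hmain t ht
      have h2 := heE t ht.1
      have h3 := hA t ht.1
      have h4 := hK t ht.1
      linarith) t ht
  have hgT := hgr.trans (hGmono ht.2)
  have := mul_le_mul_of_nonneg_left hgT (by positivity : 0 ≤ 2 * c)
  linarith [hmain t ht]
end
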